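/- arXiv:2512.12329 — 2 statements merged into one kernel-verified Lean document; each statement's English description precedes it below -/
import Mathlib

section
/- For every integer ℓ ≥ 3 and every finite graph G with a weighting w such that G does not contain the ℓ-wheel W_ℓ as an induced minor, there exists a w-balanced separator of G that either is contained in the closed neighbourhood of a set of at most ℓ vertices, or has size at most (ℓ-1)². -/
open SimpleGraph

variable {V : Type}

/-- `u` and `v` are connected by a walk in `G` avoiding `S`
(i.e., they lie in the same component of `G - S`). -/
def ReachOutside (G : SimpleGraph V) (S : Set V) (u v : V) : Prop :=
  ∃ p : G.Walk u v, ∀ x ∈ p.support, x ∉ S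

/-- Total weight of a vertex set. -/
noncomputable def setWeight [Finite V] (w : V → ℝ) (A : Set V) : ℝ :=
  ∑ v ∈ (Set.toFinite A).toFinset, w v

/-- `S` is a `w`-balanced separator of `G`: every component of `G - S`
has weight at most half the total weight. -/
def IsBalancedSep [Finite V] (G : SimpleGraph V) (w : V → ℝ) (S : Set V) : Prop :=
  ∀ v, v ∉ S → setWeight w {u | ReachOutside G S u v} ≤ setWeight w (Set.univ : Set V) / 2

/-- Closed neighbourhood `N[A]` of a vertex set. -/
def closedNbhd (G : SimpleGraph V) (A : Set V) : Set V :=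
  A ∪ {x | ∃ a ∈ A, G.Adj a x}

/-- `S` separates `A` from `B` in `G`: every walk from `A` to `B` meets `S`. -/
def Separates (G : SimpleGraph V) (S A B : Set V) : Prop :=
  ∀ a ∈ A, ∀ b ∈ B, ∀ p : G.Walk a b, ∃ x ∈ p.support, x ∈ S

/-- `C` is (the vertex set of) an induced cycle of `G`: the induced subgraph is
connected and every vertex of `C` has exactly two neighbours in `C`. -/
def IsInducedCycle (G : SimpleGraph V) (C : Set V) : Prop :=
  (G.induce C).Connected ∧ ∀ x ∈ C, (G.neighborSet x ∩ C).ncard = 2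

/-- `H` is an induced minor of `G`. -/
def IsInducedMinor {W : Type} (H : SimpleGraph W) (G : SimpleGraph V) : Prop :=
  ∃ X : W → Set V,
    (∀ a, (G.induce (X a)).Connected) ∧
    (Pairwise fun a b => Disjoint (X a) (X b)) ∧
    ∀ a b, a ≠ b → ((∃ u ∈ X a, ∃ v ∈ X b, G.Adj u v) ↔ H.Adj a b)

/-- `H` is a minor of `G`. -/
def IsMinor {W : Type} (H : SimpleGraph W) (G : SimpleGraph V) : Prop :=
  ∃ X : W → Set V,
    (∀ a, (G.induce (X a)).Connected) ∧
    (Pairwise fun a b => Disjoint (X a) (X b)) ∧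
    ∀ a b, H.Adj a b → ∃ u ∈ X a, ∃ v ∈ X b, G.Adj u v

/-- The `ℓ`-wheel: a cycle of length `ℓ` plus a universal vertex (`none`). -/
def wheel (ℓ : ℕ) : SimpleGraph (Option (ZMod ℓ)) :=
  SimpleGraph.fromRel fun a b =>
    a = none ∨ b = none ∨ ∃ i : ZMod ℓ, a = some i ∧ b = some (i + 1)

/-- The `ℓ`-fan: a path on `ℓ` vertices plus a universal vertex (`none`). -/
def fan (ℓ : ℕ) : SimpleGraph (Option (Fin ℓ)) :=
  SimpleGraph.fromRel fun a b =>
    a = none ∨ b = none ∨ ∃ i j : Fin ℓ, a = some i ∧ b = some j ∧ (j : ℕ) = (i : ℕ) + 1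


/-- `B` is connected, expressed through crossing edges. -/
def Cn (G : SimpleGraph V) (B : Set V) : Prop :=
  ∀ P : Set V, (∃ u ∈ B, u ∈ P) → (∃ v ∈ B, v ∉ P) →
    ∃ u ∈ B, ∃ v ∈ B, u ∈ P ∧ v ∉ P ∧ G.Adj u v

/-- `x` has a neighbour in `B`. -/
def Tch (G : SimpleGraph V) (B : Set V) (x : V) : Prop := ∃ u ∈ B, G.Adj u x

/-- `B` has more than half of the weight. -/
def Big [Finite V] (w : V → ℝ) (B : Set V) : Prop :=
  setWeight w (Set.univ : Set V) / 2 < setWeight w B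

/-- `B` is a component of `G - S` of more than half of the weight. -/
structure Hub [Finite V] (G : SimpleGraph V) (w : V → ℝ) (S B : Set V) : Prop where
  conn : Cn G B
  disj : ∀ x ∈ B, x ∉ S
  closed : ∀ u ∈ B, ∀ v, v ∉ S → G.Adj u v → v ∈ B
  big : Big w B

/-- the component of `v` in `G - S` -/
def Cmp (G : SimpleGraph V) (S : Set V) (v : V) : Set V := {u | ReachOutside G S u v}

lemma cmp_self (G : SimpleGraph V) {S : Set V} {v : V} (hv : v ∉ S) : v ∈ Cmp G S v :=
  ⟨Walk.nil, by simpa using hv⟩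

lemma cmp_disj (G : SimpleGraph V) {S : Set V} {v : V} : ∀ x ∈ Cmp G S v, x ∉ S := by
  rintro x ⟨p, hp⟩
  exact hp x p.start_mem_support

lemma cmp_closed (G : SimpleGraph V) {S : Set V} {v : V} :
    ∀ u ∈ Cmp G S v, ∀ x, x ∉ S → G.Adj u x → x ∈ Cmp G S v := by
  rintro u ⟨p, hp⟩ x hx h
  refine ⟨Walk.cons h.symm p, ?_⟩
  intro y hy
  rw [Walk.support_cons, List.mem_cons] at hy
  rcases hy with rfl | hy
  · exact hx
  · exact hp y hy

/-- if a set is closed inside `G - S`, walks avoiding `S` stay on one side. -/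
lemma walk_stay (G : SimpleGraph V) {S P : Set V}
    (hP : ∀ u ∈ P, ∀ x, x ∉ S → G.Adj u x → x ∈ P) {u v : V} (p : G.Walk u v)
    (hp : ∀ x ∈ p.support, x ∉ S) (hu : u ∈ P) : v ∈ P := by
  induction p with
  | nil => exact hu
  | cons h q ih =>
    apply ih
    · intro x hx; exact hp x (by rw [Walk.support_cons]; exact List.mem_cons_of_mem _ hx)
    · refine hP _ hu _ ?_ h
      apply hp; rw [Walk.support_cons]; exact List.mem_cons_of_mem _ q.start_mem_support

lemma cmp_conn (G : SimpleGraph V) {S : Set V} {v : V} : Cn G (Cmp G S v) := by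
  intro P ⟨a, ha, haP⟩ ⟨b, hb, hbP⟩
  by_contra hcon
  push Not at hcon
  obtain ⟨p, hp⟩ := ha
  obtain ⟨q, hq⟩ := hb
  have key : b ∈ P ∩ Cmp G S v := by
    refine walk_stay G (S := S) (P := P ∩ Cmp G S v) ?_ (p.append q.reverse) ?_ ⟨haP, ⟨p, hp⟩⟩
    · rintro u ⟨huP, huC⟩ x hx h
      have hxC := cmp_closed G u huC x hx h
      refine ⟨?_, hxC⟩
      by_contra hxP
      exact hcon u huC x hxC huP hxP h
    · intro x hx
      rw [Walk.mem_support_append_iff] at hx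
      rcases hx with hx | hx
      · exact hp x hx
      · rw [Walk.support_reverse, List.mem_reverse] at hx
        exact hq x hx
  exact hbP key.1

lemma cn_sub {G : SimpleGraph V} {S B Q : Set V} (hB : Cn G B) (hd : ∀ x ∈ B, x ∉ S)
    (hQ : ∀ u ∈ Q, ∀ x, x ∉ S → G.Adj u x → x ∈ Q) {x : V} (hx : x ∈ B) (hxQ : x ∈ Q) :
    B ⊆ Q := by
  intro y hy
  by_contra hyQ
  obtain ⟨u, hu, v, hv, huQ, hvQ, h⟩ := hB Q ⟨x, hx, hxQ⟩ ⟨y, hy, hyQ⟩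
  exact hvQ (hQ u huQ v (hd v hv) h)

lemma cn_insert {G : SimpleGraph V} {B : Set V} (hB : Cn G B) {v : V}
    (h : v ∈ B ∨ Tch G B v) : Cn G (insert v B) := by
  rcases h with h | ⟨b, hb, hbv⟩
  · rwa [Set.insert_eq_of_mem h]
  intro P ⟨x, hx, hxP⟩ ⟨y, hy, hyP⟩
  by_cases hsplit : (∃ u ∈ B, u ∈ P) ∧ (∃ u ∈ B, u ∉ P)
  · obtain ⟨u, hu, z, hz, h1, h2, h3⟩ := hB P hsplit.1 hsplit.2
    exact ⟨u, Or.inr hu, z, Or.inr hz, h1, h2, h3⟩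
  · rw [not_and_or] at hsplit
    rcases hsplit with h1 | h1
    · push Not at h1
      have hxv : x = v := by
        rcases hx with hx | hx
        · exact hx
        · exact absurd hxP (h1 x hx)
      subst hxv
      exact ⟨x, hx, b, Or.inr hb, hxP, h1 b hb, hbv.symm⟩
    · push Not at h1
      have hyv : y = v := by
        rcases hy with hy | hy
        · exact hy
        · exact absurd (h1 y hy) hyP
      subst hyv
      exact ⟨b, Or.inr hb, y, hy, h1 b hb, hyP, hbv⟩

section weights
variable [Finite V] {G : SimpleGraph V} {w : V → ℝ}

lemma sw_mono (hw0 : ∀ v, 0 ≤ w v) {A B : Set V} (h : A ⊆ B) : setWeight w A ≤ setWeight w B := by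
  unfold setWeight
  apply Finset.sum_le_sum_of_subset_of_nonneg
  · intro x; simp; exact fun hx => h hx
  · intros; exact hw0 _

lemma sw_nonneg (hw0 : ∀ v, 0 ≤ w v) (A : Set V) : 0 ≤ setWeight w A :=
  Finset.sum_nonneg fun _ _ => hw0 _

lemma big_inter (hw0 : ∀ v, 0 ≤ w v) {A B : Set V} (hA : Big w A) (hB : Big w B) :
    ∃ x ∈ A, x ∈ B := by
  classical
  by_contra hcon
  push Not at hcon
  have h1 : setWeight w A + setWeight w B ≤ setWeight w Set.univ := by
    unfold setWeight
    rw [← Finset.sum_union]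
    · apply Finset.sum_le_sum_of_subset_of_nonneg
      · intro x; simp
      · intros; exact hw0 _
    · rw [Finset.disjoint_left]; intro x; simpa using hcon x
  unfold Big at *
  linarith

lemma big_mono (hw0 : ∀ v, 0 ≤ w v) {A B : Set V} (hA : Big w A) (h : A ⊆ B) : Big w B :=
  lt_of_lt_of_le hA (sw_mono hw0 h)

lemma big_ne (hw0 : ∀ v, 0 ≤ w v) {A : Set V} (hA : Big w A) : ∃ x, x ∈ A := by
  obtain ⟨x, hx, _⟩ := big_inter hw0 hA hA
  exact ⟨x, hx⟩

lemma hub_of_not_bal {S : Set V} (h : ¬ IsBalancedSep G w S) : ∃ B, Hub G w S B := by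
  unfold IsBalancedSep at h
  push Not at h
  obtain ⟨v, hv, hb⟩ := h
  exact ⟨Cmp G S v, cmp_conn G, cmp_disj G, cmp_closed G, hb⟩

lemma bal_not_big (hw0 : ∀ v, 0 ≤ w v) {C B : Set V} (hC : IsBalancedSep G w C) (hB : Cn G B)
    (hbig : Big w B) (hd : ∀ x ∈ B, x ∉ C) : False := by
  obtain ⟨x, hx⟩ := big_ne hw0 hbig
  have h1 : B ⊆ Cmp G C x := cn_sub hB hd (cmp_closed G) hx (cmp_self G (hd x hx))
  have := hC x (hd x hx)
  have h2 := sw_mono hw0 h1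
  unfold Big at hbig
  unfold Cmp at h2
  linarith

/-- a heavy (balanced) set meets every big connected set -/
lemma bal_meets (hw0 : ∀ v, 0 ≤ w v) {C B : Set V} (hC : IsBalancedSep G w C) (hB : Cn G B)
    (hbig : Big w B) : ∃ x ∈ B, x ∈ C := by
  by_contra h
  push Not at h
  exact bal_not_big hw0 hC hB hbig h

lemma hub_sub (hw0 : ∀ v, 0 ≤ w v) {S B B' : Set V} (hB : Hub G w S B) (h' : Cn G B')
    (hd : ∀ x ∈ B', x ∉ S) (hbig : Big w B') : B' ⊆ B := by
  obtain ⟨x, hx, hx'⟩ := big_inter hw0 hbig hB.big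
  exact cn_sub h' hd hB.closed hx hx'

lemma not_bal_of_big (hw0 : ∀ v, 0 ≤ w v) {C B : Set V} (hB : Cn G B)
    (hbig : Big w B) (hd : ∀ x ∈ B, x ∉ C) : ¬ IsBalancedSep G w C :=
  fun h => bal_not_big hw0 h hB hbig hd

end weights

/-- `f` traverses periodically an induced cycle of length `n`. -/
def IsCyc (G : SimpleGraph V) (f : ℕ → V) (n : ℕ) : Prop :=
  3 ≤ n ∧ (∀ i, f (i + n) = f i) ∧
    ∀ i j, i < j → j < i + n → f i ≠ f j ∧ (G.Adj (f i) (f j) ↔ j = i + 1 ∨ j + 1 = i + n)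

/-- `p 0, ..., p m` is an induced path. -/
def IndPath (G : SimpleGraph V) (p : ℕ → V) (m : ℕ) : Prop :=
  ∀ i j, i < j → j ≤ m → p i ≠ p j ∧ (G.Adj (p i) (p j) ↔ j = i + 1)

lemma isCyc_of_window {G : SimpleGraph V} {h : ℕ → V} {n : ℕ} (hn : 3 ≤ n)
    (H : ∀ i j, i < j → j < n → h i ≠ h j ∧ (G.Adj (h i) (h j) ↔ j = i + 1 ∨ (i = 0 ∧ j + 1 = n))) :
    IsCyc G (fun i => h (i % n)) n := by
  refine ⟨hn, fun i => by simp, ?_⟩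
  intro i j hij hj
  have hn0 : 0 < n := by omega
  have ha : i % n < n := Nat.mod_lt _ hn0
  have hi := Nat.mod_add_div i n
  set a := i % n with hadef
  set q := i / n
  by_cases hlt : a + (j - i) < n
  · have hjm : j % n = a + (j - i) := by
      have : j = a + (j - i) + n * q := by omega
      rw [this, Nat.add_mul_mod_self_left, Nat.mod_eq_of_lt]
      · omega
      · omega
    have := H a (a + (j - i)) (by omega) hlt
    simp only [hjm]
    refine ⟨this.1, this.2.trans ?_⟩
    omega
  · have hjm : j % n = a + (j - i) - n := by
      have : j = (a + (j - i) - n) + n * (q + 1) := by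
        rw [Nat.mul_add]; omega
      rw [this, Nat.add_mul_mod_self_left, Nat.mod_eq_of_lt]
      · rw [← this]
      · omega
    have := H (a + (j - i) - n) a (by omega) ha
    simp only [hjm]
    refine ⟨this.1.symm, ?_⟩
    rw [G.adj_comm, this.2]
    omega

section cyc
variable {G : SimpleGraph V} {f : ℕ → V} {n : ℕ}

lemma IsCyc.shift (h : IsCyc G f n) (k : ℕ) : IsCyc G (fun i => f (i + k)) n := by
  refine ⟨h.1, fun i => ?_, fun i j hij hj => ?_⟩
  · have := h.2.1 (i + k)
    simp only
    rw [← this]; congr 1; omega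
  · have := h.2.2 (i + k) (j + k) (by omega) (by omega)
    refine ⟨this.1, this.2.trans ?_⟩
    omega

lemma IsCyc.per_mul (h : IsCyc G f n) (i q : ℕ) : f (i + n * q) = f i := by
  induction q with
  | zero => simp
  | succ q ih => rw [Nat.mul_succ, ← add_assoc, h.2.1, ih]

lemma IsCyc.per_mod (h : IsCyc G f n) (i k : ℕ) : f (i + k) = f (i + k % n) := by
  conv_lhs => rw [← Nat.mod_add_div k n, ← add_assoc]
  exact h.per_mul _ _

/-- every vertex of the cycle has an index in any window -/
lemma IsCyc.window (h : IsCyc G f n) {x : V} (hx : x ∈ Set.range f) (k : ℕ) :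
    ∃ i, k ≤ i ∧ i < k + n ∧ f i = x := by
  obtain ⟨j, rfl⟩ := hx
  have hn : 0 < n := by have := h.1; omega
  have h1 := Nat.mod_lt k hn
  have h2 := Nat.mod_lt j hn
  have h3 := Nat.mod_add_div k n
  have h4 := Nat.mod_add_div j n
  by_cases hc : k % n ≤ j % n
  · refine ⟨j % n + n * (k / n), by omega, by omega, ?_⟩
    rw [h.per_mul]
    have := h.per_mul (j % n) (j / n)
    rw [h4] at this; exact this.symm
  · refine ⟨j % n + n * (k / n + 1), by rw [Nat.mul_add]; omega, by rw [Nat.mul_add]; omega, ?_⟩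
    rw [h.per_mul]
    have := h.per_mul (j % n) (j / n)
    rw [h4] at this; exact this.symm

lemma IsCyc.adj_succ (h : IsCyc G f n) (i : ℕ) : G.Adj (f i) (f (i + 1)) := by
  have h3 := h.1
  exact (h.2.2 i (i + 1) (by omega) (by omega)).2.2 (Or.inl rfl)

lemma IsCyc.ne (h : IsCyc G f n) {i j : ℕ} (hij : i < j) (hj : j < i + n) : f i ≠ f j :=
  (h.2.2 i j hij hj).1

lemma IsCyc.range_shift (h : IsCyc G f n) (k : ℕ) :
    Set.range (fun i => f (i + k)) = Set.range f := by
  ext x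
  constructor
  · rintro ⟨i, rfl⟩; exact ⟨_, rfl⟩
  · intro hx
    obtain ⟨i, h1, h2, h3⟩ := h.window hx k
    exact ⟨i - k, by simp only; rw [← h3]; congr 1; omega⟩

lemma IsCyc.indPath (h : IsCyc G f n) {m : ℕ} (hm : m + 2 ≤ n) : IndPath G f m := by
  intro i j hij hj
  have := h.2.2 i j hij (by omega)
  refine ⟨this.1, this.2.trans ?_⟩
  omega

/-- an interval of a walk lies in a closed set as soon as it meets it -/
lemma interval_sub {S Q : Set V} {p q : ℕ} (hadj : ∀ i, G.Adj (f i) (f (i + 1)))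
    (hQ : ∀ u ∈ Q, ∀ x, x ∉ S → G.Adj u x → x ∈ Q)
    (hS : ∀ i, p < i → i < q → f i ∉ S) {t : ℕ} (ht : p < t) (ht' : t < q) (htQ : f t ∈ Q) :
    ∀ i, p < i → i < q → f i ∈ Q := by
  have up : ∀ d, t + d < q → f (t + d) ∈ Q := by
    intro d
    induction d with
    | zero => intro _; exact htQ
    | succ d ih =>
      intro hd
      exact hQ _ (ih (by omega)) _ (hS _ (by omega) (by omega)) (hadj (t + d))
  have down : ∀ d, p + d < t → f (t - d) ∈ Q := by
    intro d
    induction d with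
    | zero => intro _; exact htQ
    | succ d ih =>
      intro hd
      refine hQ _ (ih (by omega)) _ (hS _ (by omega) (by omega)) ?_
      have := hadj (t - (d + 1))
      rw [show t - (d + 1) + 1 = t - d by omega] at this
      exact this.symm
  intro i h1 h2
  rcases le_total t i with h | h
  · have := up (i - t) (by omega)
    rwa [show t + (i - t) = i by omega] at this
  · have := down (t - i) (by omega)
    rwa [show t - (t - i) = i by omega] at this

end cyc

lemma exists_seq {G : SimpleGraph V} {K : Set V} (hK : Cn G K) {d d' : V}
    (h : Tch G K d) (h' : Tch G K d') :
    ∃ n, ∃ r : ℕ → V, r 0 = d ∧ r n = d' ∧ (∀ i < n, G.Adj (r i) (r (i + 1))) ∧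
      ∀ i, 0 < i → i < n → r i ∈ K := by
  obtain ⟨u, hu, hud⟩ := h
  obtain ⟨u', hu', hud'⟩ := h'
  let P : Set V := {v | ∃ n, ∃ r : ℕ → V, r 0 = d ∧ r n = v ∧ (∀ i < n, G.Adj (r i) (r (i + 1))) ∧
      ∀ i, 0 < i → i ≤ n → r i ∈ K}
  have app : ∀ v ∈ P, ∀ x, G.Adj v x → ∃ n, ∃ r : ℕ → V, r 0 = d ∧ r (n + 1) = x ∧
      (∀ i < n + 1, G.Adj (r i) (r (i + 1))) ∧ ∀ i, 0 < i → i < n + 1 → r i ∈ K := by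
    rintro v ⟨n, r, h0, hn, hadj, hin⟩ x hx
    refine ⟨n, fun i => if i ≤ n then r i else x, by simp [h0], by simp, ?_, ?_⟩
    · intro i hi
      by_cases hin' : i < n
      · simp only [show i ≤ n by omega, show i + 1 ≤ n by omega, if_true]
        exact hadj i hin'
      · have : i = n := by omega
        subst this
        simp [hn, hx]
    · intro i h1 h2
      simp only [show i ≤ n by omega, if_true]
      exact hin i h1 (by omega)
  have hdP : d ∈ P := ⟨0, fun _ => d, rfl, rfl, by simp, by intro i h1 h2; omega⟩
  have app2 : ∀ v ∈ P, ∀ x ∈ K, G.Adj v x → x ∈ P := by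
    intro v hv x hx hvx
    obtain ⟨n, r, h0, hn, hadj, hin⟩ := app v hv x hvx
    refine ⟨n + 1, r, h0, hn, hadj, ?_⟩
    intro i h1 h2
    rcases Nat.lt_or_ge i (n + 1) with h | h
    · exact hin i h1 h
    · have : i = n + 1 := by omega
      rw [this, hn]; exact hx
  have huP : u ∈ P := app2 d hdP u hu hud.symm
  have hu'P : u' ∈ P := by
    by_contra hcon
    obtain ⟨a, ha, b, hb, haP, hbP, hab⟩ := hK P ⟨u, hu, huP⟩ ⟨u', hu', hcon⟩
    exact hbP (app2 a haP b hb hab)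
  obtain ⟨n, r, h0, hn, hadj, hin⟩ := app u' hu'P d' hud'
  exact ⟨n + 1, r, h0, hn, hadj, hin⟩

lemma exists_indPath {G : SimpleGraph V} {K : Set V} (hK : Cn G K) {d d' : V}
    (h : Tch G K d) (h' : Tch G K d') (hdK' : d' ∉ K) (hne : d ≠ d')
    (hna : ¬ G.Adj d d') :
    ∃ L, ∃ r : ℕ → V, 2 ≤ L ∧ IndPath G r L ∧ r 0 = d ∧ r L = d' ∧
      ∀ i, 0 < i → i < L → r i ∈ K := by
  classical
  have hex := exists_seq hK h h'
  obtain ⟨r, h0, hn, hadj, hin⟩ := Nat.find_spec hex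
  have hmin : ∀ m, m < Nat.find hex → _ := fun m hm => Nat.find_min hex hm
  set n := Nat.find hex with hndef
  have short : ∀ i j, i + 2 ≤ j → j ≤ n → ¬ G.Adj (r i) (r j) := by
    intro i j hij hj hA
    apply hmin (n - (j - i - 1)) (by omega)
    refine ⟨fun t => if t ≤ i then r t else r (t + (j - i - 1)), by simp [h0], ?_, ?_, ?_⟩
    · simp only [show ¬ (n - (j - i - 1) ≤ i) by omega, if_false]
      rw [show n - (j - i - 1) + (j - i - 1) = n by omega]; exact hn
    · intro t ht
      rcases lt_trichotomy t i with hti | hti | hti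
      · simp only [show t ≤ i by omega, show t + 1 ≤ i by omega, if_true]
        exact hadj t (by omega)
      · subst hti
        simp only [le_refl, if_true, show ¬ (t + 1 ≤ t) by omega, if_false]
        rwa [show t + 1 + (j - t - 1) = j by omega]
      · simp only [show ¬ (t ≤ i) by omega, show ¬ (t + 1 ≤ i) by omega, if_false]
        have := hadj (t + (j - i - 1)) (by omega)
        rwa [show t + (j - i - 1) + 1 = t + 1 + (j - i - 1) by omega] at this
    · intro t h1 h2
      by_cases hti : t ≤ i
      · simp only [hti, if_true]; exact hin t h1 (by omega)
      · simp only [hti, if_false]; exact hin _ (by omega) (by omega)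
  have hn2 : 2 ≤ n := by
    by_contra hlt
    have : n = 0 ∨ n = 1 := by omega
    rcases this with h1 | h1
    · rw [h1] at hn; exact hne (h0.symm.trans hn)
    · rw [h1] at hn hadj
      have := hadj 0 (by omega)
      rw [h0, zero_add, hn] at this
      exact hna this
  refine ⟨n, r, hn2, ?_, h0, hn, hin⟩
  intro i j hij hj
  constructor
  · intro heq
    rcases Nat.lt_or_ge j n with hjn | hjn
    · apply short i (j + 1) (by omega) (by omega)
      rw [heq]; exact hadj j hjn
    · have hjn' : j = n := by omega
      rw [hjn', hn] at heq
      rcases Nat.eq_zero_or_pos i with hi | hi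
      · rw [hi, h0] at heq; exact hne heq
      · exact hdK' (heq ▸ hin i hi (by omega))
  · constructor
    · intro hA
      by_contra hcon
      exact short i j (by omega) hj hA
    · rintro rfl
      exact hadj i (by omega)

/-- closing an induced path through a connected set to an induced cycle -/
lemma close_path {G : SimpleGraph V} {K : Set V} (hK : Cn G K) {p : ℕ → V} {m : ℕ} (hm : 2 ≤ m)
    (hp : IndPath G p m) (hd : ∀ i ≤ m, p i ∉ K) (h0 : Tch G K (p 0)) (h1 : Tch G K (p m))
    (hmid : ∀ i, 0 < i → i < m → ¬ Tch G K (p i)) :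
    ∃ h n, IsCyc G h n ∧ m + 2 ≤ n ∧ (∀ i ≤ m, h i = p i) ∧ ∀ i, m < i → i < n → h i ∈ K := by
  have hpm := hp 0 m (by omega) le_rfl
  obtain ⟨L, r, hL, hr, r0, rL, hin⟩ := exists_indPath hK h1 h0 (hd 0 (by omega)) hpm.1.symm
    (by rw [G.adj_comm, hpm.2]; omega)
  let g : ℕ → V := fun i => if i ≤ m then p i else r (i - m)
  have gp : ∀ i ≤ m, g i = p i := fun i hi => by simp [g, hi]
  have gr : ∀ i, m < i → g i = r (i - m) := fun i hi => by simp [g, show ¬ i ≤ m by omega]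
  have hcyc : IsCyc G (fun i => g (i % (m + L))) (m + L) := by
    apply isCyc_of_window (by omega)
    intro i j hij hj
    by_cases hjm : j ≤ m
    · rw [gp i (by omega), gp j hjm]
      have := hp i j hij hjm
      refine ⟨this.1, this.2.trans ?_⟩
      omega
    · rw [gr j (by omega)]
      by_cases him : i < m
      · rw [gp i (by omega)]
        have hjK := hin (j - m) (by omega) (by omega)
        refine ⟨fun heq => hd i (by omega) (heq ▸ hjK), ?_⟩
        by_cases hi0 : i = 0
        · subst hi0
          rw [← rL, G.adj_comm, (hr (j - m) L (by omega) le_rfl).2]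
          omega
        · constructor
          · intro hA
            exact absurd ⟨_, hjK, hA.symm⟩ (hmid i (by omega) him)
          · omega
      · have : g i = r (i - m) := by
          rcases Nat.lt_or_ge m i with h | h
          · exact gr i h
          · have : i = m := by omega
            subst this
            rw [gp i le_rfl, ← r0]; simp
        rw [this]
        have := hr (i - m) (j - m) (by omega) (by omega)
        refine ⟨this.1, this.2.trans ?_⟩
        omega
  refine ⟨_, _, hcyc, by omega, ?_, ?_⟩
  · intro i hi
    show g (i % (m + L)) = p i
    rw [Nat.mod_eq_of_lt (by omega), gp i hi]
  · intro i h1 h2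
    show g (i % (m + L)) ∈ K
    rw [Nat.mod_eq_of_lt h2, gr i h1]
    exact hin _ (by omega) (by omega)

lemma cn_connected {G : SimpleGraph V} {B : Set V} (hB : Cn G B) (hne : ∃ x, x ∈ B) :
    (G.induce B).Connected := by
  obtain ⟨x, hx⟩ := hne
  rw [SimpleGraph.connected_iff_exists_forall_reachable]
  refine ⟨⟨x, hx⟩, ?_⟩
  rintro ⟨y, hy⟩
  let P : Set V := {z | ∃ hz : z ∈ B, (G.induce B).Reachable ⟨x, hx⟩ ⟨z, hz⟩}
  by_contra hcon
  obtain ⟨u, hu, v, hv, ⟨hu', huP⟩, hvP, h⟩ := hB P ⟨x, hx, hx, Reachable.refl _⟩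
    ⟨y, hy, fun ⟨_, h⟩ => hcon h⟩
  apply hvP
  refine ⟨hv, huP.trans ?_⟩
  apply SimpleGraph.Adj.reachable
  simpa using h

lemma exists_step {P : ℕ → Prop} {i j : ℕ} (hij : i ≤ j) (hi : P i) (hj : ¬ P j) :
    ∃ t, i ≤ t ∧ t < j ∧ P t ∧ ¬ P (t + 1) := by
  induction j, hij using Nat.le_induction with
  | base => exact absurd hi hj
  | succ j hle ih =>
    by_cases h : P j
    · exact ⟨j, hle, by omega, h, hj⟩
    · obtain ⟨t, h1, h2, h3, h4⟩ := ih h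
      exact ⟨t, h1, by omega, h3, h4⟩

lemma cn_image {G : SimpleGraph V} {f : ℕ → V} (hadj : ∀ i, G.Adj (f i) (f (i + 1)))
    {I : Set ℕ} (hI : ∀ a ∈ I, ∀ b ∈ I, ∀ t, a ≤ t → t ≤ b → t ∈ I) : Cn G (f '' I) := by
  rintro P ⟨_, ⟨i, hi, rfl⟩, hiP⟩ ⟨_, ⟨j, hj, rfl⟩, hjP⟩
  rcases le_total i j with h | h
  · obtain ⟨t, h1, h2, h3, h4⟩ := exists_step (P := fun t => f t ∈ P) h hiP hjP
    exact ⟨_, ⟨t, hI i hi j hj t h1 (by omega), rfl⟩, _,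
      ⟨t + 1, hI i hi j hj (t + 1) (by omega) (by omega), rfl⟩, h3, h4, hadj t⟩
  · obtain ⟨t, h1, h2, h3, h4⟩ := exists_step (P := fun t => f t ∉ P) h hjP (not_not.2 hiP)
    exact ⟨_, ⟨t + 1, hI j hj i hi (t + 1) (by omega) (by omega), rfl⟩, _,
      ⟨t, hI j hj i hi t h1 (by omega), rfl⟩, not_not.1 h4, h3, (hadj t).symm⟩

lemma wheel_some {q : ℕ} (hq : 2 ≤ q) (a b : ZMod (q + 1)) :
    (wheel (q + 1)).Adj (some a) (some b) ↔
      (b.val = a.val + 1 ∨ a.val = b.val + 1 ∨ (a.val = 0 ∧ b.val = q) ∨ (a.val = q ∧ b.val = 0)) := by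
  have key : ∀ x y : ZMod (q + 1), y = x + 1 ↔ (y.val = x.val + 1 ∨ (x.val = q ∧ y.val = 0)) := by
    intro x y
    rw [← (ZMod.val_injective (q + 1)).eq_iff, ZMod.val_add, ZMod.val_one'' (by omega)]
    have hx := ZMod.val_lt x
    have hy := ZMod.val_lt y
    by_cases h : x.val = q
    · rw [h, Nat.mod_self]; omega
    · rw [Nat.mod_eq_of_lt (by omega)]; omega
  have hne : a ≠ b ↔ a.val ≠ b.val := (ZMod.val_injective (q + 1)).ne_iff.symm
  have hx := ZMod.val_lt a
  have hy := ZMod.val_lt b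
  have h1 : (∃ i : ZMod (q + 1), a = i ∧ b = i + 1) ↔ b = a + 1 :=
    ⟨by rintro ⟨i, rfl, h⟩; exact h, fun h => ⟨a, rfl, h⟩⟩
  have h2 : (∃ i : ZMod (q + 1), b = i ∧ a = i + 1) ↔ a = b + 1 :=
    ⟨by rintro ⟨i, rfl, h⟩; exact h, fun h => ⟨b, rfl, h⟩⟩
  simp only [wheel, SimpleGraph.fromRel_adj, ne_eq, Option.some.injEq, reduceCtorEq, false_or,
    h1, h2]
  simp only [key]
  rw [← ne_eq, hne]
  omega

lemma wheel_of_phi {G : SimpleGraph V} {q : ℕ} (hq : 2 ≤ q) {f : ℕ → V} {n : ℕ} (hf : IsCyc G f n)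
    {B : Set V} (hB : Cn G B) (hne : ∃ x, x ∈ B) (hd : ∀ x ∈ B, x ∉ Set.range f)
    (φ : ℕ → ℕ) (h0 : φ 0 = 0) (hl : φ (n - 1) = q)
    (hstep : ∀ i, i + 1 < n → φ (i + 1) = φ i ∨ φ (i + 1) = φ i + 1)
    (hlev : ∀ j ≤ q, ∃ i < n, φ i = j ∧ Tch G B (f i)) : IsInducedMinor (wheel (q + 1)) G := by
  have hn := hf.1
  have hmono : ∀ i j, i ≤ j → j < n → φ i ≤ φ j := by
    intro i j hij
    induction j, hij using Nat.le_induction with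
    | base => intro _; exact le_rfl
    | succ j hle ih =>
      intro hj
      have := ih (by omega)
      have := hstep j hj
      omega
  let Y : ℕ → Set V := fun a => f '' {i | i < n ∧ φ i = a}
  have hYc : ∀ a, Cn G (Y a) := by
    intro a
    apply cn_image hf.adj_succ
    rintro x ⟨hx, hxa⟩ y ⟨hy, hya⟩ t h1 h2
    have := hmono x t h1 (by omega)
    have := hmono t y h2 hy
    exact ⟨by omega, by omega⟩
  have hYne : ∀ a, a ≤ q → ∃ x, x ∈ Y a := by
    intro a ha
    obtain ⟨i, hi, h, _⟩ := hlev a ha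
    exact ⟨f i, i, ⟨hi, h⟩, rfl⟩
  have hinj : ∀ i < n, ∀ j < n, f i = f j → i = j := by
    intro i hi j hj h
    rcases lt_trichotomy i j with h' | h' | h'
    · exact absurd h (hf.ne h' (by omega))
    · exact h'
    · exact absurd h.symm (hf.ne h' (by omega))
  have hadj : ∀ a b, a ≤ q → b ≤ q → a ≠ b → ((∃ u ∈ Y a, ∃ v ∈ Y b, G.Adj u v) ↔
      (b = a + 1 ∨ a = b + 1 ∨ (a = 0 ∧ b = q) ∨ (a = q ∧ b = 0))) := by
    intro a b ha hb hab
    constructor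
    · rintro ⟨_, ⟨i, ⟨hi, hia⟩, rfl⟩, _, ⟨j, ⟨hj, hjb⟩, rfl⟩, h⟩
      rcases lt_trichotomy i j with h' | h' | h'
      · rw [(hf.2.2 i j h' (by omega)).2] at h
        rcases h with h | h
        · subst h; have := hstep i hj; omega
        · have hi0 : i = 0 := by omega
          have hj1 : j = n - 1 := by omega
          subst hi0; subst hj1; omega
      · subst h'; omega
      · rw [G.adj_comm, (hf.2.2 j i h' (by omega)).2] at h
        rcases h with h | h
        · subst h; have := hstep j hi; omega
        · have hi0 : j = 0 := by omega
          have hj1 : i = n - 1 := by omega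
          subst hi0; subst hj1; omega
    · have trans : ∀ c, c + 1 ≤ q → ∃ i, i + 1 < n ∧ φ i = c ∧ φ (i + 1) = c + 1 := by
        intro c hc
        obtain ⟨t, h1, h2, h3, h4⟩ := exists_step (P := fun t => φ t ≤ c) (i := 0) (j := n - 1)
          (by omega) (by omega) (by omega)
        have := hstep t (by omega)
        exact ⟨t, by omega, by omega, by omega⟩
      have wrap : G.Adj (f 0) (f (n - 1)) :=
        (hf.2.2 0 (n - 1) (by omega) (by omega)).2.2 (Or.inr (by omega))
      rintro (h | h | ⟨h, h'⟩ | ⟨h, h'⟩)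
      · obtain ⟨i, h1, h2, h3⟩ := trans a (by omega)
        exact ⟨f i, ⟨i, ⟨by omega, h2⟩, rfl⟩, f (i + 1), ⟨i + 1, ⟨by omega, by omega⟩, rfl⟩,
          hf.adj_succ i⟩
      · obtain ⟨i, h1, h2, h3⟩ := trans b (by omega)
        exact ⟨f (i + 1), ⟨i + 1, ⟨by omega, by omega⟩, rfl⟩, f i, ⟨i, ⟨by omega, h2⟩, rfl⟩,
          (hf.adj_succ i).symm⟩
      · exact ⟨f 0, ⟨0, ⟨by omega, by omega⟩, rfl⟩, f (n - 1), ⟨n - 1, ⟨by omega, by omega⟩, rfl⟩,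
          wrap⟩
      · exact ⟨f (n - 1), ⟨n - 1, ⟨by omega, by omega⟩, rfl⟩, f 0, ⟨0, ⟨by omega, by omega⟩, rfl⟩,
          wrap.symm⟩
  have hBY : ∀ a, ∀ x ∈ B, x ∉ Y a := by
    rintro a x hx ⟨i, _, rfl⟩
    exact hd _ hx ⟨i, rfl⟩
  have hBt : ∀ a ≤ q, ∃ u ∈ B, ∃ v ∈ Y a, G.Adj u v := by
    intro a ha
    obtain ⟨i, hi, h, u, hu, hui⟩ := hlev a ha
    exact ⟨u, hu, f i, ⟨i, ⟨hi, h⟩, rfl⟩, hui⟩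
  have hle : ∀ z : ZMod (q + 1), z.val ≤ q := fun z => by have := ZMod.val_lt z; omega
  refine ⟨fun o => match o with
    | none => B
    | some z => Y z.val, ?_, ?_, ?_⟩
  · rintro (_ | z)
    · exact cn_connected hB hne
    · exact cn_connected (hYc _) (hYne _ (hle z))
  · rintro (_ | a) (_ | b) hab
    · exact absurd rfl hab
    · exact Set.disjoint_left.2 (hBY _)
    · exact Set.disjoint_right.2 (hBY _)
    · refine Set.disjoint_left.2 ?_
      rintro _ ⟨i, ⟨hi, hia⟩, rfl⟩ ⟨j, ⟨hj, hjb⟩, hij⟩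
      have := hinj _ hj _ hi hij
      subst this
      apply hab
      rw [ZMod.val_injective (q + 1) (hia.symm.trans hjb)]
  · rintro (_ | a) (_ | b) hab
    · exact absurd rfl hab
    · refine iff_of_true (hBt _ (hle b)) ?_
      simp [wheel, SimpleGraph.fromRel_adj]
    · refine iff_of_true ?_ ?_
      · obtain ⟨u, hu, v, hv, h⟩ := hBt _ (hle a)
        exact ⟨v, hv, u, hu, h.symm⟩
      · simp [wheel, SimpleGraph.fromRel_adj]
    · rw [wheel_some hq]
      apply hadj _ _ (hle a) (hle b)
      intro h
      apply hab
      rw [ZMod.val_injective (q + 1) h]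

/-- Fact A: in a wheel-free graph a connected set has few attachments on an induced cycle. -/
lemma fact_a [Finite V] {G : SimpleGraph V} {q : ℕ} (hq : 2 ≤ q)
    (hfree : ¬ IsInducedMinor (wheel (q + 1)) G) {f : ℕ → V} {n : ℕ} (hf : IsCyc G f n)
    {B : Set V} (hB : Cn G B) (hd : ∀ x ∈ B, x ∉ Set.range f) :
    {x | x ∈ Set.range f ∧ Tch G B x}.ncard ≤ q := by
  classical
  let p : ℕ → Prop := fun i => Tch G B (f i)
  have hn := hf.1
  have hle : {x | x ∈ Set.range f ∧ Tch G B x}.ncard ≤ Nat.count p n := by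
    rw [Nat.count_eq_card_filter_range, ← Set.ncard_coe_finset]
    refine le_trans (Set.ncard_le_ncard (t := f '' ↑(Finset.filter p (Finset.range n))) ?_
      (Set.toFinite _)) (Set.ncard_image_le (Set.toFinite _))
    rintro x ⟨hx, hxt⟩
    obtain ⟨i, h1, h2, rfl⟩ := hf.window hx 0
    exact ⟨i, by simpa [p] using ⟨by omega, hxt⟩, rfl⟩
  refine le_trans hle ?_
  by_contra hcon
  push Not at hcon
  have hlev : ∀ j ≤ q, ∃ i < n, Nat.count p (i + 1) = j + 1 ∧ p i := by
    intro j hj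
    obtain ⟨t, h1, h2, h3, h4⟩ := exists_step (P := fun t => Nat.count p t ≤ j) (i := 0) (j := n)
      (by omega) (by simp) (by omega)
    rw [Nat.count_succ] at h4
    by_cases hpt : p t
    · rw [if_pos hpt] at h4
      refine ⟨t, h2, ?_, hpt⟩
      rw [Nat.count_succ, if_pos hpt]; omega
    · rw [if_neg hpt] at h4; omega
  apply hfree
  refine wheel_of_phi hq hf hB ?_ hd (fun i => min q (Nat.count p (i + 1) - 1)) ?_ ?_ ?_ ?_
  · obtain ⟨i, _, _, u, hu, _⟩ := hlev 0 (by omega)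
    exact ⟨u, hu⟩
  · have := Nat.count_le (p := p) (n := 0 + 1)
    show min q _ = 0
    omega
  · show min q (Nat.count p (n - 1 + 1) - 1) = q
    rw [show n - 1 + 1 = n by omega]; omega
  · intro i hi
    have := Nat.count_succ p (i + 1)
    split_ifs at this <;> simp only [this] <;> omega
  · intro j hj
    obtain ⟨i, h1, h2, h3⟩ := hlev j hj
    refine ⟨i, h1, ?_, h3⟩
    show min q _ = j
    omega

/-- the standing assumptions of the proof by contradiction -/
structure Ctx [Finite V] (G : SimpleGraph V) (w : V → ℝ) (q : ℕ) : Prop where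
  hq : 2 ≤ q
  free : ¬ IsInducedMinor (wheel (q + 1)) G
  w0 : ∀ v, 0 ≤ w v
  small : ∀ S : Set V, S.ncard ≤ q ^ 2 → ¬ IsBalancedSep G w S
  dom : ∀ D : Set V, D.ncard ≤ q + 1 → ¬ IsBalancedSep G w (closedNbhd G D)

/-- heavy cycle -/
structure HC [Finite V] (G : SimpleGraph V) (w : V → ℝ) (f : ℕ → V) (n : ℕ) : Prop where
  cyc : IsCyc G f n
  bal : IsBalancedSep G w (Set.range f)

/-- `K` is connected and closed in `G - range f` -/
structure Cmpt (G : SimpleGraph V) (f : ℕ → V) (K : Set V) : Prop where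
  conn : Cn G K
  disj : ∀ x ∈ K, x ∉ Set.range f
  closed : ∀ u ∈ K, ∀ v, v ∉ Set.range f → G.Adj u v → v ∈ K

lemma cmpt_cmp {G : SimpleGraph V} {f : ℕ → V} (v : V) : Cmpt G f (Cmp G (Set.range f) v) :=
  ⟨cmp_conn G, cmp_disj G, cmp_closed G⟩

structure GapData [Finite V] (G : SimpleGraph V) (w : V → ℝ) (f : ℕ → V) (n : ℕ) (K : Set V)
    (m : ℕ) (h : ℕ → V) (n' : ℕ) (S B : Set V) : Prop where
  two : 2 ≤ m
  mn : m + 2 ≤ n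
  t0 : Tch G K (f 0)
  tm : Tch G K (f m)
  mid : ∀ t, 0 < t → t < m → ¬ Tch G K (f t)
  hc : HC G w h n'
  mn' : m + 2 ≤ n'
  eq : ∀ i ≤ m, h i = f i
  ink : ∀ i, m < i → i < n' → h i ∈ K
  hub : Hub G w S B
  att : ∀ x ∈ Set.range f, Tch G K x → x ∈ S
  sub : ∀ x ∈ B, (x ∈ Set.range f ∨ x ∈ K) → ∃ t, 0 < t ∧ t < m ∧ f t = x

/-- nonadjacent attachments -/
def NAtt (G : SimpleGraph V) (f : ℕ → V) (K : Set V) : Prop :=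
  ∃ x ∈ Set.range f, ∃ y ∈ Set.range f, x ≠ y ∧ ¬ G.Adj x y ∧ Tch G K x ∧ Tch G K y

lemma HC.shift [Finite V] {G : SimpleGraph V} {w : V → ℝ} {f : ℕ → V} {n : ℕ} (h : HC G w f n)
    (k : ℕ) : HC G w (fun i => f (i + k)) n :=
  ⟨h.cyc.shift k, by rw [h.cyc.range_shift]; exact h.bal⟩

lemma IsCyc.eq_add {G : SimpleGraph V} {f : ℕ → V} {n : ℕ} (h : IsCyc G f n) {a b : ℕ}
    (hab : f a = f b) (s : ℕ) : f (a + s) = f (b + s) := by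
  have h3 := h.1
  have hn : 0 < n := by omega
  have e : a % n = b % n := by
    have h1 := h.per_mod 0 a
    have h2 := h.per_mod 0 b
    simp only [zero_add] at h1 h2
    have ha := Nat.mod_lt a hn
    have hb := Nat.mod_lt b hn
    rcases lt_trichotomy (a % n) (b % n) with h' | h' | h'
    · exact absurd (h1.symm.trans (hab.trans h2)) (h.ne h' (by omega))
    · exact h'
    · exact absurd (h1.symm.trans (hab.trans h2)).symm (h.ne h' (by omega))
  rw [add_comm a, add_comm b, h.per_mod, e, ← h.per_mod]

section gap
variable [Finite V] {G : SimpleGraph V} {w : V → ℝ} {q : ℕ}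

lemma gap_one (C : Ctx G w q) {f : ℕ → V} {n : ℕ} {K : Set V} (hf : HC G w f n)
    (hK : Cmpt G f K) (hp : NAtt G f K) (h0 : Tch G K (f 0)) :
    ∃ S : Set V, ∃ m, S.ncard ≤ q ∧ f 0 ∈ S ∧ 1 ≤ m ∧ Tch G K (f m) ∧
      (∀ t, 0 < t → t < m → ¬ Tch G K (f t)) ∧
      ∀ B, Cn G B → Big w B → (∀ x ∈ B, x ∉ S) → ∀ t, 0 < t → t < m → f t ∈ B →
        m + 2 ≤ n ∧ f m ∈ S ∧ (∀ t, m < t → t < n → f t ∉ B) ∧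
        ∃ h n', HC G w h n' ∧ m + 2 ≤ n' ∧ (∀ i ≤ m, h i = f i) ∧
          ∀ i, m < i → i < n' → h i ∈ K := by
  classical
  have hcyc := hf.cyc
  have hn := hcyc.1
  have hex : ∃ m, 1 ≤ m ∧ Tch G K (f m) :=
    ⟨n, by omega, by have := hcyc.2.1 0; rw [zero_add] at this; rw [this]; exact h0⟩
  obtain ⟨m, ⟨hm1, hmt⟩, hmin⟩ : ∃ m, (1 ≤ m ∧ Tch G K (f m)) ∧
      ∀ t, t < m → ¬ (1 ≤ t ∧ Tch G K (f t)) :=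
    ⟨Nat.find hex, Nat.find_spec hex, fun t ht => Nat.find_min hex ht⟩
  have hmid : ∀ t, 0 < t → t < m → ¬ Tch G K (f t) := fun t h1 h2 h3 => hmin t h2 ⟨h1, h3⟩
  by_cases hm : m = 1
  · refine ⟨{f 0}, m, ?_, rfl, hm1, hmt, hmid, ?_⟩
    · rw [Set.ncard_singleton]; have := C.hq; omega
    · intro B _ _ _ t h1 h2; omega
  have hmn : m + 2 ≤ n := by
    obtain ⟨x, hx, y, hy, hne, hna, hxt, hyt⟩ := hp
    obtain ⟨i, hi1, hi2, rfl⟩ := hcyc.window hx 1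
    obtain ⟨j, hj1, hj2, rfl⟩ := hcyc.window hy 1
    have hi : m ≤ i := by
      by_contra hlt
      exact hmid i (by omega) (by omega) hxt
    have hj : m ≤ j := by
      by_contra hlt
      exact hmid j (by omega) (by omega) hyt
    by_contra hlt
    rcases lt_trichotomy i j with h | h | h
    · have : j = i + 1 := by omega
      subst this; exact hna (hcyc.adj_succ i)
    · subst h; exact hne rfl
    · have : i = j + 1 := by omega
      subst this; exact hna (hcyc.adj_succ j).symm
  obtain ⟨h, n', hh, hn', heq, hin⟩ := close_path hK.conn (by omega) (hcyc.indPath hmn)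
    (fun i _ hi => hK.disj _ hi ⟨i, rfl⟩) h0 hmt hmid
  have hout : ∀ t, m < t → t < n → f t ∉ Set.range h := by
    intro t h1 h2 h3
    obtain ⟨i, _, hi, hit⟩ := hh.window h3 0
    rcases Nat.lt_or_ge m i with h4 | h4
    · exact hK.disj _ (hin i h4 (by omega)) ⟨t, hit.symm⟩
    · rw [heq i h4] at hit
      exact hcyc.ne (show i < t by omega) (by omega) hit
  have hinr : ∀ t ≤ m, f t ∈ Set.range h := fun t ht => ⟨t, heq t ht⟩
  set Kg := Cmp G (Set.range h) (f (m + 1)) with hKg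
  have hKin : ∀ t, m < t → t < n → f t ∈ Kg :=
    interval_sub hcyc.adj_succ (cmp_closed G) hout (t := m + 1) (by omega) (by omega)
      (cmp_self G (hout _ (by omega) (by omega)))
  have hfn : f n = f 0 := by have := hcyc.2.1 0; rwa [zero_add] at this
  have hS0 : f 0 ∈ {x | x ∈ Set.range h ∧ Tch G Kg x} := by
    refine ⟨hinr 0 (by omega), f (n - 1), hKin _ (by omega) (by omega), ?_⟩
    have := hcyc.adj_succ (n - 1)
    rwa [show n - 1 + 1 = n by omega, hfn] at this
  have hSm : f m ∈ {x | x ∈ Set.range h ∧ Tch G Kg x} :=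
    ⟨hinr m le_rfl, f (m + 1), hKin _ (by omega) (by omega), (hcyc.adj_succ m).symm⟩
  refine ⟨{x | x ∈ Set.range h ∧ Tch G Kg x}, m, fact_a C.hq C.free hh (cmp_conn G) (cmp_disj G),
    hS0, hm1, hmt, hmid, ?_⟩
  intro B hB hbig hd t ht1 ht2 htB
  have hBK : ∀ x ∈ B, x ∉ Kg := by
    intro x hx hxK
    obtain ⟨u, hu, v, hv, huK, hvK, huv⟩ := hB Kg ⟨x, hx, hxK⟩
      ⟨f t, htB, fun hc => cmp_disj G _ hc (hinr t (by omega))⟩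
    by_cases hvr : v ∈ Set.range h
    · exact hd v hv ⟨hvr, u, huK, huv⟩
    · exact hvK (cmp_closed G u huK v hvr huv)
  refine ⟨hmn, hSm, fun s h1 h2 h3 => hBK _ h3 (hKin s h1 h2), h, n', ⟨hh, ?_⟩, hn', heq, hin⟩
  by_contra hnb
  obtain ⟨B', hB'⟩ := hub_of_not_bal hnb
  obtain ⟨x, hxB, hxf⟩ := bal_meets C.w0 hf.bal hB'.conn hB'.big
  obtain ⟨i, _, hi, rfl⟩ := hcyc.window hxf 0
  have him : m < i := by
    by_contra hle
    exact hB'.disj _ hxB (hinr i (by omega))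
  have hsub : B' ⊆ Kg := cn_sub hB'.conn hB'.disj (cmp_closed G) hxB (hKin i him (by omega))
  obtain ⟨y, hy1, hy2⟩ := big_inter C.w0 hB'.big hbig
  exact hBK y hy2 (hsub hy1)

lemma gap_lemma (C : Ctx G w q) {f : ℕ → V} {n : ℕ} {K : Set V} (hf : HC G w f n)
    (hK : Cmpt G f K) (hp : NAtt G f K) :
    ∃ k < n, ∃ m h n' S B, GapData G w (fun t => f (t + k)) n K m h n' S B := by
  classical
  have hcyc := hf.cyc
  have hn := hcyc.1
  have key : ∀ x, x ∈ {x | x ∈ Set.range f ∧ Tch G K x} → ∃ i : ℕ, ∃ S : Set V, ∃ m,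
      i < n ∧ f i = x ∧ S.ncard ≤ q ∧ x ∈ S ∧ 1 ≤ m ∧ Tch G K (f (m + i)) ∧
      (∀ t, 0 < t → t < m → ¬ Tch G K (f (t + i))) ∧
      ∀ B, Cn G B → Big w B → (∀ x ∈ B, x ∉ S) → ∀ t, 0 < t → t < m → f (t + i) ∈ B →
        m + 2 ≤ n ∧ f (m + i) ∈ S ∧ (∀ t, m < t → t < n → f (t + i) ∉ B) ∧
        ∃ h n', HC G w h n' ∧ m + 2 ≤ n' ∧ (∀ j ≤ m, h j = f (j + i)) ∧
          ∀ j, m < j → j < n' → h j ∈ K := by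
    rintro x ⟨hx, hxt⟩
    obtain ⟨i, _, hi, rfl⟩ := hcyc.window hx 0
    have hr := hcyc.range_shift i
    have hK' : Cmpt G (fun t => f (t + i)) K := ⟨hK.conn, by rw [hr]; exact hK.disj,
      by rw [hr]; exact hK.closed⟩
    have hp' : NAtt G (fun t => f (t + i)) K := by unfold NAtt; rw [hr]; exact hp
    obtain ⟨S, m, h1, h2, h3, h4, h5, h6⟩ := gap_one C (hf.shift i) hK' hp'
      (by simpa using hxt)
    exact ⟨i, S, m, by omega, rfl, h1, by simpa using h2, h3, h4, h5, h6⟩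
  choose! I S M hI hIx hSc hSx hM1 hMt hMmid hbig using key
  set A := {x | x ∈ Set.range f ∧ Tch G K x} with hA
  have hAf : A.Finite := Set.toFinite _
  let U : Set V := ⋃ x ∈ A, S x
  have hUc : U.ncard ≤ q ^ 2 := by
    have hAc : A.ncard ≤ q := fact_a C.hq C.free hcyc hK.conn hK.disj
    have : U = ↑(hAf.toFinset.biUnion fun x => (Set.toFinite (S x)).toFinset) := by
      ext z; simp [U]
    rw [this, Set.ncard_coe_finset]
    have h1 := Finset.card_biUnion_le_card_mul hAf.toFinset
      (fun x => (Set.toFinite (S x)).toFinset) q (by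
        intro x hx
        have := hSc x (by simpa using hx)
        rwa [Set.ncard_eq_toFinset_card _ (Set.toFinite _)] at this)
    rw [Set.ncard_eq_toFinset_card _ hAf] at hAc
    calc _ ≤ _ := h1
      _ ≤ q * q := Nat.mul_le_mul_right _ hAc
      _ = q ^ 2 := by ring
  obtain ⟨B, hB⟩ := hub_of_not_bal (C.small U hUc)
  have hSU : ∀ x ∈ A, ∀ z ∈ S x, z ∈ U := fun x hx z hz => Set.mem_biUnion hx hz
  have hAU : ∀ x ∈ A, x ∈ U := fun x hx => hSU x hx x (hSx x hx)
  obtain ⟨y, hyB, hyf⟩ := bal_meets C.w0 hf.bal hB.conn hB.big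
  have hBK : ∀ z ∈ B, z ∉ K := by
    intro z hz hzK
    have : B ⊆ K := cn_sub (S := A) hB.conn (fun x hx hxA => hB.disj x hx (hAU x hxA)) (by
      intro u hu x hx hux
      by_contra hxK
      by_cases hxr : x ∈ Set.range f
      · exact hx ⟨hxr, u, hu, hux⟩
      · exact hxK (hK.closed u hu x hxr hux)) hz hzK
    exact hK.disj y (this hyB) hyf
  have hex : ∃ d, ∃ x ∈ A, f (d + I x) = y := by
    obtain ⟨x, hx, _, _, _, _, hxt, _⟩ := hp
    obtain ⟨j, h1, h2, h3⟩ := hcyc.window hyf (I x)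
    exact ⟨j - I x, x, ⟨hx, hxt⟩, by rw [← h3]; congr 1; omega⟩
  obtain ⟨d, ⟨x, hx, hd⟩, hmin⟩ : ∃ d, (∃ x ∈ A, f (d + I x) = y) ∧
      ∀ t, t < d → ¬ (∃ x ∈ A, f (t + I x) = y) :=
    ⟨Nat.find hex, Nat.find_spec hex, fun t ht => Nat.find_min hex ht⟩
  have hd0 : 0 < d := by
    rcases Nat.eq_zero_or_pos d with h | h
    · rw [h, zero_add, hIx x hx] at hd
      exact absurd (hAU x hx) (hd ▸ hB.disj y hyB)
    · exact h
  have hdM : d < M x := by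
    by_contra hle
    have h1 := hM1 x hx
    have hx' : f (M x + I x) ∈ A := ⟨⟨_, rfl⟩, hMt x hx⟩
    refine hmin (d - M x) (by omega) ⟨_, hx', ?_⟩
    rw [add_comm, hcyc.eq_add (hIx _ hx'), ← hd]
    congr 1; omega
  obtain ⟨hmn, hmS, hrest, h, n', hc, hmn', heq, hink⟩ := hbig x hx B hB.conn hB.big
    (fun z hz hzS => hB.disj z hz (hSU x hx z hzS)) d hd0 hdM (hd.symm ▸ hyB)
  refine ⟨I x, hI x hx, M x, h, n', U, B, ?_⟩
  refine ⟨by omega, hmn, ?_, hMt x hx, hMmid x hx, hc, hmn', heq, hink, hB, ?_, ?_⟩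
  · show Tch G K (f (0 + I x))
    rw [zero_add, hIx x hx]; exact hx.2
  · rw [hcyc.range_shift]; exact fun z hz hzt => hAU z ⟨hz, hzt⟩
  · rw [hcyc.range_shift]
    rintro z hz (hzr | hzK)
    · obtain ⟨j, h1, h2, h3⟩ := hcyc.window hzr (I x)
      have hj : f (j - I x + I x) = z := by rw [← h3]; congr 1; omega
      refine ⟨j - I x, ?_, ?_, hj⟩
      · by_contra h0
        rw [show j - I x = 0 by omega, zero_add, hIx x hx] at hj
        exact hB.disj z hz (hj ▸ hAU x hx)
      · by_contra h0
        rcases eq_or_lt_of_le (Nat.le_of_not_lt h0) with h4 | h4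
        · rw [← h4] at hj
          exact hB.disj z hz (hj ▸ hSU x hx _ hmS)
        · exact hrest _ h4 (by omega) (hj.symm ▸ hz)
    · exact absurd hzK (hBK z hz)

end gap

section twin
variable [Finite V] {G : SimpleGraph V} {w : V → ℝ} {q : ℕ}

def ThetaP (G : SimpleGraph V) (w : V → ℝ) (m : ℕ) : Prop :=
  ∃ f n K h n' S B, HC G w f n ∧ Cmpt G f K ∧ GapData G w f n K m h n' S B

def CutP (G : SimpleGraph V) (w : V → ℝ) (m : ℕ) : Prop :=
  ∃ f n B, HC G w f n ∧ 2 ≤ m ∧ m < n ∧ Hub G w {f 0, f m} B ∧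
    ∀ x ∈ B, x ∈ Set.range f → ∃ t, 0 < t ∧ t < m ∧ f t = x

lemma Cmpt.shift {f : ℕ → V} {n : ℕ} {K : Set V} (h : Cmpt G f K) (hf : IsCyc G f n) (k : ℕ) :
    Cmpt G (fun t => f (t + k)) K :=
  ⟨h.conn, by rw [hf.range_shift]; exact h.disj, by rw [hf.range_shift]; exact h.closed⟩

lemma hub4 (C : Ctx G w q) (S : Set V) (h : S.ncard ≤ 4) : ∃ B, Hub G w S B := by
  apply hub_of_not_bal
  apply C.small
  have := C.hq
  nlinarith

lemma hub2 (C : Ctx G w q) (a b : V) : ∃ B, Hub G w {a, b} B :=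
  hub4 C _ (le_trans (Set.ncard_insert_le _ _) (by simp))

/-- two heavy cycles sharing exactly a path -/
structure Twin (G : SimpleGraph V) (w : V → ℝ) (c : ℕ → V) (n : ℕ) (c' : ℕ → V) (n' : ℕ)
    (L : ℕ) : Prop where
  h1 : HC G w c n
  h2 : HC G w c' n'
  two : 2 ≤ L
  l1 : L + 2 ≤ n
  l2 : L + 2 ≤ n'
  eq : ∀ i ≤ L, c i = c' i
  dis : ∀ i j, L < i → i < n → L < j → j < n' → c i ≠ c' j

variable {c c' : ℕ → V} {n n' L : ℕ}

lemma Twin.symm (T : Twin G w c n c' n' L) : Twin G w c' n' c n L :=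
  ⟨T.h2, T.h1, T.two, T.l2, T.l1, fun i hi => (T.eq i hi).symm,
    fun i j h1 h2 h3 h4 h => T.dis j i h3 h4 h1 h2 h.symm⟩

lemma Twin.out (T : Twin G w c n c' n' L) : ∀ j, L < j → j < n' → c' j ∉ Set.range c := by
  intro j h1 h2 h3
  obtain ⟨i, _, hi, hij⟩ := T.h1.cyc.window h3 0
  rcases Nat.lt_or_ge L i with h | h
  · exact T.dis i j h (by omega) h1 h2 hij
  · rw [T.eq i h] at hij
    exact T.h2.cyc.ne (show i < j by omega) (by omega) hij

/-- the component of the second arc -/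
def KT (G : SimpleGraph V) (c c' : ℕ → V) (L : ℕ) : Set V := Cmp G (Set.range c) (c' (L + 1))

lemma Twin.inK (T : Twin G w c n c' n' L) : ∀ j, L < j → j < n' → c' j ∈ KT G c c' L := by
  have := T.l2
  exact interval_sub T.h2.cyc.adj_succ (cmp_closed G) T.out (t := L + 1) (by omega) (by omega)
      (cmp_self G (T.out _ (by omega) (by omega)))

lemma Twin.cmpt (c c' : ℕ → V) (L : ℕ) : Cmpt G c (KT G c c' L) := cmpt_cmp _

lemma Twin.mem (T : Twin G w c n c' n' L) : ∀ x ∈ Set.range c', x ∈ Set.range c ∨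
    x ∈ KT G c c' L := by
  intro x hx
  obtain ⟨i, _, hi, rfl⟩ := T.h2.cyc.window hx 0
  rcases Nat.lt_or_ge L i with h | h
  · exact Or.inr (T.inK i h (by omega))
  · exact Or.inl ⟨i, T.eq i h⟩

lemma IsCyc.per0 {f : ℕ → V} {n : ℕ} (h : IsCyc G f n) : f n = f 0 := by
  have := h.2.1 0; rwa [zero_add] at this

lemma Twin.t0 (T : Twin G w c n c' n' L) : Tch G (KT G c c' L) (c 0) := by
  have := T.l2
  refine ⟨c' (n' - 1), T.inK _ (by omega) (by omega), ?_⟩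
  have h := T.h2.cyc.adj_succ (n' - 1)
  rwa [show n' - 1 + 1 = n' by omega, T.h2.cyc.per0, ← T.eq 0 (by omega)] at h

lemma Twin.tL (T : Twin G w c n c' n' L) : Tch G (KT G c c' L) (c L) := by
  have := T.l2
  refine ⟨c' (L + 1), T.inK _ (by omega) (by omega), ?_⟩
  rw [T.eq L le_rfl]
  exact (T.h2.cyc.adj_succ L).symm

lemma twin_gap (C : Ctx G w q) (T : Twin G w c n c' n' L) :
    ∃ k m h m' S B, k + m ≤ L ∧
      GapData G w (fun t => c (t + k)) n (KT G c c' L) m h m' S B := by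
  have l1 := T.l1
  have l2 := T.l2
  have two := T.two
  have hcyc := T.h1.cyc
  have hLn := hcyc.2.2 0 L (by omega) (by omega)
  obtain ⟨k, hk, m, h, m', S, B, D⟩ := gap_lemma C T.h1 (Twin.cmpt c c' L)
    ⟨c 0, ⟨0, rfl⟩, c L, ⟨L, rfl⟩, hLn.1, by rw [hLn.2]; omega, T.t0, T.tL⟩
  refine ⟨k, m, h, m', S, B, ?_, D⟩
  have notin : ∀ i, k < i → i < k + m → ¬ Tch G (KT G c c' L) (c i) := by
    intro i h1 h2
    have := D.mid (i - k) (by omega) (by omega)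
    simpa [show i - k + k = i by omega] using this
  have hkn : k + m ≤ n := by
    by_contra hlt
    exact notin n hk (by omega) (by rw [hcyc.per0]; exact T.t0)
  by_cases hkL : k < L
  · by_contra hlt
    exact notin L hkL (by omega) T.tL
  · exfalso
    obtain ⟨x, hxB, hx⟩ := bal_meets C.w0 T.h2.bal D.hub.conn D.hub.big
    obtain ⟨t, ht0, htm, htx⟩ := D.sub x hxB (by
      rw [hcyc.range_shift]; exact T.mem x hx)
    refine T.symm.out (t + k) (by omega) (by omega) ?_
    have : c (t + k) = x := htx
    rw [this]; exact hx

lemma twin_closed (T : Twin G w c n c' n' L)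
    (ha : ∀ t, 0 < t → t < L → ¬ Tch G (KT G c c' L) (c t))
    (hb : ∀ t, 0 < t → t < L → ¬ Tch G (KT G c' c L) (c t)) :
    ∀ u ∈ KT G c c' L ∪ KT G c' c L, ∀ x, x ∉ ({c 0, c L} : Set V) → G.Adj u x →
      x ∈ KT G c c' L ∪ KT G c' c L := by
  have aux : ∀ {c c' : ℕ → V} {n n' : ℕ}, Twin G w c n c' n' L →
      (∀ t, 0 < t → t < L → ¬ Tch G (KT G c c' L) (c t)) →
      ∀ u ∈ KT G c c' L, ∀ x, x ∉ ({c 0, c L} : Set V) → G.Adj u x →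
      x ∈ KT G c c' L ∪ KT G c' c L := by
    intro c c' n n' T ha u hu x hx hux
    by_cases hxr : x ∈ Set.range c
    · obtain ⟨i, _, hi, rfl⟩ := T.h1.cyc.window hxr 0
      rcases Nat.lt_or_ge L i with h | h
      · exact Or.inr (T.symm.inK i h (by omega))
      · exfalso
        have h0 : i ≠ 0 := by rintro rfl; simp at hx
        have hL : i ≠ L := by rintro rfl; simp at hx
        exact ha i (by omega) (by omega) ⟨u, hu, hux⟩
    · exact Or.inl (cmp_closed G u hu x hxr hux)
  rintro u (hu | hu) x hx hux
  · exact aux T ha u hu x hx hux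
  · rw [Set.union_comm]
    refine aux T.symm ?_ u hu x ?_ hux
    · intro t h1 h2; rw [← T.eq t (by omega)]; exact hb t h1 h2
    · rwa [← T.eq 0 (by omega), ← T.eq L le_rfl]

lemma twin_disj (T : Twin G w c n c' n' L) : ∀ t ≤ L, c t ∉ KT G c c' L ∪ KT G c' c L := by
  rintro t ht (h | h)
  · exact cmp_disj G _ h ⟨t, rfl⟩
  · exact cmp_disj G _ h ⟨t, (T.eq t ht).symm⟩

lemma gap_twin {f : ℕ → V} {K S B : Set V} {m : ℕ} {h : ℕ → V} (hf : HC G w f n)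
    (hK : Cmpt G f K) (D : GapData G w f n K m h n' S B) : Twin G w h n' f n m :=
  ⟨D.hc, hf, D.two, D.mn', D.mn, D.eq, fun i j h1 h2 h3 h4 h5 =>
    hK.disj _ (D.ink i h1 h2) ⟨j, h5.symm⟩⟩

lemma lemma_i (C : Ctx G w q) {m : ℕ} (hT : ThetaP G w m) (hmin : ∀ m' < m, ¬ ThetaP G w m') :
    CutP G w m := by
  obtain ⟨f, n, K, h, n', S, B, hf, hK, D⟩ := hT
  have two := D.two
  have mn := D.mn
  have T := gap_twin hf hK D
  obtain ⟨k, m2, h2, n2, S2, B2, hkm, D2⟩ := twin_gap C T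
  have hm2 : m ≤ m2 := by
    by_contra hlt
    exact hmin m2 (by omega) ⟨_, _, _, _, _, _, _, T.h1.shift k, (Twin.cmpt h f m).shift T.h1.cyc k,
      D2⟩
  have hk0 : k = 0 := by omega
  have hmm : m2 = m := by omega
  subst hk0; subst hmm
  have ha : ∀ t, 0 < t → t < m2 → ¬ Tch G (KT G h f m2) (h t) := by
    intro t h1 h2; simpa using D2.mid t h1 h2
  have hKs : KT G f h m2 ⊆ K := by
    have hhK := D.ink (m2 + 1) (by omega) (by have := D.mn'; omega)
    exact cn_sub (cmp_conn G) (cmp_disj G) hK.closed (cmp_self G (hK.disj _ hhK)) hhK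
  have hb : ∀ t, 0 < t → t < m2 → ¬ Tch G (KT G f h m2) (h t) := by
    rintro t h1 h2 ⟨u, hu, hut⟩
    rw [D.eq t (by omega)] at hut
    exact D.mid t h1 h2 ⟨u, hKs hu, hut⟩
  have hcl := twin_closed T ha hb
  obtain ⟨B', hB'⟩ := hub2 C (f 0) (f m2)
  have hBB : B ⊆ B' := by
    apply hub_sub C.w0 hB' D.hub.conn _ D.hub.big
    rintro x hx (rfl | rfl)
    · exact D.hub.disj _ hx (D.att _ ⟨_, rfl⟩ D.t0)
    · exact D.hub.disj _ hx (D.att _ ⟨_, rfl⟩ D.tm)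
  obtain ⟨x, hxB, hx⟩ := bal_meets C.w0 hf.bal D.hub.conn D.hub.big
  obtain ⟨t, ht0, htm, rfl⟩ := D.sub x hxB (Or.inl hx)
  refine ⟨f, n, B', hf, two, by omega, hB', ?_⟩
  intro y hy hyf
  obtain ⟨i, _, hi, rfl⟩ := hf.cyc.window hyf 0
  have h0 : i ≠ 0 := by rintro rfl; exact hB'.disj _ hy (by simp)
  have hm : i ≠ m2 := by rintro rfl; exact hB'.disj _ hy (by simp)
  refine ⟨i, by omega, ?_, rfl⟩
  by_contra hlt
  have hiQ := T.inK i (by omega) (by omega)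
  have := cn_sub hB'.conn (by rw [D.eq 0 (by omega), D.eq m2 le_rfl]; exact hB'.disj) hcl hy
    (Or.inl hiQ) (hBB hxB)
  rw [← D.eq t (by omega)] at this
  exact twin_disj T t (by omega) this

end twin

section cut
variable [Finite V] {G : SimpleGraph V} {w : V → ℝ} {q : ℕ}

lemma arc_lemma (C : Ctx G w q) {f : ℕ → V} {n : ℕ} (hf : HC G w f n) {p r : ℕ}
    (hpn : r < p + n) {B : Set V} (hB : Cn G B) (hbig : Big w B)
    (hd : ∀ x ∈ B, x ∉ ({f p, f r} : Set V)) {t : ℕ} (ht : p < t) (ht' : t < r) (htB : f t ∈ B) :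
    CutP G w (r - p) ∨ ∃ D i s, Cmpt G f D ∧ p < i ∧ i < r ∧ Tch G D (f i) ∧ r < s ∧ s < p + n ∧
      Tch G D (f s) := by
  have hcyc := hf.cyc
  obtain ⟨B', hB'⟩ := hub2 C (f p) (f r)
  have hBB : B ⊆ B' := hub_sub C.w0 hB' hB hd hbig
  by_cases hs : ∃ s, r < s ∧ s < p + n ∧ f s ∈ B'
  · right
    obtain ⟨s0, hs1, hs2, hs3⟩ := hs
    by_contra hno
    let Q : Set V := {x | ∃ i, p < i ∧ i < r ∧ f i = x} ∪
      {x | x ∉ Set.range f ∧ ∃ i, p < i ∧ i < r ∧ Tch G (Cmp G (Set.range f) x) (f i)}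
    have hQ : ∀ u ∈ Q, ∀ x, x ∉ ({f p, f r} : Set V) → G.Adj u x → x ∈ Q := by
      rintro u hu x hx hux
      have hxj : x ∈ Set.range f → ∃ j, p < j ∧ j < p + n ∧ j ≠ r ∧ f j = x := by
        intro hxr
        obtain ⟨j, hj1, hj2, rfl⟩ := hcyc.window hxr p
        have h0 : j ≠ p := by rintro rfl; simp at hx
        have h1 : j ≠ r := by rintro rfl; simp at hx
        exact ⟨j, by omega, hj2, h1, rfl⟩
      rcases hu with ⟨i, hi1, hi2, rfl⟩ | ⟨hur, i, hi1, hi2, hui⟩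
      · by_cases hxr : x ∈ Set.range f
        · obtain ⟨j, hj1, hj2, hj3, rfl⟩ := hxj hxr
          rcases Nat.lt_or_ge j r with h | h
          · exact Or.inl ⟨j, hj1, h, rfl⟩
          · rw [(hcyc.2.2 i j (by omega) (by omega)).2] at hux
            omega
        · exact Or.inr ⟨hxr, i, hi1, hi2, x, cmp_self G hxr, hux.symm⟩
      · by_cases hxr : x ∈ Set.range f
        · obtain ⟨j, hj1, hj2, hj3, rfl⟩ := hxj hxr
          rcases Nat.lt_or_ge j r with h | h
          · exact Or.inl ⟨j, hj1, h, rfl⟩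
          · exfalso
            exact hno ⟨_, i, j, cmpt_cmp u, hi1, hi2, hui, by omega, hj2, u, cmp_self G hur, hux⟩
        · refine Or.inr ⟨hxr, i, hi1, hi2, ?_⟩
          have hsub : Cmp G (Set.range f) u ⊆ Cmp G (Set.range f) x :=
            cn_sub (cmp_conn G) (cmp_disj G) (cmp_closed G) (cmp_self G hur)
              (cmp_closed G x (cmp_self G hxr) u hur hux.symm)
          obtain ⟨v, hv, hvi⟩ := hui
          exact ⟨v, hsub hv, hvi⟩
    have := cn_sub hB'.conn hB'.disj hQ (hBB htB) (Or.inl ⟨t, ht, ht', rfl⟩) hs3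
    rcases this with ⟨i, hi1, hi2, hi3⟩ | ⟨h, _⟩
    · exact hcyc.ne (show i < s0 by omega) (by omega) hi3
    · exact h ⟨s0, rfl⟩
  · left
    push Not at hs
    refine ⟨fun i => f (i + p), n, B', hf.shift p, by omega, by omega, ?_, ?_⟩
    · simpa [show r - p + p = r by omega] using hB'
    · rw [hcyc.range_shift]
      intro x hx hxr
      obtain ⟨j, hj1, hj2, rfl⟩ := hcyc.window hxr p
      have h0 : j ≠ p := by rintro rfl; exact hB'.disj _ hx (by simp)
      have h1 : j ≠ r := by rintro rfl; exact hB'.disj _ hx (by simp)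
      refine ⟨j - p, by omega, ?_, by simp [show j - p + p = j by omega]⟩
      by_contra hlt
      exact hs j (by omega) hj2 hx

/-- a minimal cut situation -/
structure Cut (G : SimpleGraph V) (w : V → ℝ) (f : ℕ → V) (n m : ℕ) (M : Set V) : Prop where
  hf : HC G w f n
  two : 2 ≤ m
  mn : m < n
  hub : Hub G w {f 0, f m} M
  sub : ∀ x ∈ M, x ∈ Set.range f → ∃ t, 0 < t ∧ t < m ∧ f t = x
  minC : ∀ m' < m, ¬ CutP G w m'
  minT : ∀ m' < m, ¬ ThetaP G w m'

variable {f : ℕ → V} {n m : ℕ} {M : Set V}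

lemma Cut.out (K : Cut G w f n m M) : ∀ i, m < i → i < n → f i ∉ M := by
  intro i h1 h2 h3
  obtain ⟨t, ht1, ht2, ht3⟩ := K.sub _ h3 ⟨i, rfl⟩
  exact K.hf.cyc.ne (show t < i by omega) (by omega) ht3

lemma Cut.ins (C : Ctx G w q) (K : Cut G w f n m M) : ∀ i, 0 < i → i < m → f i ∈ M := by
  have hmn := K.mn
  obtain ⟨x, hxB, hx⟩ := bal_meets C.w0 K.hf.bal K.hub.conn K.hub.big
  obtain ⟨t, ht1, ht2, rfl⟩ := K.sub _ hxB hx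
  refine interval_sub K.hf.cyc.adj_succ K.hub.closed ?_ ht1 ht2 hxB
  rintro i h1 h2 (h3 | h3)
  · exact K.hf.cyc.ne h1 (by omega) h3.symm
  · exact K.hf.cyc.ne h2 (by omega) h3

/-- vertices of `M` on the cycle have index in `(0,m)`. -/
lemma Cut.idx (K : Cut G w f n m M) {i : ℕ} (hi : i < n) (h : f i ∈ M) : 0 < i ∧ i < m := by
  have h0 : i ≠ 0 := by rintro rfl; exact K.hub.disj _ h (by simp)
  have h1 : i ≠ m := by rintro rfl; exact K.hub.disj _ h (by simp)
  have h2 : ¬ m < i := fun h2 => K.out i h2 hi h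
  omega

/-- attachments of subsets of `M` have index in `[0,m]`. -/
lemma Cut.att (K : Cut G w f n m M) {i : ℕ} (hi : i < n) {D : Set V} (hD : D ⊆ M)
    (h : Tch G D (f i)) : i ≤ m := by
  by_contra hlt
  obtain ⟨u, hu, hui⟩ := h
  have hmn := K.mn
  refine K.out i (by omega) hi (K.hub.closed u (hD hu) _ ?_ hui)
  rintro (h3 | h3)
  · exact K.hf.cyc.ne (show 0 < i by omega) (by omega) h3.symm
  · exact K.hf.cyc.ne (show m < i by omega) (by omega) h3.symm

lemma Cut.cmp_sub (C : Ctx G w q) (K : Cut G w f n m M) {D : Set V} (hD : Cmpt G f D) {y : ℕ}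
    (hy0 : 0 < y) (hym : y < m) (hy : Tch G D (f y)) : D ⊆ M := by
  obtain ⟨u, hu, huy⟩ := hy
  have hd : ∀ x ∈ D, x ∉ ({f 0, f m} : Set V) := by
    rintro x hx (rfl | rfl) <;> exact hD.disj _ hx ⟨_, rfl⟩
  exact cn_sub hD.conn hd K.hub.closed hu
    (K.hub.closed _ (K.ins C y hy0 hym) u (hd u hu) huy.symm)

structure StateD (G : SimpleGraph V) (w : V → ℝ) (f : ℕ → V) (n m : ℕ) (M : Set V)
    (e1 e2 L : ℕ) (c : ℕ → V) (n1 : ℕ) (c' : ℕ → V) (n2 : ℕ) : Prop where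
  gap : e1 + 2 ≤ e2
  le : e2 ≤ m
  prop : ¬ (e1 = 0 ∧ e2 = m)
  len : e2 + L = n + e1
  tw : Twin G w c n1 c' n2 L
  eq : ∀ i ≤ L, c i = f (e2 + i)
  inR : ∀ i, L < i → i < n1 → c i ∈ M
  inX : ∀ i, L < i → i < n2 → c' i ∈ M
  cov : ∃ t, e1 < t ∧ t < e2 ∧ ((∃ i, L < i ∧ i < n1 ∧ c i = f t) ∨ ∃ i, L < i ∧ i < n2 ∧ c' i = f t)

def State (G : SimpleGraph V) (w : V → ℝ) (f : ℕ → V) (n m : ℕ) (M : Set V) (e1 e2 : ℕ) : Prop :=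
  ∃ L c n1 c' n2, StateD G w f n m M e1 e2 L c n1 c' n2

lemma StateD.symm {e1 e2 L n1 n2 : ℕ} {c c' : ℕ → V}
    (H : StateD G w f n m M e1 e2 L c n1 c' n2) : StateD G w f n m M e1 e2 L c' n2 c n1 :=
  ⟨H.gap, H.le, H.prop, H.len, H.tw.symm, fun i hi => by rw [← H.tw.eq i hi, H.eq i hi], H.inX,
    H.inR, by obtain ⟨t, h1, h2, h3⟩ := H.cov; exact ⟨t, h1, h2, h3.symm⟩⟩

lemma init_state (C : Ctx G w q) (K : Cut G w f n m M) {D : Set V} (hD : Cmpt G f D) {y : ℕ}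
    (hy0 : 0 < y) (hym : y < m) (hy : Tch G D (f y)) (hna : NAtt G f D) :
    ∃ e1 e2, State G w f n m M e1 e2 ∧ ∀ i ≤ m, Tch G D (f i) → e1 ≤ i ∧ i ≤ e2 := by
  have hmn := K.mn
  have two := K.two
  have hcyc := K.hf.cyc
  have hDM := K.cmp_sub C hD hy0 hym hy
  obtain ⟨k, hkn, m2, h, n', S, B, E⟩ := gap_lemma C K.hf hD hna
  have em2 := E.two
  have emn := E.mn
  have hm2 : m ≤ m2 := by
    by_contra hlt
    exact K.minT m2 (by omega) ⟨_, _, _, _, _, _, _, K.hf.shift k, hD.shift hcyc k, E⟩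
  have hmid : ∀ i, k < i → i < k + m2 → ¬ Tch G D (f i) := by
    intro i h1 h2
    have := E.mid (i - k) (by omega) (by omega)
    simpa [show i - k + k = i by omega] using this
  have hk : k ≤ m := K.att hkn hDM (by simpa using E.t0)
  have htm : Tch G D (f (m2 + k)) := E.tm
  have hBk : ∀ x ∈ B, x ≠ f k := by
    rintro x hx rfl
    exact E.hub.disj _ hx (E.att _ (by rw [hcyc.range_shift]; exact ⟨k, rfl⟩)
      (by simpa using E.t0))
  have hBm : ∀ x ∈ B, x ≠ f (m2 + k) := by
    rintro x hx rfl
    exact E.hub.disj _ hx (E.att _ (by rw [hcyc.range_shift]; exact ⟨_, rfl⟩) htm)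
  have hge : n ≤ k + m2 := by
    by_contra hlt
    have := K.att (i := m2 + k) (by omega) hDM htm
    exact hmid y (by omega) (by omega) hy
  obtain ⟨e1, he1⟩ : ∃ e1, k + m2 = n + e1 := ⟨k + m2 - n, by omega⟩
  have hfe : f (m2 + k) = f e1 := by
    rw [show m2 + k = e1 + n by omega, hcyc.2.1]
  refine ⟨e1, k, ⟨m2, h, n', fun i => f (i + k), n, ?_⟩, ?_⟩
  · refine ⟨by omega, hk, ?_, he1, gap_twin (K.hf.shift k) (hD.shift hcyc k) E, ?_, ?_, ?_, ?_⟩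
    · rintro ⟨h1, h2⟩
      have hBM : B ⊆ M := by
        apply hub_sub C.w0 K.hub E.hub.conn _ E.hub.big
        rintro x hx (h3 | h3)
        · exact hBm x hx (by rw [hfe, h1]; exact h3)
        · exact hBk x hx (by rw [h2]; exact h3)
      obtain ⟨x, hxB, hx⟩ := bal_meets C.w0 K.hf.bal E.hub.conn E.hub.big
      obtain ⟨t, ht0, htm, rfl⟩ := E.sub x hxB (Or.inl (by rw [hcyc.range_shift]; exact hx))
      exact K.out (t + k) (by omega) (by omega) (hBM hxB)
    · intro i hi
      rw [E.eq i hi, add_comm]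
    · intro i h1 h2
      exact hDM (E.ink i h1 h2)
    · intro i h1 h2
      show f (i + k) ∈ M
      rw [show i + k = (i + k - n) + n by omega, hcyc.2.1]
      exact K.ins C _ (by omega) (by omega)
    · refine ⟨e1 + 1, by omega, by omega, Or.inr ⟨m2 + 1, by omega, by omega, ?_⟩⟩
      show f (m2 + 1 + k) = f (e1 + 1)
      rw [show m2 + 1 + k = e1 + 1 + n by omega, hcyc.2.1]
  · intro i hi hiD
    constructor
    · by_contra hlt
      refine hmid (i + n) (by omega) (by omega) ?_
      rw [hcyc.2.1]; exact hiD
    · by_contra hlt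
      exact hmid i (by omega) (by omega) hiD

lemma max_step (C : Ctx G w q) (K : Cut G w f n m M) {e1 e2 L n1 n2 : ℕ} {c c' : ℕ → V}
    (H : StateD G w f n m M e1 e2 L c n1 c' n2)
    (hmax : ∀ a b, State G w f n m M a b → b - a ≤ e2 - e1) :
    (∀ t, 0 < t → t < L → ¬ Tch G (KT G c c' L) (c t)) ∧
    ∃ S B, Hub G w S B ∧ c 0 ∈ S ∧ c L ∈ S ∧
      ∀ x ∈ B, x ∈ Set.range c → ∃ t, 0 < t ∧ t < L ∧ c t = x := by
  have hmn := K.mn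
  have two := K.two
  have hcyc := K.hf.cyc
  have gap := H.gap
  have le := H.le
  have len := H.len
  have T := H.tw
  have tl1 := T.l1
  have tl2 := T.l2
  obtain ⟨k, m2, h, n', S, B, hkL, E⟩ := twin_gap C T
  have em2 := E.two
  have hm2 : m ≤ m2 := by
    by_contra hlt
    exact K.minT m2 (by omega) ⟨_, _, _, _, _, _, _, T.h1.shift k,
      (Twin.cmpt c c' L).shift T.h1.cyc k, E⟩
  have hr := T.h1.cyc.range_shift k
  have hf0 : f 0 ∈ Set.range c := ⟨n - e2, by
    rw [H.eq _ (by omega), show e2 + (n - e2) = n by omega, hcyc.per0]⟩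
  have hfm : f m ∈ Set.range c := ⟨m - e2, by
    rw [H.eq _ (by omega), show e2 + (m - e2) = m by omega]⟩
  have hKM : KT G c c' L ⊆ M := by
    refine cn_sub (S := {f 0, f m}) (cmp_conn G) ?_ K.hub.closed
      (T.inK (L + 1) (by omega) (by omega)) (H.inX (L + 1) (by omega) (by omega))
    rintro x hx (rfl | rfl)
    · exact cmp_disj G _ hx hf0
    · exact cmp_disj G _ hx hfm
  have hattL : ∀ i ≤ L, Tch G (KT G c c' L) (c i) → e2 + i ≤ m ∨ n ≤ e2 + i := by
    intro i hi hit
    rw [H.eq i hi] at hit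
    by_contra hcon
    have := K.att (i := e2 + i) (by omega) hKM hit
    omega
  have htk : Tch G (KT G c c' L) (c k) := by simpa using E.t0
  have htm : Tch G (KT G c c' L) (c (m2 + k)) := E.tm
  have hp1 : e2 + k ≤ m := by
    rcases hattL k (by omega) htk with h1 | h1 <;> omega
  have hp2 : n ≤ e2 + (m2 + k) := by
    rcases hattL (m2 + k) (by omega) htm with h1 | h1 <;> omega
  obtain ⟨e1', he1'⟩ : ∃ e1', e2 + (m2 + k) = n + e1' := ⟨e2 + (m2 + k) - n, by omega⟩
  have hBk : ∀ x ∈ B, x ≠ c k := by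
    rintro x hx rfl
    exact E.hub.disj _ hx (E.att _ (by rw [hr]; exact ⟨k, rfl⟩) htk)
  have hBm : ∀ x ∈ B, x ≠ c (m2 + k) := by
    rintro x hx rfl
    exact E.hub.disj _ hx (E.att _ (by rw [hr]; exact ⟨_, rfl⟩) htm)
  have hck : c k = f (e2 + k) := H.eq k (by omega)
  have hcm : c (m2 + k) = f e1' := by
    rw [H.eq _ (by omega), he1', add_comm, hcyc.2.1]
  by_cases hsame : k = 0 ∧ m2 = L
  · obtain ⟨rfl, rfl⟩ := hsame
    refine ⟨fun t h1 h2 => by simpa using E.mid t h1 h2, S, B, E.hub,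
      E.att _ ⟨0, rfl⟩ E.t0, E.att _ ⟨m2, rfl⟩ E.tm, ?_⟩
    intro x hx hxr
    exact E.sub x hx (Or.inl hxr)
  · exfalso
    have hst : State G w f n m M e1' (e2 + k) := by
      refine ⟨m2, h, n', fun i => c (i + k), n1, ?_⟩
      have hX : ∀ i, m2 < i → i < n1 → c (i + k) ∈ M := by
        intro i h1 h2
        rcases Nat.lt_or_ge L (i + k) with hj | hj
        · rcases Nat.lt_or_ge (i + k) n1 with hj' | hj'
          · exact H.inR _ hj hj'
          · rw [show i + k = (i + k - n1) + n1 by omega, T.h1.cyc.2.1, H.eq _ (by omega)]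
            exact K.ins C _ (by omega) (by omega)
        · rw [H.eq _ hj, show e2 + (i + k) = (e2 + (i + k) - n) + n by omega, hcyc.2.1]
          exact K.ins C _ (by omega) (by omega)
      refine ⟨by omega, hp1, ?_, by omega, gap_twin (T.h1.shift k)
        ((Twin.cmpt c c' L).shift T.h1.cyc k) E, ?_, ?_, hX, ?_⟩
      · rintro ⟨h1, h2⟩
        have hBM : B ⊆ M := by
          apply hub_sub C.w0 K.hub E.hub.conn _ E.hub.big
          rintro x hx (h3 | h3)
          · exact hBm x hx (by rw [hcm, h1]; exact h3)
          · exact hBk x hx (by rw [hck, h2]; exact h3)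
        obtain ⟨x, hxB, hx⟩ := bal_meets C.w0 T.h1.bal E.hub.conn E.hub.big
        obtain ⟨t, ht0, htm, rfl⟩ := E.sub x hxB (Or.inl (by rw [hr]; exact hx))
        have hM : c (t + k) ∈ M := hBM hxB
        rw [H.eq _ (by omega)] at hM
        exact K.out _ (by omega) (by omega) hM
      · intro i hi
        rw [E.eq i hi]
        show c (i + k) = _
        rw [H.eq _ (by omega)]
        congr 1; omega
      · intro i h1 h2
        exact hKM (E.ink i h1 h2)
      · rcases Nat.eq_zero_or_pos k with hk0 | hk0
        · refine ⟨e1, by omega, by omega, Or.inr ⟨L - k, by omega, by omega, ?_⟩⟩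
          show c (L - k + k) = _
          rw [show L - k + k = L by omega, H.eq L le_rfl, len, add_comm, hcyc.2.1]
        · refine ⟨e2, by omega, by omega, Or.inr ⟨n1 - k, by omega, by omega, ?_⟩⟩
          show c (n1 - k + k) = _
          rw [show n1 - k + k = n1 by omega, T.h1.cyc.per0, H.eq 0 (by omega), add_zero]
    have := hmax _ _ hst
    omega

lemma IsCyc.nonadj {f : ℕ → V} {n : ℕ} (h : IsCyc G f n) {i j : ℕ} (h1 : i + 2 ≤ j)
    (h2 : j + 2 ≤ i + n) : f i ≠ f j ∧ ¬ G.Adj (f i) (f j) := by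
  have := h.2.2 i j (by omega) (by omega)
  exact ⟨this.1, by rw [this.2]; omega⟩

lemma no_state (C : Ctx G w q) (K : Cut G w f n m M) :
    ∃ a b, State G w f n m M a b := by
  by_contra hno
  have hmn := K.mn
  have two := K.two
  have hcyc := K.hf.cyc
  obtain ⟨B, hB⟩ := hub4 C {f 0, f 1, f m} (le_trans (Set.ncard_insert_le _ _)
    (le_trans (Nat.add_le_add_right (Set.ncard_insert_le _ _) 1) (by simp)))
  have hBM : B ⊆ M := by
    apply hub_sub C.w0 K.hub hB.conn _ hB.big
    rintro x hx (rfl | rfl)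
    · exact hB.disj _ hx (by simp)
    · exact hB.disj _ hx (by simp)
  obtain ⟨x, hxB, hx⟩ := bal_meets C.w0 K.hf.bal hB.conn hB.big
  obtain ⟨i, _, hin, rfl⟩ := hcyc.window hx 0
  have hi := K.idx (by omega) (hBM hxB)
  have hi1 : i ≠ 1 := by rintro rfl; exact hB.disj _ hxB (by simp)
  rcases arc_lemma C K.hf (p := 1) (r := m) (by omega) hB.conn hB.big (by
    rintro x hx (rfl | rfl)
    · exact hB.disj _ hx (by simp)
    · exact hB.disj _ hx (by simp)) (t := i) (by omega) (by omega) hxB with h | h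
  · exact K.minC _ (by omega) h
  · obtain ⟨D, j, s, hD, hj1, hjm, hj, hs1, hs2, hs⟩ := h
    have hDM := K.cmp_sub C hD (by omega) hjm hj
    have hsn : s = n := by
      by_contra hne
      have := K.att (by omega) hDM hs
      omega
    subst hsn
    rw [hcyc.per0] at hs
    have hna := hcyc.nonadj (i := 0) (j := j) (by omega) (by omega)
    obtain ⟨a, b, h, _⟩ := init_state C K hD (by omega) hjm hj
      ⟨_, ⟨0, rfl⟩, _, ⟨j, rfl⟩, hna.1, hna.2, hs, hj⟩
    exact hno ⟨a, b, h⟩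

lemma lemma_ii (C : Ctx G w q) (K : Cut G w f n m M) : False := by
  classical
  have hmn := K.mn
  have two := K.two
  have hcyc := K.hf.cyc
  obtain ⟨e1, e2, ⟨L, c, n1, c', n2, H⟩, hmax⟩ : ∃ e1 e2, State G w f n m M e1 e2 ∧
      ∀ a b, State G w f n m M a b → b - a ≤ e2 - e1 := by
    have hex : ∃ d, ∃ a b, State G w f n m M a b ∧ m - (b - a) = d := by
      obtain ⟨a, b, h⟩ := no_state C K
      exact ⟨_, a, b, h, rfl⟩
    obtain ⟨a, b, h, hd⟩ := Nat.find_spec hex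
    refine ⟨a, b, h, fun a' b' h' => ?_⟩
    by_contra hlt
    refine Nat.find_min hex (m := m - (b' - a')) ?_ ⟨a', b', h', rfl⟩
    obtain ⟨_, _, _, _, _, H'⟩ := h'
    have := H'.le
    omega
  have gap := H.gap
  have le := H.le
  have len := H.len
  have T := H.tw
  have tl1 := T.l1
  have tl2 := T.l2
  obtain ⟨ha, S, B, hB, hS0, hSL, hBs⟩ := max_step C K H hmax
  obtain ⟨hb, -⟩ := max_step C K H.symm hmax
  have hcl := twin_closed T ha (by
    intro t h1 h2; rw [T.eq t (by omega)]; exact hb t h1 h2)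
  have hdj := twin_disj T
  set Q := KT G c c' L ∪ KT G c' c L with hQdef
  have hc0 : c 0 = f e2 := by rw [H.eq 0 (by omega), add_zero]
  have hcL : c L = f e1 := by rw [H.eq L le_rfl, len, add_comm, hcyc.2.1]
  rw [hc0, hcL] at hcl
  have hcov : ∀ i, e1 < i → i < e2 → f i ∈ Q := by
    obtain ⟨t, ht1, ht2, ht⟩ := H.cov
    refine interval_sub hcyc.adj_succ hcl ?_ ht1 ht2 ?_
    · rintro i h1 h2 (h3 | h3)
      · exact hcyc.ne h2 (by omega) h3
      · exact hcyc.ne h1 (by omega) h3.symm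
    · rcases ht with ⟨i, h1, h2, h3⟩ | ⟨i, h1, h2, h3⟩
      · rw [← h3]; exact Or.inr (T.symm.inK i h1 h2)
      · rw [← h3]; exact Or.inl (T.inK i h1 h2)
  have hOut1 : ∀ i, i < e1 → f i ∉ Q := by
    intro i h1
    have := hdj (i + n - e2) (by omega)
    rwa [H.eq _ (by omega), show e2 + (i + n - e2) = i + n by omega, hcyc.2.1] at this
  have hOut2 : ∀ i, e2 < i → i < n → f i ∉ Q := by
    intro i h1 h2
    have := hdj (i - e2) (by omega)
    rwa [H.eq _ (by omega), show e2 + (i - e2) = i by omega] at this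
  obtain ⟨B', hB'⟩ := hub2 C (f e2) (f e1)
  have hBB : B ⊆ B' := by
    apply hub_sub C.w0 hB' hB.conn _ hB.big
    rintro x hx (rfl | rfl)
    · exact hB.disj _ hx (hc0 ▸ hS0)
    · exact hB.disj _ hx (hcL ▸ hSL)
  have hB'Q : ∀ y ∈ B', y ∉ Q := by
    intro y hy hyQ
    obtain ⟨x, hxB, hx⟩ := bal_meets C.w0 T.h1.bal hB.conn hB.big
    obtain ⟨t, h1, h2, rfl⟩ := hBs x hxB hx
    exact hdj t (by omega) (cn_sub hB'.conn hB'.disj hcl hy hyQ (hBB hxB))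
  obtain ⟨B4, hB4⟩ := hub4 C {f 0, f m, f e1, f e2} (le_trans (Set.ncard_insert_le _ _)
    (Nat.add_le_add_right (le_trans (Set.ncard_insert_le _ _)
    (Nat.add_le_add_right (le_trans (Set.ncard_insert_le _ _)
    (by simp : _ ≤ 2)) 1)) 1))
  have hBM : B4 ⊆ M := by
    apply hub_sub C.w0 K.hub hB4.conn _ hB4.big
    rintro x hx (rfl | rfl)
    · exact hB4.disj _ hx (by simp)
    · exact hB4.disj _ hx (by simp)
  have hB4' : B4 ⊆ B' := by
    apply hub_sub C.w0 hB' hB4.conn _ hB4.big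
    rintro x hx (rfl | rfl)
    · exact hB4.disj _ hx (by simp)
    · exact hB4.disj _ hx (by simp)
  -- a component attached both inside `(e1,e2)` and to `f i` outside is impossible
  have hDQ : ∀ D i s, Cmpt G f D → Tch G D (f i) → Tch G D (f s) → e1 < s → s < e2 →
      (i < e1 ∨ e2 < i ∧ i < n) → False := by
    rintro D i s hD ⟨v, hv, hvi⟩ ⟨u, hu, hus⟩ h1 h2 h3
    have hd : ∀ x ∈ D, x ∉ ({f e2, f e1} : Set V) := by
      rintro x hx (rfl | rfl) <;> exact hD.disj _ hx ⟨_, rfl⟩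
    have hsub : D ⊆ Q := cn_sub hD.conn hd hcl hu
      (hcl _ (hcov s h1 h2) u (hd u hu) hus.symm)
    have hiQ : f i ∈ Q := by
      refine hcl v (hsub hv) _ ?_ hvi
      rintro (h4 | h4)
      · rcases h3 with h3 | ⟨h3, h3'⟩
        · exact hcyc.ne (show i < e2 by omega) (by omega) h4
        · exact hcyc.ne h3 (by omega) h4.symm
      · rcases h3 with h3 | ⟨h3, h3'⟩
        · exact hcyc.ne h3 (by omega) h4
        · exact hcyc.ne (show e1 < i by omega) (by omega) h4.symm
    rcases h3 with h3 | ⟨h3, h3'⟩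
    · exact hOut1 i h3 hiQ
    · exact hOut2 i h3 h3' hiQ
  obtain ⟨x, hxB, hx⟩ := bal_meets C.w0 K.hf.bal hB4.conn hB4.big
  obtain ⟨i, _, hin, rfl⟩ := hcyc.window hx 0
  have hi := K.idx (by omega) (hBM hxB)
  have hi1 : i ≠ e1 := by rintro rfl; exact hB4.disj _ hxB (by simp)
  have hi2 : i ≠ e2 := by rintro rfl; exact hB4.disj _ hxB (by simp)
  have hi3 : ¬ (e1 < i ∧ i < e2) := fun h => hB'Q _ (hB4' hxB) (hcov i h.1 h.2)
  rcases Nat.lt_or_ge i e1 with hcase | hcase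
  · rcases arc_lemma C K.hf (p := 0) (r := e1) (by omega) hB4.conn hB4.big (by
      rintro x hx (rfl | rfl)
      · exact hB4.disj _ hx (by simp)
      · exact hB4.disj _ hx (by simp)) (t := i) hi.1 hcase hxB with h | h
    · exact K.minC _ (by omega) h
    · obtain ⟨D, j, s, hD, hj1, hjm, hj, hs1, hs2, hs⟩ := h
      have hDM := K.cmp_sub C hD hj1 (by omega) hj
      have hsm := K.att (by omega) hDM hs
      have hse : e2 ≤ s := by
        by_contra hlt
        exact hDQ D j s hD hj hs hs1 (by omega) (Or.inl hjm)
      have hna := hcyc.nonadj (i := j) (j := s) (by omega) (by omega)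
      obtain ⟨a, b, h, hab⟩ := init_state C K hD hj1 (by omega) hj
        ⟨_, ⟨j, rfl⟩, _, ⟨s, rfl⟩, hna.1, hna.2, hj, hs⟩
      have h1 := hab j (by omega) hj
      have h2 := hab s hsm hs
      have := hmax a b h
      omega
  · rcases arc_lemma C K.hf (p := e2) (r := m) (by omega) hB4.conn hB4.big (by
      rintro x hx (rfl | rfl)
      · exact hB4.disj _ hx (by simp)
      · exact hB4.disj _ hx (by simp)) (t := i) (by omega) hi.2 hxB with h | h
    · exact K.minC _ (by omega) h
    · obtain ⟨D, j, s, hD, hj1, hjm, hj, hs1, hs2, hs⟩ := h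
      have hDM := K.cmp_sub C hD (by omega) hjm hj
      have hsn : n ≤ s := by
        by_contra hlt
        have := K.att (by omega) hDM hs
        omega
      obtain ⟨s', rfl⟩ : ∃ s', s = s' + n := ⟨s - n, by omega⟩
      rw [hcyc.2.1] at hs
      have hse : s' ≤ e1 := by
        by_contra hlt
        exact hDQ D j s' hD hj hs (by omega) (by omega) (Or.inr ⟨hj1, by omega⟩)
      have hna := hcyc.nonadj (i := s') (j := j) (by omega) (by omega)
      obtain ⟨a, b, h, hab⟩ := init_state C K hD (by omega) hjm hj
        ⟨_, ⟨s', rfl⟩, _, ⟨j, rfl⟩, hna.1, hna.2, hs, hj⟩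
      have h1 := hab j (by omega) hj
      have h2 := hab s' (by omega) hs
      have := hmax a b h
      omega

lemma no_heavy (C : Ctx G w q) {f : ℕ → V} {n : ℕ} (hf : HC G w f n) : False := by
  classical
  have hn := hf.cyc.1
  have hex : ∃ m, CutP G w m ∨ ThetaP G w m := by
    obtain ⟨B, hB⟩ := hub2 C (f 0) (f (n - 1))
    refine ⟨n - 1, Or.inl ⟨f, n, B, hf, by omega, by omega, hB, ?_⟩⟩
    intro x hx hxr
    obtain ⟨i, _, hi, rfl⟩ := hf.cyc.window hxr 0
    have h0 : i ≠ 0 := by rintro rfl; exact hB.disj _ hx (by simp)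
    have h1 : i ≠ n - 1 := by rintro rfl; exact hB.disj _ hx (by simp)
    exact ⟨i, by omega, by omega, rfl⟩
  have hmin := fun m (hm : m < Nat.find hex) => Nat.find_min hex hm
  have hC : CutP G w (Nat.find hex) := by
    rcases Nat.find_spec hex with h | h
    · exact h
    · exact lemma_i C h fun m hm h' => hmin m hm (Or.inr h')
  obtain ⟨g, k, M, hg, h2, hmn, hub, hsub⟩ := hC
  exact lemma_ii C ⟨hg, h2, hmn, hub, hsub, fun m hm h => hmin m hm (Or.inl h),
    fun m hm h => hmin m hm (Or.inr h)⟩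

end cut

section phase1
variable [Finite V] {G : SimpleGraph V} {w : V → ℝ} {q : ℕ}

lemma gyarfas (C : Ctx G w q) :
    ∃ j p, IndPath G p j ∧ IsBalancedSep G w (closedNbhd G (p '' {i | i < j + 1})) := by
  by_contra hno
  push Not at hno
  have inv : ∀ j, ∃ p B, IndPath G p j ∧ Hub G w (closedNbhd G (p '' {i | i < j})) B ∧
      (p j ∈ B ∨ Tch G B (p j)) := by
    intro j
    induction j with
    | zero =>
      obtain ⟨B, hB⟩ := hub4 C ∅ (by simp)
      obtain ⟨x, hx⟩ := big_ne C.w0 hB.big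
      refine ⟨fun _ => x, B, ?_, ?_, Or.inl hx⟩
      · intro i j h1 h2; omega
      · have : closedNbhd G ((fun _ : ℕ => x) '' {i | i < 0}) = ∅ := by
          simp [closedNbhd]
        rw [this]; exact hB
    | succ j ih =>
      obtain ⟨p, B, hp, hB, hpB⟩ := ih
      obtain ⟨B', hB'⟩ := hub_of_not_bal (hno j p hp)
      have hmem : ∀ i ≤ j, p i ∈ p '' {i | i < j + 1} :=
        fun i hi => ⟨i, by simp only [Set.mem_ofPred_eq]; omega, rfl⟩
      have hnb : ∀ u ∈ B', ∀ i ≤ j, ¬ G.Adj (p i) u := fun u hu i hi h =>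
        hB'.disj u hu (Or.inr ⟨p i, hmem i hi, h⟩)
      have hsub : B' ⊆ B := by
        apply hub_sub C.w0 hB hB'.conn _ hB'.big
        rintro x hx (⟨i, hi, rfl⟩ | ⟨_, ⟨i, hi, rfl⟩, h⟩)
        · have hi : i < j := hi
          exact hB'.disj _ hx (Or.inl (hmem i (by omega)))
        · have hi : i < j := hi
          exact hnb _ hx i (by omega) h
      have hpj : p j ∉ B' := fun h => hB'.disj _ h (Or.inl (hmem j le_rfl))
      obtain ⟨x, hx⟩ := big_ne C.w0 hB'.big
      obtain ⟨u, -, v, hv, huB, hvB, huv⟩ := cn_insert hB.conn hpB B'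
        ⟨x, Or.inr (hsub hx), hx⟩ ⟨p j, Or.inl rfl, hpj⟩
      have hvne : v ≠ p j := by
        rintro rfl
        exact hnb u huB j le_rfl huv.symm
      have hvBB : v ∈ B := by
        rcases hv with hv | hv
        · exact absurd hv hvne
        · exact hv
      have hvn : v ∉ closedNbhd G (p '' {i | i < j}) := hB.disj v hvBB
      have hvi : ∀ i < j, p i ≠ v ∧ ¬ G.Adj (p i) v := fun i hi =>
        ⟨fun h => hvn (Or.inl ⟨i, hi, h⟩), fun h => hvn (Or.inr ⟨_, ⟨i, hi, rfl⟩, h⟩)⟩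
      have hvj : G.Adj (p j) v := by
        by_contra hna
        apply hvB
        refine hB'.closed u huB v ?_ huv
        rintro (⟨i, hi, h⟩ | ⟨_, ⟨i, hi, rfl⟩, h⟩)
        · have hi : i < j + 1 := hi
          rcases Nat.lt_or_ge i j with h1 | h1
          · exact (hvi i h1).1 h
          · rw [show i = j by omega] at h; exact hvne h.symm
        · have hi : i < j + 1 := hi
          rcases Nat.lt_or_ge i j with h1 | h1
          · exact (hvi i h1).2 h
          · rw [show i = j by omega] at h; exact hna h
      let p' : ℕ → V := fun i => if i ≤ j then p i else v
      have hp1 : ∀ i ≤ j, p' i = p i := fun i hi => by simp [p', hi]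
      have hp2 : p' (j + 1) = v := by simp [p']
      have himg : Set.image p' {i | i < j + 1} = p '' {i | i < j + 1} := by
        apply Set.image_congr
        intro i hi
        have hi : i < j + 1 := hi
        exact hp1 i (by omega)
      refine ⟨p', B', ?_, by rw [himg]; exact hB', Or.inr ⟨u, huB, by rw [hp2]; exact huv⟩⟩
      intro a b hab hb
      rcases Nat.lt_or_ge j b with h1 | h1
      · have hbj : b = j + 1 := by omega
        subst hbj
        rw [hp2, hp1 a (by omega)]
        rcases Nat.lt_or_ge a j with h2 | h2
        · exact ⟨(hvi a h2).1, iff_of_false (hvi a h2).2 (by omega)⟩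
        · have : a = j := by omega
          subst this
          exact ⟨hvne.symm, iff_of_true hvj rfl⟩
      · rw [hp1 a (by omega), hp1 b h1]
        exact hp a b hab h1
  obtain ⟨p, B, hp, -, -⟩ := inv (Nat.card V)
  have hinj : Function.Injective (fun i : Fin (Nat.card V + 1) => p i) := by
    intro a b hab
    have hab : p a = p b := hab
    rcases lt_trichotomy (a : ℕ) b with h | h | h
    · exact absurd hab (hp a b h (by omega)).1
    · exact Fin.ext h
    · exact absurd hab.symm (hp b a h (by omega)).1
  have := Nat.card_le_card_of_injective _ hinj
  simp at this

lemma cN_mono {A A' : Set V} (h : A ⊆ A') : closedNbhd G A ⊆ closedNbhd G A' := by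
  rintro x (hx | ⟨a, ha, hax⟩)
  · exact Or.inl (h hx)
  · exact Or.inr ⟨a, h ha, hax⟩

lemma heavy_of_path (C : Ctx G w q) {p : ℕ → V} {j : ℕ}
    (hbal : IsBalancedSep G w (closedNbhd G (p '' {i | i < j + 1})))
    {h : ℕ → V} {n : ℕ} (hh : IsCyc G h n) (heq : ∀ i ≤ j, h i = p i) : HC G w h n := by
  refine ⟨hh, ?_⟩
  by_contra hnb
  obtain ⟨B, hB⟩ := hub_of_not_bal hnb
  have hT := fact_a C.hq C.free hh hB.conn hB.disj
  obtain ⟨B', hB'⟩ := hub_of_not_bal (C.dom {x | x ∈ Set.range h ∧ Tch G B x} (by omega))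
  obtain ⟨y, hy, hy'⟩ := big_inter C.w0 hB'.big hB.big
  have hsub : B' ⊆ B := by
    refine cn_sub (S := {x | x ∈ Set.range h ∧ Tch G B x}) hB'.conn
      (fun x hx hxT => hB'.disj x hx (Or.inl hxT)) ?_ hy hy'
    intro u hu x hx hux
    by_contra hxB
    by_cases hxr : x ∈ Set.range h
    · exact hx ⟨hxr, u, hu, hux⟩
    · exact hxB (hB.closed u hu x hxr hux)
  refine bal_not_big C.w0 hbal hB'.conn hB'.big ?_
  rintro x hx (⟨i, hi, rfl⟩ | ⟨_, ⟨i, hi, rfl⟩, hix⟩)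
  · have hi : i < j + 1 := hi
    exact hB.disj _ (hsub hx) ⟨i, heq i (by omega)⟩
  · have hi : i < j + 1 := hi
    exact hB'.disj x hx (Or.inr ⟨p i, ⟨⟨i, heq i (by omega)⟩, x, hsub hx, hix.symm⟩, hix⟩)

lemma exists_heavy (C : Ctx G w q) : ∃ f n, HC G w f n := by
  classical
  have hex := gyarfas C
  obtain ⟨p, hp, hbal⟩ := Nat.find_spec hex
  have hmin := fun m (hm : m < Nat.find hex) => Nat.find_min hex hm
  set j := Nat.find hex
  clear_value j
  have hq := C.hq
  have hjq : q < j := by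
    by_contra hle
    refine C.dom (p '' {i | i < j + 1}) ?_ hbal
    refine le_trans (Set.ncard_image_le (Set.finite_lt_nat _)) ?_
    have : {i | i < j + 1} = (↑(Finset.range (j + 1)) : Set ℕ) := by ext; simp
    rw [this, Set.ncard_coe_finset, Finset.card_range]; omega
  -- the three hubs
  have himg : ∀ b, 1 ≤ b → (fun i => p (i + 1)) '' {i | i < b - 1 + 1} =
      p '' {i | 1 ≤ i ∧ i < b + 1} := by
    intro b hb
    ext x
    constructor
    · rintro ⟨i, hi, rfl⟩
      have hi : i < b - 1 + 1 := hi
      exact ⟨i + 1, ⟨by omega, by omega⟩, rfl⟩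
    · rintro ⟨i, ⟨h1, h2⟩, rfl⟩
      refine ⟨i - 1, by simp only [Set.mem_ofPred_eq]; omega, ?_⟩
      show p (i - 1 + 1) = p i
      congr 1; omega
  have hps : ∀ b, 1 ≤ b → b ≤ j → IndPath G (fun i => p (i + 1)) (b - 1) := by
    intro b hb hbj s t hst ht
    have := hp (s + 1) (t + 1) (by omega) (by omega)
    exact ⟨this.1, this.2.trans (by omega)⟩
  have hnb : ∀ b, 1 ≤ b → b ≤ j → ¬ IsBalancedSep G w (closedNbhd G (p '' {i | 1 ≤ i ∧ i < b + 1})) := by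
    intro b hb hbj h
    refine hmin (b - 1) (by omega) ⟨_, hps b hb hbj, ?_⟩
    rw [himg b hb]; exact h
  obtain ⟨B, hB⟩ := hub_of_not_bal (hnb (j - 1) (by omega) (by omega))
  obtain ⟨B2, hB2⟩ := hub_of_not_bal (hnb j (by omega) le_rfl)
  obtain ⟨B1, hB1⟩ : ∃ B1, Hub G w (closedNbhd G (p '' {i | i < j - 1 + 1})) B1 := by
    apply hub_of_not_bal
    intro h
    exact hmin (j - 1) (by omega) ⟨p, fun s t hst ht => hp s t hst (by omega), h⟩
  have padj : ∀ i, i < j → G.Adj (p i) (p (i + 1)) := fun i hi =>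
    (hp i (i + 1) (by omega) (by omega)).2.2 rfl
  have hB2s : B2 ⊆ B := by
    refine hub_sub C.w0 hB hB2.conn (fun x hx hx' => hB2.disj x hx (cN_mono ?_ hx')) hB2.big
    rintro _ ⟨i, ⟨h1, h2⟩, rfl⟩
    exact ⟨i, ⟨h1, by omega⟩, rfl⟩
  have hB1s : B1 ⊆ B := by
    refine hub_sub C.w0 hB hB1.conn (fun x hx hx' => hB1.disj x hx (cN_mono ?_ hx')) hB1.big
    rintro _ ⟨i, ⟨h1, h2⟩, rfl⟩
    exact ⟨i, h2, rfl⟩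
  have h0 : Tch G B (p 0) := by
    by_contra hnt
    refine bal_not_big C.w0 hbal hB2.conn hB2.big ?_
    rintro x hx (⟨i, hi, rfl⟩ | ⟨_, ⟨i, hi, rfl⟩, hix⟩)
    · have hi : i < j + 1 := hi
      rcases Nat.eq_zero_or_pos i with h1 | h1
      · subst h1
        exact hB2.disj _ hx (Or.inr ⟨p 1, ⟨1, ⟨le_rfl, by omega⟩, rfl⟩, (padj 0 (by omega)).symm⟩)
      · exact hB2.disj _ hx (Or.inl ⟨i, ⟨h1, hi⟩, rfl⟩)
    · have hi : i < j + 1 := hi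
      rcases Nat.eq_zero_or_pos i with h1 | h1
      · subst h1
        exact hnt ⟨x, hB2s hx, hix.symm⟩
      · exact hB2.disj _ hx (Or.inr ⟨p i, ⟨i, ⟨h1, hi⟩, rfl⟩, hix⟩)
  have h1 : Tch G B (p j) := by
    by_contra hnt
    refine bal_not_big C.w0 hbal hB1.conn hB1.big ?_
    rintro x hx (⟨i, hi, rfl⟩ | ⟨_, ⟨i, hi, rfl⟩, hix⟩)
    · have hi : i < j + 1 := hi
      by_cases h1 : i = j
      · subst h1
        refine hB1.disj _ hx (Or.inr ⟨p (i - 1), ⟨i - 1, ?_, rfl⟩, ?_⟩)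
        · show i - 1 < i - 1 + 1
          omega
        · have := padj (i - 1) (by omega)
          rwa [show i - 1 + 1 = i by omega] at this
      · exact hB1.disj _ hx (Or.inl ⟨i, show i < j - 1 + 1 by omega, rfl⟩)
    · have hi : i < j + 1 := hi
      by_cases h1 : i = j
      · subst h1
        exact hnt ⟨x, hB1s hx, hix.symm⟩
      · exact hB1.disj _ hx (Or.inr ⟨p i, ⟨i, show i < j - 1 + 1 by omega, rfl⟩, hix⟩)
  obtain ⟨h, n, hh, _, heq, _⟩ := close_path hB.conn (m := j) (by omega) hp (by
      intro i hi hiB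
      rcases Nat.eq_zero_or_pos i with h2 | h2
      · subst h2
        exact hB.disj _ hiB (Or.inr ⟨p 1, ⟨1, ⟨le_rfl, by omega⟩, rfl⟩, (padj 0 (by omega)).symm⟩)
      · by_cases h3 : i = j
        · subst h3
          refine hB.disj _ hiB (Or.inr ⟨p (i - 1), ⟨i - 1, ⟨by omega, by omega⟩, rfl⟩, ?_⟩)
          have := padj (i - 1) (by omega)
          rwa [show i - 1 + 1 = i by omega] at this
        · exact hB.disj _ hiB (Or.inl ⟨i, ⟨h2, by omega⟩, rfl⟩)) h0 h1 (by
      rintro i h2 h3 ⟨u, hu, hui⟩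
      exact hB.disj u hu (Or.inr ⟨p i, ⟨i, ⟨h2, by omega⟩, rfl⟩, hui.symm⟩))
  exact ⟨h, n, heavy_of_path C hbal hh heq⟩

end phase1


/-- weighted main theorem for `W_ℓ`-induced-minor-free graphs. -/
theorem main_weighted [Finite V] (G : SimpleGraph V) (ℓ : ℕ) (hℓ : 3 ≤ ℓ)
    (hfree : ¬ IsInducedMinor (wheel ℓ) G)
    (w : V → ℝ) (hw0 : ∀ v, 0 ≤ w v) :
    ∃ S : Set V, IsBalancedSep G w S ∧
      ((∃ D : Set V, D.ncard ≤ ℓ ∧ S ⊆ closedNbhd G D) ∨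
        S.ncard ≤ (ℓ - 1) ^ 2) := by
  by_contra hno
  push Not at hno
  have C : Ctx G w (ℓ - 1) := by
    refine ⟨by omega, ?_, hw0, ?_, ?_⟩
    · rw [show ℓ - 1 + 1 = ℓ by omega]; exact hfree
    · intro S hS hb
      exact absurd hS (not_le.2 (hno S hb).2)
    · intro D hD hb
      exact (hno _ hb).1 D (by omega) (le_refl _)
  obtain ⟨f, n, hf⟩ := exists_heavy C
  exact no_heavy C hf
end

section
/- For every integer ℓ ≥ 3, there exists an integer k (one may take k = (ℓ-1)²) such that every finite graph G not containing the ℓ-wheel W_ℓ as an induced minor has a balanced separator dominated by at most k vertices; that is, there exist S, D ⊆ V(G) with |D| ≤ k, S ⊆ N[D], and every connected component of G - S containing at most |V(G)|/2 vertices. -/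
open SimpleGraph

variable {V : Type}

namespace WheelSep

/-- `A` is a nonempty connected vertex set (closure formulation). -/
def ConnSet (G : SimpleGraph V) (A : Set V) : Prop :=
  A.Nonempty ∧ ∀ T : Set V, (∃ x ∈ A, x ∈ T) →
    (∀ x ∈ A, x ∈ T → ∀ y ∈ A, G.Adj x y → y ∈ T) → A ⊆ T

/-- `B` avoids the closed neighbourhood of `D`. -/
def Anti (G : SimpleGraph V) (B D : Set V) : Prop :=
  ∀ x ∈ B, ∀ d ∈ D, x ≠ d ∧ ¬ G.Adj d x

/-- `B` is a majority component of `G - N[D]`. -/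
structure IsBig (G : SimpleGraph V) (D B : Set V) : Prop where
  conn : ConnSet G B
  big : Nat.card V < 2 * B.ncard
  avoid : Anti G B D
  closed : ∀ x ∈ B, ∀ y, G.Adj x y → y ∈ B ∨ ∃ d ∈ D, y = d ∨ G.Adj d y

/-- `A` can be separated from the majority component by the closed neighbourhood of at most
`t` vertices. -/
def Small (G : SimpleGraph V) (t : ℕ) (A : Set V) : Prop :=
  ∃ D : Set V, D.ncard ≤ t ∧ ∃ B, IsBig G D B ∧ Anti G B A

/-- A periodic parametrisation of an induced cycle of length `n`. -/
structure Cyc (G : SimpleGraph V) (f : ℤ → V) (n : ℤ) : Prop where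
  three : 3 ≤ n
  per : ∀ i, f (i + n) = f i
  inj : ∀ i j, i < j → j < i + n → f i ≠ f j
  adj : ∀ i, G.Adj (f i) (f (i + 1))
  nonadj : ∀ i j, i + 1 < j → j + 1 < i + n → ¬ G.Adj (f i) (f j)

/-- `v` has a neighbour in `Y`. -/
def Att (G : SimpleGraph V) (Y : Set V) (v : V) : Prop := ∃ y ∈ Y, G.Adj y v

/-- The arc of `f` between `i` and `j`. -/
def arc (f : ℤ → V) (i j : ℤ) : Set V := {x | ∃ t, i ≤ t ∧ t ≤ j ∧ f t = x}

lemma ConnSet.sub {G : SimpleGraph V} {A : Set V} (h : ConnSet G A) {T : Set V}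
    {x : V} (hx : x ∈ A) (hxT : x ∈ T)
    (hc : ∀ x ∈ A, x ∈ T → ∀ y ∈ A, G.Adj x y → y ∈ T) : A ⊆ T :=
  h.2 T ⟨x, hx, hxT⟩ hc

lemma connSet_singleton (G : SimpleGraph V) (x : V) : ConnSet G {x} := by
  refine ⟨⟨x, rfl⟩, ?_⟩
  rintro T ⟨y, rfl, hy⟩ _ z rfl
  exact hy

lemma ConnSet.insert {G : SimpleGraph V} {A : Set V} (h : ConnSet G A) {a : V}
    (ha : ∃ x ∈ A, G.Adj a x) : ConnSet G (insert a A) := by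
  obtain ⟨x, hx, hax⟩ := ha
  refine ⟨⟨a, Or.inl rfl⟩, ?_⟩
  rintro T ⟨y, hy, hyT⟩ hc
  have hA : A ⊆ T := by
    have hcA : ∀ x ∈ A, x ∈ T → ∀ y ∈ A, G.Adj x y → y ∈ T :=
      fun x hx hxT y hy hxy => hc x (Or.inr hx) hxT y (Or.inr hy) hxy
    rcases hy with rfl | hy
    · exact h.sub hx (hc y (Or.inl rfl) hyT x (Or.inr hx) hax) hcA
    · exact h.sub hy hyT hcA
  rintro z (rfl | hz)
  · exact hc x (Or.inr hx) (hA hx) z (Or.inl rfl) hax.symm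
  · exact hA hz

lemma ConnSet.toConnected {G : SimpleGraph V} {A : Set V} (h : ConnSet G A) :
    (G.induce A).Connected := by
  rw [SimpleGraph.connected_iff]
  refine ⟨?_, h.1.to_subtype⟩
  rintro ⟨x, hx⟩ ⟨y, hy⟩
  have := h.sub (T := {z | ∃ hz : z ∈ A, (G.induce A).Reachable ⟨x, hx⟩ ⟨z, hz⟩}) hx
    ⟨hx, SimpleGraph.Reachable.refl _⟩ (by
      rintro a ha ⟨_, har⟩ b hb hab
      refine ⟨hb, har.trans (SimpleGraph.Adj.reachable ?_)⟩
      simpa using hab)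
  exact (this hy).2

lemma reach_conn (G : SimpleGraph V) (S : Set V) {v : V} (hv : v ∉ S) :
    ConnSet G {u | ReachOutside G S u v} := by
  have hvv : ReachOutside G S v v := ⟨SimpleGraph.Walk.nil, by simpa using hv⟩
  refine ⟨⟨v, hvv⟩, ?_⟩
  rintro T ⟨x, hx, hxT⟩ hc
  have key : ∀ (a b : V) (p : G.Walk a b), (∀ z ∈ p.support, z ∉ S) →
      ReachOutside G S b v → (a ∈ T ↔ b ∈ T) := by
    intro a b p
    induction p with
    | nil => intros; rfl
    | @cons a b c hab q ih =>
      intro hp hb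
      have hq : ∀ z ∈ q.support, z ∉ S := fun z hz => hp z (by simp [hz])
      have h1 : ReachOutside G S b v := by
        obtain ⟨r, hr⟩ := hb
        refine ⟨q.append r, ?_⟩
        intro z hz
        rw [SimpleGraph.Walk.mem_support_append_iff] at hz
        rcases hz with hz | hz
        · exact hq z hz
        · exact hr z hz
      have h2 : ReachOutside G S a v := by
        obtain ⟨r, hr⟩ := h1
        refine ⟨SimpleGraph.Walk.cons hab r, ?_⟩
        intro z hz
        rw [SimpleGraph.Walk.support_cons] at hz
        rcases List.mem_cons.1 hz with rfl | hz
        · exact hp z (by simp)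
        · exact hr z hz
      rw [← ih hq hb]
      exact ⟨fun h => hc a h2 h b h1 hab, fun h => hc b h1 h a h2 hab.symm⟩
  have hvT : v ∈ T := by
    obtain ⟨p, hp⟩ := hx
    exact (key x v p hp hvv).1 hxT
  intro y hy
  obtain ⟨p, hp⟩ := hy
  exact (key y v p hp hvv).2 hvT

lemma reach_avoid (G : SimpleGraph V) (S : Set V) {u v : V} (h : ReachOutside G S u v) :
    u ∉ S := by
  obtain ⟨p, hp⟩ := h
  exact hp u (by simp)

lemma reach_closed (G : SimpleGraph V) (S : Set V) {u v w : V} (h : ReachOutside G S u v)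
    (huw : G.Adj u w) : ReachOutside G S w v ∨ w ∈ S := by
  by_cases hw : w ∈ S
  · exact Or.inr hw
  · left
    obtain ⟨p, hp⟩ := h
    refine ⟨SimpleGraph.Walk.cons huw.symm p, ?_⟩
    intro z hz
    rw [SimpleGraph.Walk.support_cons] at hz
    rcases List.mem_cons.1 hz with rfl | hz
    · exact hw
    · exact hp z hz

lemma exists_comp (G : SimpleGraph V) (S Z : Set V) (hZ : ConnSet G Z)
    (hd : ∀ z ∈ Z, z ∉ S) :
    ∃ Y, Z ⊆ Y ∧ ConnSet G Y ∧ (∀ y ∈ Y, y ∉ S) ∧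
      ∀ x ∈ Y, ∀ y, G.Adj x y → y ∈ Y ∨ y ∈ S := by
  obtain ⟨z, hz⟩ := hZ.1
  refine ⟨{u | ReachOutside G S u z}, ?_, reach_conn G S (hd z hz), ?_, ?_⟩
  · refine hZ.sub hz ⟨SimpleGraph.Walk.nil, by simpa using hd z hz⟩ ?_
    intro x _ hxT y hy hxy
    rcases reach_closed G S hxT hxy with h | h
    · exact h
    · exact absurd h (hd y hy)
  · intro y hy; exact reach_avoid G S hy
  · intro x hx y hxy; exact reach_closed G S hx hxy

section Big
variable [Finite V] {G : SimpleGraph V}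

lemma big_meet {B B' : Set V} (h : Nat.card V < 2 * B.ncard) (h' : Nat.card V < 2 * B'.ncard) :
    ∃ x ∈ B, x ∈ B' := by
  by_contra hcon
  push Not at hcon
  have hd : Disjoint B B' := Set.disjoint_left.2 hcon
  have h1 := Set.ncard_union_eq hd (Set.toFinite _) (Set.toFinite _)
  have h2 : (B ∪ B').ncard ≤ Nat.card V := by
    rw [← Set.ncard_univ]; exact Set.ncard_le_ncard (Set.subset_univ _) (Set.toFinite _)
  omega

lemma IsBig.sub_of_meet {D B A : Set V} (h : IsBig G D B) (hA : ConnSet G A)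
    (hD : Anti G A D) {x : V} (hx : x ∈ A) (hxB : x ∈ B) : A ⊆ B := by
  refine hA.sub hx hxB ?_
  intro a _ haB y hy hay
  rcases h.closed a haB y hay with h1 | ⟨d, hd, h1 | h1⟩
  · exact h1
  · exact absurd h1 (hD y hy d hd).1
  · exact absurd h1 (hD y hy d hd).2

lemma IsBig.mono {D B D' B' : Set V} (h : IsBig G D B) (h' : IsBig G D' B') (hD : D ⊆ D') :
    B' ⊆ B := by
  obtain ⟨x, hx, hx'⟩ := big_meet h.big h'.big
  exact h.sub_of_meet h'.conn (fun a ha d hd => h'.avoid a ha d (hD hd)) hx' hx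

lemma Small.mono {t t' : ℕ} {A A' : Set V} (h : Small G t A) (ht : t ≤ t') (hA : A' ⊆ A) :
    Small G t' A' := by
  obtain ⟨D, hD, B, hB, hBA⟩ := h
  exact ⟨D, hD.trans ht, B, hB, fun x hx a ha => hBA x hx a (hA ha)⟩

variable {k : ℕ}

lemma Small.union (hH : ∀ D : Set V, D.ncard ≤ k → ∃ B, IsBig G D B)
    {s t : ℕ} {A A' : Set V} (h : Small G s A) (h' : Small G t A')
    (hk : s + t ≤ k) : Small G (s + t) (A ∪ A') := by
  obtain ⟨D, hD, B, hB, hBA⟩ := h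
  obtain ⟨D', hD', B', hB', hBA'⟩ := h'
  have hc : (D ∪ D').ncard ≤ s + t := (Set.ncard_union_le _ _).trans (by omega)
  obtain ⟨B'', hB''⟩ := hH (D ∪ D') (hc.trans hk)
  refine ⟨D ∪ D', hc, B'', hB'', ?_⟩
  rintro x hx a (ha | ha)
  · exact hBA x (hB.mono hB'' Set.subset_union_left hx) a ha
  · exact hBA' x (hB'.mono hB'' Set.subset_union_right hx) a ha

lemma small_empty (hH : ∀ D : Set V, D.ncard ≤ k → ∃ B, IsBig G D B) :
    Small G 0 (∅ : Set V) := by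
  obtain ⟨B, hB⟩ := hH ∅ (by simp)
  exact ⟨∅, by simp, B, hB, fun x _ a ha => ha.elim⟩

lemma small_biUnion (hH : ∀ D : Set V, D.ncard ≤ k → ∃ B, IsBig G D B)
    {ι : Type} (s : ℕ) (F : Finset ι) (A : ι → Set V)
    (h : ∀ i ∈ F, Small G s (A i)) (hk : F.card * s ≤ k) :
    Small G (F.card * s) {x | ∃ i ∈ F, x ∈ A i} := by
  classical
  induction F using Finset.induction_on with
  | empty => simpa using small_empty hH
  | insert a F ha ih =>
    rw [Finset.card_insert_of_notMem ha] at hk ⊢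
    have e : (F.card + 1) * s = F.card * s + s := by ring
    rw [e] at hk ⊢
    have h1 := ih (fun i hi => h i (Finset.mem_insert_of_mem hi)) (by omega)
    refine (Small.union hH h1 (h a (Finset.mem_insert_self _ _)) hk).mono le_rfl ?_
    rintro x ⟨i, hi, hx⟩
    rcases Finset.mem_insert.1 hi with rfl | hi
    · exact Or.inr hx
    · exact Or.inl ⟨i, hi, hx⟩

lemma small_self (hH : ∀ D : Set V, D.ncard ≤ k → ∃ B, IsBig G D B)
    {t : ℕ} {A : Set V} (h : A.ncard ≤ t) (ht : t ≤ k) : Small G t A := by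
  obtain ⟨B, hB⟩ := hH A (h.trans ht)
  exact ⟨A, h, B, hB, hB.avoid⟩

end Big


lemma seg_conn {G : SimpleGraph V} (f : ℤ → V) (i j : ℤ) (hij : i ≤ j)
    (h : ∀ t, i ≤ t → t < j → G.Adj (f t) (f (t + 1))) : ConnSet G (arc f i j) := by
  induction j, hij using Int.leInduction with
  | base =>
    have : arc f i i = {f i} := by
      ext x; constructor
      · rintro ⟨t, h1, h2, rfl⟩
        have : t = i := by omega
        subst this; rfl
      · rintro rfl; exact ⟨i, le_rfl, le_rfl, rfl⟩
    rw [this]; exact connSet_singleton G _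
  | succ j hij ih =>
    have h1 := ih (fun t h1 h2 => h t h1 (by omega))
    have : arc f i (j + 1) = insert (f (j + 1)) (arc f i j) := by
      ext x; constructor
      · rintro ⟨t, h1, h2, rfl⟩
        by_cases ht : t = j + 1
        · subst ht; exact Or.inl rfl
        · exact Or.inr ⟨t, h1, by omega, rfl⟩
      · rintro (rfl | ⟨t, h1, h2, rfl⟩)
        · exact ⟨j + 1, by omega, le_rfl, rfl⟩
        · exact ⟨t, h1, by omega, rfl⟩
    rw [this]
    exact h1.insert ⟨f j, ⟨j, hij, le_rfl, rfl⟩, (h j hij (by omega)).symm⟩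

lemma Cyc.arc_conn {G : SimpleGraph V} {f : ℤ → V} {n : ℤ} (hC : Cyc G f n) (i j : ℤ)
    (hij : i ≤ j) : ConnSet G (arc f i j) :=
  seg_conn f i j hij (fun t _ _ => hC.adj t)

/-- Every connected set disjoint from an induced cycle has at most `s` attachments. -/
def WF (G : SimpleGraph V) (s : ℕ) : Prop :=
  ∀ f n, Cyc G f n → ∀ Y, ConnSet G Y → (∀ t, f t ∉ Y) → ∀ (F : Finset ℤ) (i0 : ℤ),
    (∀ t ∈ F, i0 ≤ t ∧ t < i0 + n ∧ Att G Y (f t)) → F.card ≤ s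

lemma wf_of_no_wheel {G : SimpleGraph V} (ℓ : ℕ) (hℓ : 3 ≤ ℓ)
    (hno : ¬ IsInducedMinor (wheel ℓ) G) : WF G (ℓ - 1) := by
  intro f n hC Y hY hfY F0 i0 hF0
  by_contra hcon
  apply hno
  obtain ⟨F, hFF, hFc⟩ := Finset.exists_subset_card_eq (show ℓ ≤ F0.card by omega)
  have hF : ∀ t ∈ F, i0 ≤ t ∧ t < i0 + n ∧ Att G Y (f t) := fun t ht => hF0 t (hFF ht)
  have h3 := hC.three
  let T := F.orderEmbOfFin hFc
  have hT : ∀ i, T i ∈ F := fun i => Finset.orderEmbOfFin_mem F hFc i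
  let z : Fin ℓ := ⟨0, by omega⟩
  let T' : ℕ → ℤ := fun i => if h : i < ℓ then T ⟨i, h⟩ else T z + n
  have hT'1 : ∀ i (h : i < ℓ), T' i = T ⟨i, h⟩ := fun i h => dif_pos h
  have hT'0 : T' 0 = T z := hT'1 0 (by omega)
  have hT'l : T' ℓ = T' 0 + n := by
    rw [hT'0]; exact dif_neg (by omega)
  have hlt : ∀ i j, i < j → j ≤ ℓ → T' i < T' j := by
    intro i j hij hj
    by_cases h : j < ℓ
    · rw [hT'1 i (by omega), hT'1 j h]
      exact T.strictMono (by simpa using hij)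
    · have : j = ℓ := by omega
      subst this
      rw [hT'l, hT'1 i hij, hT'0]
      have h1 := hF _ (hT ⟨i, hij⟩)
      have h2 := hF _ (hT z)
      omega
  have hle : ∀ i j, i ≤ j → j ≤ ℓ → T' i ≤ T' j := by
    intro i j hij hj
    rcases hij.lt_or_eq with h | h
    · exact (hlt i j h hj).le
    · rw [h]
  let X' : ℕ → Set V := fun i => arc f (T' i) (T' (i + 1) - 1)
  have hX'c : ∀ i, i < ℓ → ConnSet G (X' i) := by
    intro i hi
    have := hlt i (i + 1) (by omega) (by omega)
    exact hC.arc_conn _ _ (by omega)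
  have hX'd : ∀ i j, i < j → j < ℓ → ∀ x, x ∈ X' i → x ∈ X' j → False := by
    rintro i j hij hj x ⟨a, ha1, ha2, rfl⟩ ⟨b, hb1, hb2, hab⟩
    have h1 := hle (i + 1) j (by omega) (by omega)
    have h2 := hle (j + 1) ℓ (by omega) (by omega)
    have h4 := hle 0 i (by omega) (by omega)
    exact hC.inj a b (by omega) (by omega) hab.symm
  have hX'a : ∀ i j, i < j → j < ℓ → ((∃ u ∈ X' i, ∃ v ∈ X' j, G.Adj u v) ↔
      (j = i + 1 ∨ (i = 0 ∧ j + 1 = ℓ))) := by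
    intro i j hij hj
    have h1 := hle (i + 1) j (by omega) (by omega)
    have h2 := hle (j + 1) ℓ (by omega) (by omega)
    have h4 := hle 0 i (by omega) (by omega)
    have h5 := hlt i (i+1) (by omega) (by omega)
    have h6 := hlt j (j+1) (by omega) (by omega)
    constructor
    · rintro ⟨_, ⟨a, ha1, ha2, rfl⟩, _, ⟨b, hb1, hb2, rfl⟩, hadj⟩
      by_contra hcc
      push Not at hcc
      have h7 : T' (i + 1) < T' j := hlt _ _ (by omega) (by omega)
      refine hC.nonadj a b (by omega) ?_ hadj
      by_cases hi : i = 0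
      · have : T' (j + 1) < T' ℓ := hlt _ _ (by omega) le_rfl
        omega
      · have : T' 0 < T' i := hlt _ _ (by omega) (by omega)
        omega
    · rintro (rfl | ⟨rfl, rfl⟩)
      · refine ⟨f (T' (i + 1) - 1), ⟨_, by omega, le_rfl, rfl⟩, f (T' (i + 1)),
          ⟨_, le_rfl, by omega, rfl⟩, ?_⟩
        simpa using hC.adj (T' (i + 1) - 1)
      · refine ⟨f (T' 0), ⟨_, le_rfl, by omega, rfl⟩, f (T' (j + 1) - 1),
          ⟨_, by omega, le_rfl, rfl⟩, ?_⟩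
        have := hC.adj (T' (j + 1) - 1)
        rw [sub_add_cancel, hT'l, hC.per] at this
        rw [hT'l]
        exact this.symm
  have hX'Y : ∀ i, i < ℓ → ∃ u ∈ Y, ∃ v ∈ X' i, G.Adj u v := by
    intro i hi
    obtain ⟨y, hy, hya⟩ := (hF _ (hT ⟨i, hi⟩)).2.2
    rw [← hT'1 i hi] at hya
    have := hlt i (i + 1) (by omega) (by omega)
    exact ⟨y, hy, _, ⟨T' i, le_rfl, by omega, rfl⟩, hya⟩
  have hdY : ∀ i x, x ∈ X' i → x ∈ Y → False := by
    rintro i x ⟨t, _, _, rfl⟩ h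
    exact hfY t h
  have : NeZero ℓ := ⟨by omega⟩
  have : Fact (1 < ℓ) := ⟨by omega⟩
  have hval : ∀ i : ZMod ℓ, i.val < ℓ := ZMod.val_lt
  have hsucc : ∀ i : ZMod ℓ, (i + 1).val = if i.val + 1 < ℓ then i.val + 1 else 0 := by
    intro i
    have := hval i
    rw [ZMod.val_add, ZMod.val_one]
    split_ifs with h
    · exact Nat.mod_eq_of_lt h
    · have : i.val + 1 = ℓ := by omega
      rw [this, Nat.mod_self]
  have hne : ∀ i j : ZMod ℓ, i ≠ j → i.val ≠ j.val := fun i j h h' => h (ZMod.val_injective ℓ h')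
  have hs2 : ∀ i j : ZMod ℓ, j = i + 1 ↔ j.val = if i.val + 1 < ℓ then i.val + 1 else 0 := by
    intro i j
    rw [← hsucc]
    exact ⟨fun h => by rw [h], fun h => ZMod.val_injective ℓ h⟩
  have hadjZ : ∀ i j : ZMod ℓ, i ≠ j → ((∃ u ∈ X' i.val, ∃ v ∈ X' j.val, G.Adj u v) ↔
      (j = i + 1 ∨ i = j + 1)) := by
    intro i j hij
    have hi := hval i
    have hj := hval j
    rw [hs2 i j, hs2 j i]
    rcases lt_or_gt_of_ne (hne i j hij) with h | h
    · rw [hX'a _ _ h hj]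
      split_ifs <;> omega
    · have := hX'a _ _ h hi
      have e : (∃ u ∈ X' i.val, ∃ v ∈ X' j.val, G.Adj u v) ↔
          (∃ u ∈ X' j.val, ∃ v ∈ X' i.val, G.Adj u v) :=
        ⟨fun ⟨u, hu, v, hv, h⟩ => ⟨v, hv, u, hu, h.symm⟩,
         fun ⟨u, hu, v, hv, h⟩ => ⟨v, hv, u, hu, h.symm⟩⟩
      rw [e, this]
      split_ifs <;> omega
  refine ⟨fun o => match o with | none => Y | some i => X' i.val, ?_, ?_, ?_⟩
  · rintro (_ | i)
    · exact hY.toConnected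
    · exact (hX'c _ (hval i)).toConnected
  · rintro (_ | i) (_ | j) hij
    · exact absurd rfl hij
    · exact Set.disjoint_left.2 fun x h1 h2 => hdY _ x h2 h1
    · exact Set.disjoint_left.2 fun x h1 h2 => hdY _ x h1 h2
    · have hij' : i ≠ j := fun h => hij (by rw [h])
      refine Set.disjoint_left.2 fun x h1 h2 => ?_
      rcases lt_or_gt_of_ne (hne i j hij') with h | h
      · exact hX'd _ _ h (hval j) x h1 h2
      · exact hX'd _ _ h (hval i) x h2 h1
  · rintro (_ | i) (_ | j) hij
    · exact absurd rfl hij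
    · refine ⟨fun _ => ?_, fun _ => hX'Y _ (hval j)⟩
      simp [wheel, SimpleGraph.fromRel_adj]
    · refine ⟨fun _ => ?_, fun _ => ?_⟩
      · simp [wheel, SimpleGraph.fromRel_adj]
      · obtain ⟨u, hu, v, hv, h⟩ := hX'Y _ (hval i)
        exact ⟨v, hv, u, hu, h.symm⟩
    · have hij' : i ≠ j := fun h => hij (by rw [h])
      rw [show (∃ u ∈ X' i.val, ∃ v ∈ X' j.val, G.Adj u v) ↔ _ from hadjZ i j hij']
      simp [wheel, SimpleGraph.fromRel_adj, hij']

lemma mod_step (n : ℤ) (hn : 0 < n) (i d : ℤ) (h0 : 0 ≤ d) (hd : d < n) :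
    ((i + d) % n = i % n + d ∧ i % n + d < n) ∨
      ((i + d) % n = i % n + d - n ∧ n ≤ i % n + d) := by
  have h1 := Int.emod_nonneg i hn.ne'
  have h2 := Int.emod_lt_of_pos i hn
  have e : (i + d) % n = (i % n + d) % n := by rw [Int.emod_add_emod]
  by_cases h : i % n + d < n
  · left; rw [e]; exact ⟨Int.emod_eq_of_lt (by omega) h, h⟩
  · right
    rw [e]
    refine ⟨?_, by omega⟩
    rw [← Int.sub_emod_right]
    exact Int.emod_eq_of_lt (by omega) (by omega)

lemma cyc_of {G : SimpleGraph V} (g : ℤ → V) (n : ℤ) (hn : 3 ≤ n)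
    (hadj : ∀ t, 0 ≤ t → t + 1 < n → G.Adj (g t) (g (t + 1)))
    (hadj' : G.Adj (g (n - 1)) (g 0))
    (hinj : ∀ i j, 0 ≤ i → i < j → j < n → g i ≠ g j)
    (hnon : ∀ i j, 0 ≤ i → i + 1 < j → j < n → ¬ (i = 0 ∧ j = n - 1) → ¬ G.Adj (g i) (g j)) :
    Cyc G (fun t => g (t % n)) n := by
  have h1 : ∀ i, 0 ≤ i % n := fun i => Int.emod_nonneg i (by omega)
  have h2 : ∀ i, i % n < n := fun i => Int.emod_lt_of_pos i (by omega)
  refine ⟨hn, fun i => by simp, ?_, ?_, ?_⟩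
  · intro i j hij hj
    have ha := h1 i
    have hb := h1 j
    have ha' := h2 i
    have hb' := h2 j
    have := mod_step n (by omega) i (j - i) (by omega) (by omega)
    rw [add_sub_cancel] at this
    rcases this with ⟨e, h⟩ | ⟨e, h⟩
    · exact hinj _ _ (by omega) (by omega) (by omega)
    · exact (hinj _ _ (by omega) (by omega) (by omega)).symm
  · intro i
    have ha := h1 i
    have ha' := h2 i
    rcases mod_step n (by omega) i 1 (by omega) (by omega) with ⟨e, h⟩ | ⟨e, h⟩
    · show G.Adj (g (i % n)) (g ((i + 1) % n))
      rw [e]; exact hadj _ (by omega) (by omega)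
    · show G.Adj (g (i % n)) (g ((i + 1) % n))
      have e1 : i % n = n - 1 := by omega
      have e2 : (i + 1) % n = 0 := by omega
      rw [e1, e2]; exact hadj'
  · intro i j hij hj
    have ha := h1 i
    have hb := h1 j
    have ha' := h2 i
    have hb' := h2 j
    have := mod_step n (by omega) i (j - i) (by omega) (by omega)
    rw [add_sub_cancel] at this
    rcases this with ⟨e, h⟩ | ⟨e, h⟩
    · exact hnon _ _ (by omega) (by omega) (by omega) (by omega)
    · exact fun hh => hnon _ _ (by omega) (by omega) (by omega) (by omega) hh.symm

/-- An induced path and a connected set attached exactly to its two ends yield a cycle. -/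
lemma exists_cycle {G : SimpleGraph V} (p : ℤ → V) (m : ℤ) (hm : 1 ≤ m)
    (hadj : ∀ t, 0 ≤ t → t < m → G.Adj (p t) (p (t + 1)))
    (hnon : ∀ i j, 0 ≤ i → i + 1 < j → j ≤ m → p i ≠ p j ∧ ¬ G.Adj (p i) (p j))
    (Z : Set V) (hZ : ConnSet G Z) (hpZ : ∀ t, 0 ≤ t → t ≤ m → p t ∉ Z)
    (h0 : Att G Z (p 0)) (hm' : Att G Z (p m))
    (hno : ∀ t, 0 < t → t < m → ¬ Att G Z (p t)) :
    ∃ f n, Cyc G f n ∧ m + 2 ≤ n ∧ (∀ t, 0 ≤ t → t ≤ m → f t = p t) ∧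
      ∀ t, m < t → t < n → f t ∈ Z := by
  classical
  have hchain : ∃ L : ℕ, 2 ≤ L ∧ ∃ q : ℕ → V, q 0 = p m ∧ q L = p 0 ∧
      (∀ i, i < L → G.Adj (q i) (q (i + 1))) ∧ ∀ i, 0 < i → i < L → q i ∈ Z := by
    have key : Z ⊆ {z | ∃ L : ℕ, 1 ≤ L ∧ ∃ q : ℕ → V, q 0 = p m ∧ q L = z ∧
        (∀ i, i < L → G.Adj (q i) (q (i + 1))) ∧ ∀ i, 0 < i → i ≤ L → q i ∈ Z} := by
      obtain ⟨z, hz, hzm⟩ := hm'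
      refine hZ.sub hz ⟨1, le_rfl, fun i => if i = 0 then p m else z, rfl, rfl, ?_, ?_⟩ ?_
      · intro i hi
        have : i = 0 := by omega
        subst this
        simpa using hzm.symm
      · intro i h1 h2
        have : i = 1 := by omega
        subst this
        simpa using hz
      · rintro x hx ⟨L, hL, q, hq0, hqL, hqa, hqZ⟩ y hy hxy
        refine ⟨L + 1, by omega, fun i => if i ≤ L then q i else y, by simpa using hq0, by simp,
          ?_, ?_⟩
        · intro i hi
          by_cases h : i < L
          · simpa [h.le, Nat.succ_le_of_lt h] using hqa i h
          · have : i = L := by omega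
            subst this
            simpa [hqL] using hxy
        · intro i h1 h2
          by_cases h : i ≤ L
          · simpa [h] using hqZ i h1 h
          · simpa [h] using hy
    obtain ⟨z, hz, hz0⟩ := h0
    obtain ⟨L, hL, q, hq0, hqL, hqa, hqZ⟩ := key hz
    refine ⟨L + 1, by omega, fun i => if i ≤ L then q i else p 0, by simpa using hq0, by simp,
          ?_, ?_⟩
    · intro i hi
      by_cases h : i < L
      · simpa [h.le, Nat.succ_le_of_lt h] using hqa i h
      · have : i = L := by omega
        subst this
        simpa [hqL] using hz0
    · intro i h1 h2
      have h : i ≤ L := by omega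
      simpa [h] using hqZ i h1 h
  obtain ⟨hL2, q, hq0, hqL, hqa, hqZ⟩ := Nat.find_spec hchain
  have hmin : ∀ L', L' < Nat.find hchain → ¬ _ := fun L' h => Nat.find_min hchain h
  generalize hLL : Nat.find hchain = L at *
  clear hchain hLL
  -- no shortcuts
  have hshort : ∀ i j, i + 1 < j → j ≤ L → ¬ (i = 0 ∧ j = L) → ¬ G.Adj (q i) (q j) := by
    intro i j hij hj hne hadj'
    apply hmin (L - (j - i - 1)) (by omega)
    refine ⟨by omega, fun t => if t ≤ i then q t else q (t + (j - i - 1)), by simpa using hq0,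
      ?_, ?_, ?_⟩
    · have : ¬ (L - (j - i - 1) ≤ i) := by omega
      simp only [this, if_false]
      rw [← hqL]; congr 1; omega
    · intro t ht
      by_cases h : t < i
      · simpa [h.le, Nat.succ_le_of_lt h] using hqa t (by omega)
      · by_cases h' : t = i
        · subst h'
          have e : t + 1 + (j - t - 1) = j := by omega
          simpa [e] using hadj'
        · have h1 : ¬ t ≤ i := by omega
          have h2 : ¬ t + 1 ≤ i := by omega
          simp only [h1, h2, if_false]
          have e : t + 1 + (j - i - 1) = t + (j - i - 1) + 1 := by omega
          rw [e]
          exact hqa _ (by omega)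
    · intro t h1 h2
      by_cases h : t ≤ i
      · simpa [h] using hqZ t h1 (by omega)
      · simpa [h] using hqZ (t + (j - i - 1)) (by omega) (by omega)
  have hqinj : ∀ i j, 0 < i → i < j → j < L → q i ≠ q j := by
    intro i j hi hij hj he
    refine hshort i (j + 1) (by omega) (by omega) (by omega) ?_
    rw [he]; exact hqa j hj
  let n : ℤ := m + L
  let g : ℤ → V := fun t => if t ≤ m then p t else q (t - m).toNat
  have hg1 : ∀ t, t ≤ m → g t = p t := fun t ht => if_pos ht
  have hg2 : ∀ t, m < t → g t = q (t - m).toNat := fun t ht => if_neg (by omega)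
  have hg3 : g m = q 0 := by rw [hg1 m le_rfl, hq0]
  have hg4 : ∀ t, m ≤ t → g t = q (t - m).toNat := by
    intro t ht
    rcases ht.lt_or_eq with h | h
    · exact hg2 t h
    · subst h; simpa using hg3
  have hgZ : ∀ t, m < t → t < n → g t ∈ Z := by
    intro t h1 h2
    rw [hg2 t h1]
    exact hqZ _ (by omega) (by omega)
  refine ⟨fun t => g (t % n), n, cyc_of g n (by omega) ?_ ?_ ?_ ?_, by omega, ?_, ?_⟩
  · intro t h1 h2
    by_cases h : t < m
    · rw [hg1 t h.le, hg1 (t + 1) (by omega)]; exact hadj t h1 h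
    · rw [hg4 t (by omega), hg4 (t + 1) (by omega)]
      have e : (t + 1 - m).toNat = (t - m).toNat + 1 := by omega
      rw [e]; exact hqa _ (by omega)
  · rw [hg4 (n - 1) (by omega), hg1 0 (by omega), ← hqL]
    have e : L = (n - 1 - m).toNat + 1 := by omega
    conv => rhs; rw [e]
    exact hqa _ (by omega)
  · intro i j hi hij hj
    by_cases h : j ≤ m
    · rw [hg1 i (by omega), hg1 j h]
      by_cases h' : j = i + 1
      · subst h'; exact (hadj i hi (by omega)).ne
      · exact (hnon i j hi (by omega) h).1
    · by_cases h' : i ≤ m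
      · intro he
        have := hgZ j (by omega) hj
        rw [← he, hg1 i h'] at this
        exact hpZ i hi h' this
      · rw [hg2 i (by omega), hg2 j (by omega)]
        exact hqinj _ _ (by omega) (by omega) (by omega)
  · intro i j hi hij hj hne
    by_cases h : j ≤ m
    · rw [hg1 i (by omega), hg1 j h]
      exact (hnon i j hi (by omega) h).2
    · by_cases h' : i < m
      · by_cases h0' : i = 0
        · subst h0'
          rw [hg1 0 (by omega), hg2 j (by omega), ← hqL]
          exact fun hh => hshort _ _ (by omega) le_rfl (by omega) hh.symm
        · rw [hg1 i h'.le]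
          exact fun hh => hno i (by omega) h' ⟨_, hgZ j (by omega) hj, hh.symm⟩
      · rw [hg4 i (by omega), hg4 j (by omega)]
        exact hshort _ _ (by omega) (by omega) (by omega)
  · intro t h1 h2
    show g (t % n) = _
    rw [Int.emod_eq_of_lt h1 (by omega), hg1 t h2]
  · intro t h1 h2
    show g (t % n) ∈ Z
    rw [Int.emod_eq_of_lt (by omega) h2]
    exact hgZ t h1 h2

/-- Standing hypotheses of the contradiction argument. -/
structure Ctx (G : SimpleGraph V) (s k : ℕ) : Prop where
  hH : ∀ D : Set V, D.ncard ≤ k → ∃ B, IsBig G D B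
  wf : WF G s
  hs : 2 ≤ s
  hk : s * s ≤ k

lemma Ctx.k2s {G : SimpleGraph V} {s k : ℕ} (h : Ctx G s k) : 2 * s ≤ k := by
  have := h.hs; have := h.hk; nlinarith

lemma Cyc.per_mul {G : SimpleGraph V} {f : ℤ → V} {n : ℤ} (hC : Cyc G f n) (i q : ℤ) :
    f (i + n * q) = f i := by
  induction q using Int.induction_on with
  | zero => simp
  | succ q ih =>
    have e : i + n * (q + 1) = (i + n * q) + n := by ring
    rw [e, hC.per, ih]
  | pred q ih =>
    have e : i + n * (-q) = (i + n * (-q - 1)) + n := by ring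
    rw [e, hC.per] at ih
    exact ih

lemma Cyc.rep {G : SimpleGraph V} {f : ℤ → V} {n : ℤ} (hC : Cyc G f n) (i0 t : ℤ) :
    ∃ t', i0 ≤ t' ∧ t' < i0 + n ∧ f t' = f t := by
  have h3 := hC.three
  refine ⟨i0 + (t - i0) % n, ?_, ?_, ?_⟩
  · have := Int.emod_nonneg (t - i0) (show n ≠ 0 by omega); omega
  · have := Int.emod_lt_of_pos (t - i0) (show 0 < n by omega); omega
  · have e : t = i0 + (t - i0) % n + n * ((t - i0) / n) := by
      have := Int.emod_add_mul_ediv (t - i0) n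
      omega
    conv => rhs; rw [e]
    rw [hC.per_mul]

lemma Cyc.shift {G : SimpleGraph V} {f : ℤ → V} {n : ℤ} (hC : Cyc G f n) (c : ℤ) :
    Cyc G (fun t => f (t + c)) n := by
  refine ⟨hC.three, ?_, ?_, ?_, ?_⟩
  · intro i
    have := hC.per (i + c)
    rw [← this]; show f _ = f _; congr 1; ring
  · intro i j h1 h2; exact hC.inj _ _ (by omega) (by omega)
  · intro i
    have := hC.adj (i + c)
    have e : i + 1 + c = i + c + 1 := by ring
    show G.Adj (f (i + c)) (f (i + 1 + c))
    rw [e]; exact this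
  · intro i j h1 h2; exact hC.nonadj _ _ (by omega) (by omega)

lemma range_shift (f : ℤ → V) (c : ℤ) : Set.range (fun t => f (t + c)) = Set.range f := by
  ext x; constructor
  · rintro ⟨t, rfl⟩; exact ⟨t + c, rfl⟩
  · rintro ⟨t, rfl⟩; exact ⟨t - c, by simp⟩

lemma arc_shift (f : ℤ → V) (c i j : ℤ) :
    arc (fun t => f (t + c)) i j = arc f (i + c) (j + c) := by
  ext x; constructor
  · rintro ⟨t, h1, h2, rfl⟩; exact ⟨t + c, by omega, by omega, rfl⟩
  · rintro ⟨t, h1, h2, rfl⟩; exact ⟨t - c, by omega, by omega, by simp⟩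

lemma Cyc.arc_per {G : SimpleGraph V} {f : ℤ → V} {n : ℤ} (hC : Cyc G f n) (i j : ℤ) :
    arc f (i + n) (j + n) = arc f i j := by
  rw [← arc_shift]
  have : (fun t => f (t + n)) = f := funext hC.per
  rw [this]

lemma arc_mono (f : ℤ → V) {i j i' j' : ℤ} (h1 : i ≤ i') (h2 : j' ≤ j) :
    arc f i' j' ⊆ arc f i j := by
  rintro x ⟨t, a, b, rfl⟩; exact ⟨t, by omega, by omega, rfl⟩

lemma exists_next (P : ℤ → Prop) (i j : ℤ) (hij : i < j) (hj : P j) :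
    ∃ j', i < j' ∧ j' ≤ j ∧ P j' ∧ ∀ t, i < t → t < j' → ¬ P t := by
  classical
  have h : ∃ d : ℕ, P (i + 1 + d) := ⟨(j - i - 1).toNat, by
    have : i + 1 + ((j - i - 1).toNat : ℤ) = j := by omega
    rwa [this]⟩
  refine ⟨i + 1 + (Nat.find h : ℕ), by omega, ?_, Nat.find_spec h, ?_⟩
  · have : Nat.find h ≤ (j - i - 1).toNat := Nat.find_min' h (by
      have : i + 1 + ((j - i - 1).toNat : ℤ) = j := by omega
      rwa [this])
    omega
  · intro t h1 h2 hP
    refine Nat.find_min h (m := (t - i - 1).toNat) (by omega) ?_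
    have : i + 1 + ((t - i - 1).toNat : ℤ) = t := by omega
    rwa [this]

lemma exists_prev (P : ℤ → Prop) (i j : ℤ) (hij : i < j) (hi : P i) :
    ∃ i', i ≤ i' ∧ i' < j ∧ P i' ∧ ∀ t, i' < t → t < j → ¬ P t := by
  obtain ⟨j', h1, h2, h3, h4⟩ := exists_next (fun t => P (-t)) (-j) (-i) (by omega) (by simpa)
  refine ⟨-j', by omega, by omega, h3, fun t ha hb hP => h4 (-t) (by omega) (by omega) ?_⟩
  simpa using hP

section
variable [Finite V] {G : SimpleGraph V} {s k : ℕ}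

lemma att_ncard (h : WF G s) {f : ℤ → V} {n : ℤ} (hC : Cyc G f n) {Y : Set V}
    (hY : ConnSet G Y) (hd : ∀ t, f t ∉ Y) :
    ({v | v ∈ Set.range f ∧ Att G Y v}).ncard ≤ s := by
  classical
  let F := (Finset.Ico 0 n).filter (fun t => Att G Y (f t))
  have hF := h f n hC Y hY hd F 0 (by
    intro t ht
    simp only [F, Finset.mem_filter, Finset.mem_Ico] at ht
    exact ⟨ht.1.1, by omega, ht.2⟩)
  have hsub : {v | v ∈ Set.range f ∧ Att G Y v} ⊆ ((F.image f : Finset V) : Set V) := by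
    rintro v ⟨⟨t, rfl⟩, hv⟩
    obtain ⟨t', h1, h2, h3⟩ := hC.rep 0 t
    rw [Finset.coe_image]
    refine ⟨t', ?_, h3⟩
    simp only [F, Finset.coe_filter, Finset.mem_Ico]
    exact ⟨⟨h1, by omega⟩, by rw [h3]; exact hv⟩
  refine (Set.ncard_le_ncard hsub (Set.toFinite _)).trans ?_
  rw [Set.ncard_coe_finset]
  exact Finset.card_image_le.trans hF

lemma lemmaA (h : Ctx G s k) {f : ℤ → V} {n : ℤ} (hC : Cyc G f n) {Y : Set V}
    (hY : ConnSet G Y) (hd : ∀ t, f t ∉ Y)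
    (hcl : ∀ x ∈ Y, ∀ y, G.Adj x y → y ∈ Y ∨ y ∈ Set.range f) :
    ∃ B, IsBig G {v | v ∈ Set.range f ∧ Att G Y v} B ∧
      ((B ⊆ Y ∧ Anti G B (Set.range f)) ∨
        Anti G B (Y ∪ {v | v ∈ Set.range f ∧ Att G Y v})) := by
  obtain ⟨B, hB⟩ := h.hH {v | v ∈ Set.range f ∧ Att G Y v}
    ((att_ncard h.wf hC hY hd).trans (by have := h.k2s; omega))
  refine ⟨B, hB, ?_⟩
  by_cases hm : ∃ x ∈ B, x ∈ Y
  · left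
    obtain ⟨x, hx, hxY⟩ := hm
    have hBY : B ⊆ Y := by
      refine hB.conn.sub hx hxY ?_
      intro a _ haY b hb hab
      rcases hcl a haY b hab with h1 | h1
      · exact h1
      · exact absurd rfl (hB.avoid b hb b ⟨h1, a, haY, hab⟩).1
    refine ⟨hBY, ?_⟩
    rintro a ha _ ⟨t, rfl⟩
    refine ⟨fun e => hd t (e ▸ hBY ha), fun hadj => ?_⟩
    exact (hB.avoid a ha (f t) ⟨⟨t, rfl⟩, a, hBY ha, hadj.symm⟩).2 hadj
  · right
    push Not at hm
    rintro x hx y (hy | hy)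
    · refine ⟨fun e => hm x hx (e ▸ hy), fun hadj => ?_⟩
      rcases hcl y hy x hadj with h1 | h1
      · exact hm x hx h1
      · exact (hB.avoid x hx x ⟨h1, y, hy, hadj⟩).1 rfl
    · exact hB.avoid x hx y hy

lemma dichotomy (h : Ctx G s k) {f : ℤ → V} {n : ℤ} (hC : Cyc G f n)
    (hk : Small G k (Set.range f)) : Small G s (Set.range f) := by
  obtain ⟨D, hD, B, hB, hBC⟩ := hk
  obtain ⟨Y, hBY, hY, hYS, hYc⟩ := exists_comp G (Set.range f) B hB.conn
    (fun z hz hzr => (hBC z hz z hzr).1 rfl)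
  have hd : ∀ t, f t ∉ Y := fun t ht => hYS _ ht ⟨t, rfl⟩
  obtain ⟨B', hB', h1 | h1⟩ := lemmaA h hC hY hd hYc
  · exact ⟨_, att_ncard h.wf hC hY hd, B', hB', h1.2⟩
  · obtain ⟨x, hx, hx'⟩ := big_meet hB.big hB'.big
    exact absurd rfl (h1 x hx' x (Or.inl (hBY hx))).1

lemma gap (h : Ctx G s k) {f : ℤ → V} {n : ℤ} (hC : Cyc G f n)
    (hk : ¬ Small G k (Set.range f)) {Y : Set V} (hY : ConnSet G Y) (hd : ∀ t, f t ∉ Y)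
    (i0 : ℤ) (hi0 : Att G Y (f i0)) :
    ∃ i j, i0 ≤ i ∧ i < j ∧ j ≤ i0 + n ∧ Att G Y (f i) ∧ Att G Y (f j) ∧
      (∀ t, i < t → t < j → ¬ Att G Y (f t)) ∧ ¬ Small G s (arc f i j) := by
  classical
  have h3 := hC.three
  by_contra hcon
  push Not at hcon
  let F := (Finset.Ico i0 (i0 + n)).filter (fun t => Att G Y (f t))
  have hF := h.wf f n hC Y hY hd F i0 (by
    intro t ht
    simp only [F, Finset.mem_filter, Finset.mem_Ico] at ht
    exact ⟨ht.1.1, by omega, ht.2⟩)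
  have hnext : ∀ i : ℤ, ∃ j, i ∈ F → (i < j ∧ j ≤ i0 + n ∧ Att G Y (f j) ∧
      ∀ t, i < t → t < j → ¬ Att G Y (f t)) := by
    intro i
    by_cases hi : i ∈ F
    · have hi' := hi
      simp only [F, Finset.mem_filter, Finset.mem_Ico] at hi'
      obtain ⟨j, h1, h2, h4, h5⟩ := exists_next (fun t => Att G Y (f t)) i (i0 + n) hi'.1.2
        (by rw [hC.per]; exact hi0)
      exact ⟨j, fun _ => ⟨h1, h2, h4, h5⟩⟩
    · exact ⟨0, fun h => absurd h hi⟩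
  choose nx hnx using hnext
  have hle : F.card * s ≤ k := le_trans (Nat.mul_le_mul_right s hF) h.hk
  have hS := small_biUnion h.hH s F (fun i => arc f i (nx i)) (by
    intro i hi
    obtain ⟨h1, h2, h4, h5⟩ := hnx i hi
    simp only [F, Finset.mem_filter, Finset.mem_Ico] at hi
    exact hcon i (nx i) hi.1.1 h1 h2 hi.2 h4 h5) hle
  refine hk (hS.mono hle ?_)
  rintro _ ⟨t, rfl⟩
  obtain ⟨t', h1, h2, h4⟩ := hC.rep i0 t
  obtain ⟨i, g1, g2, g3, g4⟩ := exists_prev (fun t => Att G Y (f t)) i0 (t' + 1) (by omega) hi0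
  have hiF : i ∈ F := by
    simp only [F, Finset.mem_filter, Finset.mem_Ico]
    exact ⟨⟨g1, by omega⟩, g3⟩
  refine ⟨i, hiF, t', by omega, ?_, h4⟩
  obtain ⟨a1, a2, a3, a4⟩ := hnx i hiF
  by_contra hlt
  exact g4 (nx i) a1 (by omega) a3

/-- `{f i, f j}` cuts `W ⊇ C ∖ f[i,j]` off from the arc `f[i,j]`. -/
structure IsCut (G : SimpleGraph V) (f : ℤ → V) (n i j : ℤ) (W : Set V) : Prop where
  out : ∀ t, j < t → t < i + n → f t ∈ W
  inn : ∀ t, i ≤ t → t ≤ j → f t ∉ W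
  cl : ∀ x ∈ W, ∀ y, G.Adj x y → y ∈ W ∨ y = f i ∨ y = f j

structure TC (G : SimpleGraph V) (s : ℕ) (f : ℤ → V) (n i j : ℤ) : Prop where
  lt : i < j
  lt' : j < i + n
  ns : ¬ Small G s (arc f i j)
  cut : ∃ W, IsCut G f n i j W

lemma pair_ncard (a b : V) : ({a, b} : Set V).ncard ≤ 2 := by
  exact (Set.ncard_insert_le _ _).trans (by simp)

lemma IsCut.away (h : Ctx G s k) {f : ℤ → V} {n i j : ℤ} {W : Set V}
    (hW : IsCut G f n i j W) (hns : ¬ Small G s (arc f i j)) {D B : Set V} (hB : IsBig G D B)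
    (hi : f i ∈ D) (hj : f j ∈ D) : ∀ x ∈ B, x ∉ W := by
  intro x hx hxW
  have hks := h.k2s
  have hs := h.hs
  obtain ⟨B0, hB0⟩ := h.hH {f i, f j} ((pair_ncard _ _).trans (by omega))
  have hBB : B ⊆ B0 := hB0.mono hB (by
    rintro y (rfl | rfl)
    · exact hi
    · exact hj)
  have hB0W : B0 ⊆ W := by
    refine hB0.conn.sub (hBB hx) hxW ?_
    intro a _ haW b hb hab
    rcases hW.cl a haW b hab with h1 | h1 | h1
    · exact h1
    · exact absurd h1 (hB0.avoid b hb _ (Or.inl rfl)).1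
    · exact absurd h1 (hB0.avoid b hb _ (Or.inr rfl)).1
  refine hns ⟨{f i, f j}, (pair_ncard _ _).trans hs, B0, hB0, ?_⟩
  rintro y hy _ ⟨t, h1, h2, rfl⟩
  refine ⟨fun e => hW.inn t h1 h2 (e ▸ hB0W hy), fun hadj => ?_⟩
  rcases hW.cl y (hB0W hy) _ hadj.symm with h1' | h1' | h1'
  · exact hW.inn t h1 h2 h1'
  · rw [h1'] at hadj; exact (hB0.avoid y hy _ (Or.inl rfl)).2 hadj
  · rw [h1'] at hadj; exact (hB0.avoid y hy _ (Or.inr rfl)).2 hadj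

/-- The rest of the cycle is small if the majority side is not in `W`. -/
lemma IsCut.rest_small (h : Ctx G s k) {f : ℤ → V} {n i j : ℤ} (hC : Cyc G f n) {W : Set V}
    (hW : IsCut G f n i j W) {D B : Set V} (hB : IsBig G D B)
    (hi : f i ∈ D) (hj : f j ∈ D) {x : V} (hx : x ∈ B) (hxW : x ∉ W) :
    Small G 2 (arc f j (i + n)) := by
  have hks := h.k2s
  have hs := h.hs
  obtain ⟨B0, hB0⟩ := h.hH {f i, f j} ((pair_ncard _ _).trans (by omega))
  have hBB : B ⊆ B0 := hB0.mono hB (by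
    rintro y (rfl | rfl)
    · exact hi
    · exact hj)
  have hB0W : ∀ y ∈ B0, y ∉ W := by
    intro y hy hyW
    refine hxW (hB0.conn.sub hy hyW ?_ (hBB hx))
    intro a _ haW b hb hab
    rcases hW.cl a haW b hab with h1 | h1 | h1
    · exact h1
    · exact absurd h1 (hB0.avoid b hb _ (Or.inl rfl)).1
    · exact absurd h1 (hB0.avoid b hb _ (Or.inr rfl)).1
  refine ⟨{f i, f j}, pair_ncard _ _, B0, hB0, ?_⟩
  rintro y hy _ ⟨t, h1, h2, rfl⟩
  by_cases e1 : t = j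
  · subst e1; exact hB0.avoid y hy _ (Or.inr rfl)
  by_cases e2 : t = i + n
  · subst e2; rw [hC.per]; exact hB0.avoid y hy _ (Or.inl rfl)
  have htW := hW.out t (by omega) (by omega)
  refine ⟨fun e => hB0W y hy (e ▸ htW), fun hadj => ?_⟩
  rcases hW.cl _ htW _ hadj with h1' | h1' | h1'
  · exact hB0W y hy h1'
  · exact (hB0.avoid y hy _ (Or.inl rfl)).1 h1'
  · exact (hB0.avoid y hy _ (Or.inr rfl)).1 h1'

lemma IsCut.create (h : Ctx G s k) {f : ℤ → V} {n i j : ℤ} (hC : Cyc G f n) {W : Set V}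
    (hk : ¬ Small G k (Set.range f)) (hij : i < j) (hij' : j < i + n)
    (hW : IsCut G f n i j W) {D B : Set V} (hB : IsBig G D B)
    (hi : f i ∈ D) (hj : f j ∈ D) {x : V} (hx : x ∈ B) (hxW : x ∉ W) : TC G s f n i j := by
  refine ⟨hij, hij', fun hsm => ?_, W, hW⟩
  have h2 := hW.rest_small h hC hB hi hj hx hxW
  have hks := h.k2s
  have hs := h.hs
  refine hk ((Small.union h.hH hsm h2 (by omega)).mono (by omega) ?_)
  rintro _ ⟨t, rfl⟩
  obtain ⟨t', h1, h2, h3⟩ := hC.rep i t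
  by_cases ht : t' ≤ j
  · exact Or.inl ⟨t', h1, ht, h3⟩
  · exact Or.inr ⟨t', by omega, by omega, h3⟩

lemma TC.rest (h : Ctx G s k) {f : ℤ → V} {n i j : ℤ} (hC : Cyc G f n) (hT : TC G s f n i j) :
    Small G 2 (arc f j (i + n)) := by
  obtain ⟨W, hW⟩ := hT.cut
  have hks := h.k2s
  have hs := h.hs
  obtain ⟨B0, hB0⟩ := h.hH {f i, f j} ((pair_ncard _ _).trans (by omega))
  obtain ⟨x, hx⟩ := hB0.conn.1
  exact hW.rest_small h hC hB0 (Or.inl rfl) (Or.inr rfl) hx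
    (hW.away h hT.ns hB0 (Or.inl rfl) (Or.inr rfl) x hx)

lemma TC.shift {f : ℤ → V} {n i j c : ℤ} (hT : TC G s (fun t => f (t + c)) n i j) :
    TC G s f n (i + c) (j + c) := by
  obtain ⟨h1, h2, h3, W, hW⟩ := hT
  rw [arc_shift] at h3
  refine ⟨by omega, by omega, h3, W, ?_, ?_, hW.cl⟩
  · intro t a b
    have := hW.out (t - c) (by omega) (by omega)
    simpa using this
  · intro t a b
    have := hW.inn (t - c) (by omega) (by omega)
    simpa using this

lemma TC.add_per {f : ℤ → V} {n i j : ℤ} (hC : Cyc G f n) (hT : TC G s f n i j) :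
    TC G s f n (i + n) (j + n) := by
  have : (fun t => f (t + n)) = f := funext hC.per
  apply TC.shift
  rw [this]; exact hT

lemma TC.sub_per {f : ℤ → V} {n i j : ℤ} (hC : Cyc G f n) (hT : TC G s f n i j) :
    TC G s f n (i - n) (j - n) := by
  have : (fun t => f (t + (-n))) = f := by
    funext t
    have := hC.per (t + -n)
    rw [← this]; congr 1; ring
  have h2 : TC G s (fun t => f (t + (-n))) n i j := by rw [this]; exact hT
  exact h2.shift

lemma quad_ncard (a b c d : V) : ({a, b, c, d} : Set V).ncard ≤ 4 := by
  have h1 := Set.ncard_insert_le a {b, c, d}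
  have h2 := Set.ncard_insert_le b {c, d}
  have h3 := pair_ncard c d
  omega

lemma TC.corner (h : Ctx G s k) {f : ℤ → V} {n i j i' j' : ℤ} (hC : Cyc G f n)
    (hk : ¬ Small G k (Set.range f)) (hT : TC G s f n i j) (hT' : TC G s f n i' j')
    (h1 : i ≤ i') (h2 : i' < j) (h3 : j ≤ j') (h4 : j' < i + n) : TC G s f n i' j := by
  obtain ⟨W, hW⟩ := hT.cut
  obtain ⟨W', hW'⟩ := hT'.cut
  have hks := h.k2s
  have hs := h.hs
  obtain ⟨B, hB⟩ := h.hH {f i, f j, f i', f j'} ((quad_ncard _ _ _ _).trans (by omega))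
  obtain ⟨x, hx⟩ := hB.conn.1
  have e1 := hW.away h hT.ns hB (by simp) (by simp) x hx
  have e2 := hW'.away h hT'.ns hB (by simp) (by simp) x hx
  refine IsCut.create h hC hk h2 (by omega) (W := W ∪ W') ⟨?_, ?_, ?_⟩ hB (by simp) (by simp) hx
    (by rintro (h | h); exacts [e1 h, e2 h])
  · intro t a b
    by_cases ht : t < i + n
    · exact Or.inl (hW.out t a ht)
    · exact Or.inr (hW'.out t (by omega) b)
  · rintro t a b (hh | hh)
    · exact hW.inn t (by omega) b hh
    · exact hW'.inn t a (by omega) hh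
  · rintro x (hx | hx) y hxy
    · rcases hW.cl x hx y hxy with hy | hy | hy
      · exact Or.inl (Or.inl hy)
      · by_cases e : i = i'
        · subst e; exact Or.inr (Or.inl hy)
        · left; right
          rw [hy, ← hC.per]
          exact hW'.out _ (by omega) (by omega)
      · exact Or.inr (Or.inr hy)
    · rcases hW'.cl x hx y hxy with hy | hy | hy
      · exact Or.inl (Or.inr hy)
      · exact Or.inr (Or.inl hy)
      · by_cases e : j' = j
        · subst e; exact Or.inr (Or.inr hy)
        · left; left
          rw [hy]
          exact hW.out _ (by omega) (by omega)

lemma tc_trivial (h : Ctx G s k) {f : ℤ → V} {n : ℤ} (hC : Cyc G f n)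
    (hk : ¬ Small G k (Set.range f)) (i : ℤ) : TC G s f n i (i + n - 1) := by
  have h3 := hC.three
  have hks := h.k2s
  refine ⟨by omega, by omega, fun hsm => hk (hsm.mono (by omega) ?_), ∅, ?_, ?_, ?_⟩
  · rintro _ ⟨t, rfl⟩
    obtain ⟨t', h1, h2, h3⟩ := hC.rep i t
    exact ⟨t', h1, by omega, h3⟩
  · intro t a b; omega
  · intro t a b; simp
  · intro x hx; exact hx.elim

lemma Cyc.arc_sub {f : ℤ → V} (i j : ℤ) : arc f i j ⊆ Set.range f := by
  rintro _ ⟨t, _, _, rfl⟩; exact ⟨t, rfl⟩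

lemma lemmaU0 (h : Ctx G s k) (M : ℕ) : ∀ (f : ℤ → V) (n m : ℤ) (Y : Set V), m.toNat = M →
    Cyc G f n → 0 < m → m ≤ n - 2 → ConnSet G Y → (∀ t, f t ∉ Y) →
    (∀ x ∈ Y, ∀ y, G.Adj x y → y ∈ Y ∨ y ∈ Set.range f) →
    Att G Y (f 0) → Att G Y (f m) → (∀ t, 0 < t → t < m → ¬ Att G Y (f t)) →
    ¬ Small G s (arc f 0 m) → ∃ i j, 0 ≤ i ∧ j ≤ m ∧ TC G s f n i j := by
  induction M using Nat.strong_induction_on with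
  | _ M IH =>
  intro f n m Y hM hC hm hmn hY hd hcl h0 hm' hno hns
  have hsC : ¬ Small G s (Set.range f) := fun hh => hns (hh.mono le_rfl (Cyc.arc_sub _ _))
  obtain ⟨fb, nb, hCb, hnb, hfb, hfbY⟩ := exists_cycle (G := G) f m (by omega)
    (fun t _ _ => hC.adj t)
    (fun i j h1 h2 h3 => ⟨hC.inj i j (by omega) (by omega), hC.nonadj i j h2 (by omega)⟩)
    Y hY (fun t _ _ => hd t) h0 hm' hno
  have harc : ∀ i j, 0 ≤ i → j ≤ m → arc fb i j = arc f i j := by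
    intro i j hi hj
    ext x; constructor
    · rintro ⟨t, a, b, rfl⟩; exact ⟨t, a, b, (hfb t (by omega) (by omega)).symm⟩
    · rintro ⟨t, a, b, rfl⟩; exact ⟨t, a, b, hfb t (by omega) (by omega)⟩
  have hkCb : ¬ Small G k (Set.range fb) := fun hh => hns (by
    rw [← harc 0 m le_rfl le_rfl]
    exact (dichotomy h hCb hh).mono le_rfl (Cyc.arc_sub _ _))
  have hZd : ∀ z ∈ arc f (m + 1) (n - 1), z ∉ Set.range fb := by
    rintro _ ⟨t, a, b, rfl⟩ ⟨t', ht'⟩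
    obtain ⟨t'', c1, c2, c3⟩ := hCb.rep 0 t'
    rw [← c3] at ht'
    by_cases hh : t'' ≤ m
    · rw [hfb t'' c1 hh] at ht'
      exact hC.inj t'' t (by omega) (by omega) ht'
    · have := hfbY t'' (by omega) (by omega)
      rw [ht'] at this
      exact hd t this
  obtain ⟨Ya, hZY, hYa, hYaS, hYac⟩ := exists_comp G (Set.range fb) (arc f (m + 1) (n - 1))
    (hC.arc_conn _ _ (by omega)) hZd
  have hda : ∀ t, fb t ∉ Ya := fun t ht => hYaS _ ht ⟨t, rfl⟩
  have ha0 : Att G Ya (f 0) := by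
    refine ⟨f (n - 1), hZY ⟨n - 1, by omega, le_rfl, rfl⟩, ?_⟩
    have e1 := hC.adj (n - 1)
    have e2 := hC.per 0
    rw [sub_add_cancel] at e1
    rw [zero_add] at e2
    rw [← e2]; exact e1
  have ham : Att G Ya (f m) :=
    ⟨f (m + 1), hZY ⟨m + 1, le_rfl, by omega, rfl⟩, (hC.adj m).symm⟩
  have hfb0 := hfb 0 le_rfl (by omega)
  have hfbm := hfb m (by omega) le_rfl
  by_cases hA : ∃ t, 0 < t ∧ t < m ∧ Att G Ya (f t)
  · obtain ⟨t0, ht0, ht0m, hat0⟩ := hA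
    obtain ⟨i, j, hi, hij, hj, hai, haj, hbet, hnsb⟩ := gap h hCb hkCb hYa hda 0
      (by rw [hfb0]; exact ha0)
    have hcase : j ≤ m ∨ m ≤ i := by
      by_contra hcc
      push Not at hcc
      exact hbet m hcc.2 hcc.1 (by rw [hfbm]; exact ham)
    rcases hcase with hjm | hmi
    · have hlt : j - i < m := by
        by_contra hcc
        have e1 : i = 0 := by omega
        have e2 : j = m := by omega
        exact hbet t0 (by omega) (by omega) (by rw [hfb t0 ht0.le ht0m.le]; exact hat0)
      obtain ⟨i1, j1, hi1, hj1, hTC1⟩ := IH (j - i).toNat (by omega) (fun t => fb (t + i)) nb (j - i)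
        Ya rfl (hCb.shift i) (by omega) (by omega) hYa (fun t => hda _)
        (by rw [range_shift]; exact hYac) (by simpa using hai) (by simpa using haj)
        (fun t a b => hbet _ (by omega) (by omega))
        (by rw [arc_shift]; simpa using hnsb)
      have hTC := hTC1.shift
      generalize hi' : i1 + i = i' at hTC
      generalize hj' : j1 + i = j' at hTC
      obtain ⟨c1, c2, c3, W, hW⟩ := hTC
      rw [harc i' j' (by omega) (by omega)] at c3
      have hcl' : ∀ x ∈ W, ∀ y, G.Adj x y → y ∈ W ∨ y = f i' ∨ y = f j' := by
        have := hW.cl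
        rwa [hfb i' (by omega) (by omega), hfb j' (by omega) (by omega)] at this
      have hstep : ∀ t u, j' < t → t < i' + n → f u ∈ W → G.Adj (f u) (f t) → f t ∈ W := by
        intro t u a b hu hadj
        rcases hcl' _ hu _ hadj with e | e | e
        · exact e
        · exact absurd e.symm (hC.inj i' t (by omega) (by omega))
        · exact absurd e.symm (hC.inj j' t (by omega) (by omega))
      refine ⟨i', j', by omega, by omega, c1, by omega, c3, W, ?_, ?_, hcl'⟩
      · by_cases hjm' : j' < m
        · have hbase : f (j' + 1) ∈ W := by
            rw [← hfb (j' + 1) (by omega) (by omega)]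
            exact hW.out _ (by omega) (by omega)
          intro t a b
          have hup : ∀ d : ℕ, j' + 1 + d < i' + n → f (j' + 1 + d) ∈ W := by
            intro d
            induction d with
            | zero => intro _; simpa using hbase
            | succ d ih =>
              intro hd'
              push_cast at hd' ⊢
              have e : j' + 1 + ((d : ℤ) + 1) = j' + 1 + d + 1 := by ring
              rw [e]
              exact hstep _ _ (by omega) (by omega) (ih (by omega)) (hC.adj _)
          have := hup (t - j' - 1).toNat (by omega)
          have e : j' + 1 + ((t - j' - 1).toNat : ℤ) = t := by omega
          rwa [e] at this
        · have hbase : f (i' + n - 1) ∈ W := by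
            have e1 : f (i' + n - 1) = fb (i' + nb - 1) := by
              have e2 : i' + n - 1 = i' - 1 + n := by ring
              have e3 : i' + nb - 1 = i' - 1 + nb := by ring
              rw [e2, e3, hC.per, hCb.per, hfb _ (by omega) (by omega)]
            rw [e1]
            exact hW.out _ (by omega) (by omega)
          intro t a b
          have hdn : ∀ d : ℕ, j' < i' + n - 1 - d → f (i' + n - 1 - d) ∈ W := by
            intro d
            induction d with
            | zero => intro _; simpa using hbase
            | succ d ih =>
              intro hd'
              push_cast at hd' ⊢
              refine hstep _ _ (by omega) (by omega) (ih (by omega)) ?_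
              have := hC.adj (i' + n - 1 - (d + 1))
              have e : i' + n - 1 - ((d : ℤ) + 1) + 1 = i' + n - 1 - d := by ring
              rw [e] at this
              exact this.symm
          have := hdn (i' + n - 1 - t).toNat (by omega)
          have e : i' + n - 1 - ((i' + n - 1 - t).toNat : ℤ) = t := by omega
          rwa [e] at this
      · intro t a b
        rw [← hfb t (by omega) (by omega)]
        exact hW.inn t a b
    · exfalso
      obtain ⟨B, hB, h1 | h1⟩ := lemmaA h hC hY hd hcl
      · exact hsC ⟨_, att_ncard h.wf hC hY hd, B, hB, h1.2⟩
      · refine hnsb ⟨_, att_ncard h.wf hC hY hd, B, hB, ?_⟩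
        rintro x hx _ ⟨t, a, b, rfl⟩
        apply h1 x hx
        by_cases e1 : t = m
        · subst e1; right; rw [hfbm]; exact ⟨⟨t, rfl⟩, hm'⟩
        by_cases e2 : t = nb
        · have : fb t = f 0 := by
            have := hCb.per 0
            rw [zero_add] at this
            rw [e2, this, hfb0]
          right; rw [this]; exact ⟨⟨0, rfl⟩, h0⟩
        · left; exact hfbY t (by omega) (by omega)
  · push Not at hA
    refine ⟨0, m, le_rfl, le_rfl, hm, by omega, hns, Y ∪ Ya, ?_, ?_, ?_⟩
    · intro t a b; exact Or.inr (hZY ⟨t, by omega, by omega, rfl⟩)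
    · rintro t a b (hh | hh)
      · exact hd t hh
      · rw [← hfb t a b] at hh; exact hda t hh
    · rintro x (hx | hx) y hxy
      · rcases hcl x hx y hxy with hy | ⟨t, rfl⟩
        · exact Or.inl (Or.inl hy)
        · obtain ⟨t', c1, c2, c3⟩ := hC.rep 0 t
          rw [← c3] at hxy ⊢
          by_cases e1 : t' = 0
          · subst e1; exact Or.inr (Or.inl rfl)
          by_cases e2 : t' = m
          · subst e2; exact Or.inr (Or.inr rfl)
          by_cases e3 : t' < m
          · exact absurd ⟨x, hx, hxy⟩ (hno t' (by omega) e3)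
          · exact Or.inl (Or.inr (hZY ⟨t', by omega, by omega, rfl⟩))
      · rcases hYac x hx y hxy with hy | ⟨t, rfl⟩
        · exact Or.inl (Or.inr hy)
        · obtain ⟨t', c1, c2, c3⟩ := hCb.rep 0 t
          rw [← c3] at hxy ⊢
          by_cases e1 : t' = 0
          · subst e1; exact Or.inr (Or.inl hfb0)
          by_cases e2 : t' = m
          · subst e2; exact Or.inr (Or.inr hfbm)
          by_cases e3 : t' < m
          · rw [hfb t' c1 e3.le] at hxy
            exact absurd ⟨x, hx, hxy⟩ (hA t' (by omega) e3)
          · exact Or.inl (Or.inl (hfbY t' (by omega) (by omega)))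

lemma lemmaU (h : Ctx G s k) {f : ℤ → V} {n i j : ℤ} {Y : Set V}
    (hC : Cyc G f n) (hij : i < j) (hjn : j ≤ i + n - 2) (hY : ConnSet G Y) (hd : ∀ t, f t ∉ Y)
    (hcl : ∀ x ∈ Y, ∀ y, G.Adj x y → y ∈ Y ∨ y ∈ Set.range f)
    (hi : Att G Y (f i)) (hj : Att G Y (f j)) (hno : ∀ t, i < t → t < j → ¬ Att G Y (f t))
    (hns : ¬ Small G s (arc f i j)) : ∃ i' j', i ≤ i' ∧ j' ≤ j ∧ TC G s f n i' j' := by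
  obtain ⟨i1, j1, h1, h2, h3⟩ := lemmaU0 h (j - i).toNat (fun t => f (t + i)) n (j - i) Y rfl
    (hC.shift i) (by omega) (by omega) hY (fun t => hd _)
    (by rw [range_shift]; exact hcl) (by simpa using hi) (by simpa using hj)
    (fun t a b => hno _ (by omega) (by omega))
    (by rw [arc_shift]; simpa using hns)
  exact ⟨i1 + i, j1 + i, by omega, by omega, h3.shift⟩

end

section
variable [Finite V] {G : SimpleGraph V} {s k : ℕ}

/-- `Y` is a component of `G` minus the cycle `f`. -/
structure IsComp (G : SimpleGraph V) (f : ℤ → V) (Y : Set V) : Prop where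
  conn : ConnSet G Y
  dis : ∀ t, f t ∉ Y
  cl : ∀ x ∈ Y, ∀ y, G.Adj x y → y ∈ Y ∨ y ∈ Set.range f

lemma exists_isComp (G : SimpleGraph V) (f : ℤ → V) (x : V) (hx : x ∉ Set.range f) :
    ∃ Y, x ∈ Y ∧ IsComp G f Y := by
  obtain ⟨Y, h1, h2, h3, h4⟩ := exists_comp G (Set.range f) {x} (connSet_singleton G x)
    (by rintro z rfl; exact hx)
  exact ⟨Y, h1 rfl, h2, fun t ht => h3 _ ht ⟨t, rfl⟩, h4⟩

lemma cut_comp {f : ℤ → V} {n i j : ℤ} (hC : Cyc G f n) {W Y : Set V} (hW : IsCut G f n i j W)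
    (hY : IsComp G f Y) {q t : ℤ} (hq1 : j < q) (hq2 : q < i + n) (hq : Att G Y (f q))
    (ht1 : i < t) (ht2 : t < j) (ht : Att G Y (f t)) : False := by
  obtain ⟨y, hy, hyq⟩ := hq
  obtain ⟨z, hz, hzt⟩ := ht
  have hcl : ∀ x ∈ W, ∀ y ∈ Y, G.Adj x y → y ∈ W := by
    intro x hx y hy hxy
    rcases hW.cl x hx y hxy with h | h | h
    · exact h
    · exact absurd (h ▸ hy) (hY.dis i)
    · exact absurd (h ▸ hy) (hY.dis j)
  have hyW := hcl _ (hW.out q hq1 hq2) y hy hyq.symm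
  have hYW : Y ⊆ W := hY.conn.sub hy hyW (fun a _ haW b hb hab => hcl a haW b hb hab)
  rcases hW.cl z (hYW hz) _ hzt with h | h | h
  · exact hW.inn t ht1.le ht2.le h
  · exact hC.inj i t (by omega) (by omega) h.symm
  · exact hC.inj t j (by omega) (by omega) h

/-- The extremal configuration used in Case 1. -/
structure Conf (G : SimpleGraph V) (s : ℕ) (f : ℤ → V) (n m a b : ℤ) : Prop where
  tc : TC G s f n 0 m
  min : ∀ i j, TC G s f n i j → m ≤ j - i
  a0 : 0 ≤ a
  ab : a < b
  bm : b ≤ m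
  tc' : TC G s f n b (a + n)
  max : ∀ a' b', 0 ≤ a' → a' < b' → b' ≤ m → TC G s f n b' (a' + n) → b' - a' ≤ b - a

lemma claim (h : Ctx G s k) {f : ℤ → V} {n m a b : ℤ} (hC : Cyc G f n)
    (hk : ¬ Small G k (Set.range f)) (hc : Conf G s f n m a b) {Y : Set V} (hY : IsComp G f Y)
    {t q : ℤ} (ht0 : 0 < t) (hta : t < a) (ht : Att G Y (f t)) (hqa : a < q) (hqn : q < n)
    (hq : Att G Y (f q)) : False := by
  obtain ⟨W0, hW0⟩ := hc.tc.cut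
  obtain ⟨W1, hW1⟩ := hc.tc'.cut
  have hmn := hc.tc.lt'
  have hab := hc.ab
  have hbm := hc.bm
  have n1 : ∀ r, a < r → r < b → ¬ Att G Y (f r) := by
    intro r h1 h2 hr
    refine cut_comp hC hW1 hY (q := r + n) (t := t + n) (by omega) (by omega) ?_ (by omega)
      (by omega) ?_
    · rw [hC.per]; exact hr
    · rw [hC.per]; exact ht
  have n2 : ∀ r, m < r → r < n → ¬ Att G Y (f r) := by
    intro r h1 h2 hr
    exact cut_comp hC hW0 hY (q := r) (t := t) (by omega) (by omega) hr (by omega) (by omega) ht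
  have hqb : b ≤ q := by by_contra hh; exact n1 q hqa (by omega) hq
  have hqm : q ≤ m := by by_contra hh; exact n2 q (by omega) hqn hq
  obtain ⟨i, j, hi, hij, hj, hai, haj, hbet, hns⟩ := gap h hC hk hY.conn hY.dis t ht
  have hU : j ≤ i + n - 2 → ∃ i' j', i ≤ i' ∧ j' ≤ j ∧ TC G s f n i' j' := fun hh =>
    lemmaU h hC hij hh hY.conn hY.dis hY.cl hai haj hbet hns
  have hmin := hc.min
  have hshort : j - i < m → False := by
    intro hh
    obtain ⟨i', j', h1, h2, h3⟩ := hU (by omega)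
    have := hmin _ _ h3
    omega
  by_cases hjm : j ≤ m
  · exact hshort (by omega)
  by_cases hin : n ≤ i
  · exact hshort (by omega)
  have him : i ≤ m := by by_contra hh; exact n2 i (by omega) (by omega) hai
  have hjn : n ≤ j := by by_contra hh; exact n2 j (by omega) (by omega) haj
  have hiq : q ≤ i := by by_contra hh; exact hbet q (by omega) (by omega) hq
  obtain ⟨i1, j1, h1, h2, h3⟩ := hU (by omega)
  have hmin1 := hmin _ _ h3
  have hrest : m ≤ i1 → j1 ≤ n → False := by
    intro g1 g2
    have := hc.tc.rest h hC
    exact h3.ns (this.mono h.hs (arc_mono f g1 (by omega)))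
  have h3lt := h3.lt
  have h3lt' := h3.lt'
  by_cases hi1 : i1 ≤ m
  · by_cases hj1 : n ≤ j1
    · have := hc.max (j1 - n) i1 (by omega) (by omega) hi1 (by rw [sub_add_cancel]; exact h3)
      omega
    · by_cases hj1' : j1 ≤ m
      · omega
      · by_cases e : i1 = m
        · exact hrest (by omega) (by omega)
        · have := hmin _ _ (TC.corner h hC hk hc.tc h3 (by omega) (by omega) (by omega) (by omega))
          omega
  · by_cases hj1 : j1 ≤ n
    · exact hrest (by omega) hj1
    · by_cases hi1' : i1 < n
      · have hs := hc.tc.add_per hC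
        have := hmin _ _ (TC.corner h hC hk h3 hs (by omega) (by omega) (by omega) (by omega))
        omega
      · omega

lemma half (h : Ctx G s k) {f : ℤ → V} {n m a b : ℤ} (hC : Cyc G f n)
    (hk : ¬ Small G k (Set.range f)) (hc : Conf G s f n m a b) {D B : Set V} (hB : IsBig G D B)
    (hD0 : f 0 ∈ D) (hDa : f a ∈ D) {x : V} (hx : x ∈ B) {t : ℤ} (ht0 : 0 < t) (hta : t < a)
    (hxt : x = f t ∨ G.Adj (f t) x) : False := by
  have hmn := hc.tc.lt'
  have hab := hc.ab
  have hbm := hc.bm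
  let K : Set V := {z | (∃ t, 0 ≤ t ∧ t ≤ a ∧ z = f t) ∨
    ∃ Y, IsComp G f Y ∧ z ∈ Y ∧ ∃ t, 0 < t ∧ t < a ∧ Att G Y (f t)}
  have hadjK : ∀ z t', 0 < t' → t' < a → G.Adj (f t') z → z ∈ K := by
    intro z t' h1 h2 hadj
    by_cases hz : z ∈ Set.range f
    · obtain ⟨q0, rfl⟩ := hz
      obtain ⟨q, c1, c2, c3⟩ := hC.rep 0 q0
      rw [← c3] at hadj ⊢
      by_cases hqa : q ≤ a
      · exact Or.inl ⟨q, c1, hqa, rfl⟩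
      · exact absurd hadj (hC.nonadj t' q (by omega) (by omega))
    · obtain ⟨Y, hzY, hY⟩ := exists_isComp G f z hz
      exact Or.inr ⟨Y, hY, hzY, t', h1, h2, z, hzY, hadj.symm⟩
  have hcut : IsCut G f n 0 a Kᶜ := by
    refine ⟨?_, ?_, ?_⟩
    · rintro r h1 h2 (⟨r', g1, g2, g3⟩ | ⟨Y, hY, hr, _⟩)
      · exact hC.inj r' r (by omega) (by omega) g3.symm
      · exact hY.dis r hr
    · intro r h1 h2 hr
      exact hr (Or.inl ⟨r, h1, h2, rfl⟩)
    · intro z hz y hzy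
      by_cases hyK : y ∈ K
      · right
        rcases hyK with ⟨r, g1, g2, rfl⟩ | ⟨Y, hY, hyY, r, g1, g2, hr⟩
        · by_cases e1 : r = 0
          · subst e1; exact Or.inl rfl
          by_cases e2 : r = a
          · subst e2; exact Or.inr rfl
          exact absurd (hadjK z r (by omega) (by omega) hzy.symm) hz
        · exfalso
          rcases hY.cl y hyY z hzy.symm with hzY | ⟨q0, rfl⟩
          · exact hz (Or.inr ⟨Y, hY, hzY, r, g1, g2, hr⟩)
          · obtain ⟨q, c1, c2, c3⟩ := hC.rep 0 q0
            rw [← c3] at hzy hz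
            by_cases hqa : q ≤ a
            · exact hz (Or.inl ⟨q, c1, hqa, rfl⟩)
            · exact claim h hC hk hc hY g1 g2 hr (by omega) (by omega) ⟨y, hyY, hzy.symm⟩
      · exact Or.inl hyK
  have hxK : x ∈ K := by
    rcases hxt with rfl | hadj
    · exact Or.inl ⟨t, ht0.le, hta.le, rfl⟩
    · exact hadjK x t ht0 hta hadj
  have := hc.min _ _ (hcut.create h hC hk (by omega) (by omega) hB hD0 hDa hx (fun hh => hh hxK))
  omega

lemma Cyc.reflect {f : ℤ → V} {n : ℤ} (hC : Cyc G f n) (c : ℤ) :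
    Cyc G (fun t => f (c - t)) n := by
  refine ⟨hC.three, ?_, ?_, ?_, ?_⟩
  · intro i
    have := hC.per (c - (i + n))
    show f (c - (i + n)) = f (c - i)
    rw [← this]; congr 1; ring
  · intro i j h1 h2; exact (hC.inj (c - j) (c - i) (by omega) (by omega)).symm
  · intro i
    have := hC.adj (c - (i + 1))
    have e : c - (i + 1) + 1 = c - i := by ring
    rw [e] at this
    exact this.symm
  · intro i j h1 h2 hh; exact hC.nonadj (c - j) (c - i) (by omega) (by omega) hh.symm

lemma TC.reflect {f : ℤ → V} {n i j : ℤ} (hC : Cyc G f n) (c : ℤ) (hT : TC G s f n i j) :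
    TC G s (fun t => f (c - t)) n (c - j) (c - i) := by
  obtain ⟨h1, h2, h3, W, hW⟩ := hT
  have harc : arc (fun t => f (c - t)) (c - j) (c - i) = arc f i j := by
    ext x; constructor
    · rintro ⟨t, a, b, rfl⟩; exact ⟨c - t, by omega, by omega, rfl⟩
    · rintro ⟨t, a, b, rfl⟩; exact ⟨c - t, by omega, by omega, by simp⟩
  refine ⟨by omega, by omega, by rwa [harc], W, ?_, ?_, ?_⟩
  · intro t a b
    show f (c - t) ∈ W
    rw [← hC.per]
    exact hW.out _ (by omega) (by omega)
  · intro t a b; exact hW.inn _ (by omega) (by omega)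
  · intro x hx y hxy
    simp only [sub_sub_cancel]
    rcases hW.cl x hx y hxy with e | e | e
    · exact Or.inl e
    · exact Or.inr (Or.inr e)
    · exact Or.inr (Or.inl e)

lemma TC.unreflect {f : ℤ → V} {n i j : ℤ} (hC : Cyc G f n) (c : ℤ)
    (hT : TC G s (fun t => f (c - t)) n i j) : TC G s f n (c - j) (c - i) := by
  have := hT.reflect (hC.reflect c) c
  simpa only [sub_sub_cancel] using this

lemma Conf.reflect {f : ℤ → V} {n m a b : ℤ} (hC : Cyc G f n) (hc : Conf G s f n m a b) :
    Conf G s (fun t => f (m - t)) n m (m - b) (m - a) := by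
  have hab := hc.ab
  have hbm := hc.bm
  have ha0 := hc.a0
  refine ⟨?_, ?_, by omega, by omega, by omega, ?_, ?_⟩
  · have := hc.tc.reflect hC m
    simpa using this
  · intro i j hT
    have := hc.min _ _ (hT.unreflect hC m)
    omega
  · have := (hc.tc'.reflect hC m).add_per (hC.reflect m)
    have e1 : m - (a + n) + n = m - a := by ring
    rwa [e1] at this
  · intro a' b' h1 h2 h3 hT
    have h4 := (hT.unreflect hC m).add_per hC
    have e1 : m - (a' + n) + n = m - a' := by ring
    rw [e1] at h4
    have := hc.max (m - b') (m - a') (by omega) (by omega) (by omega) h4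
    omega

lemma exists_conf (h : Ctx G s k) {f0 : ℤ → V} {n : ℤ} (hC0 : Cyc G f0 n)
    (hk0 : ¬ Small G k (Set.range f0)) :
    ∃ f m a b, Cyc G f n ∧ ¬ Small G k (Set.range f) ∧ Conf G s f n m a b := by
  classical
  have h3 := hC0.three
  have hex : ∃ d : ℕ, ∃ i, TC G s f0 n i (i + d) := by
    refine ⟨(n - 1).toNat, 0, ?_⟩
    have e : (0 : ℤ) + ((n - 1).toNat : ℤ) = 0 + n - 1 := by omega
    rw [e]
    exact tc_trivial h hC0 hk0 0
  obtain ⟨i0, hi0⟩ := Nat.find_spec hex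
  have hmin0 : ∀ d' < Nat.find hex, ¬ _ := fun d' hd' => Nat.find_min hex hd'
  generalize Nat.find hex = d at *
  let f : ℤ → V := fun t => f0 (t + i0)
  have hC : Cyc G f n := hC0.shift i0
  have hk : ¬ Small G k (Set.range f) := by rw [range_shift]; exact hk0
  have hf0 : f0 = fun t => f (t + (-i0)) := by funext t; simp [f]
  have htc : TC G s f n 0 d := by
    rw [hf0] at hi0
    have := hi0.shift
    have e1 : i0 + -i0 = 0 := by ring
    have e2 : i0 + (d : ℤ) + -i0 = d := by ring
    rwa [e1, e2] at this
  have hmin : ∀ i j, TC G s f n i j → (d : ℤ) ≤ j - i := by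
    intro i j hT
    by_contra hh
    have hlt := hT.lt
    refine hmin0 (j - i).toNat (by omega) ⟨i + i0, ?_⟩
    have e : i + i0 + ((j - i).toNat : ℤ) = j + i0 := by omega
    rw [e]
    exact hT.shift
  have hd := htc.lt
  let P : ℕ → Prop := fun e => ∃ a : ℤ, 0 ≤ a ∧ a + e ≤ d ∧ TC G s f n (a + e) (a + n)
  have hP1 : P 1 := by
    refine ⟨0, le_rfl, by push_cast; omega, ?_⟩
    have := tc_trivial h hC hk 1
    have e : (1 : ℤ) + n - 1 = 0 + n := by ring
    rw [e] at this
    simpa using this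
  have hsp : P (Nat.findGreatest P d) := Nat.findGreatest_spec (m := 1) (by omega) hP1
  have hgr : ∀ e, e ≤ d → P e → e ≤ Nat.findGreatest P d := fun e h1 h2 => Nat.le_findGreatest h1 h2
  have hg1 := hgr 1 (by omega) hP1
  generalize Nat.findGreatest P d = e at *
  obtain ⟨a, ha0, hae, hT⟩ := hsp
  refine ⟨f, d, a, a + e, hC, hk, htc, hmin, ha0, by omega, hae, hT, ?_⟩
  intro a' b' h1 h2 h4 hT'
  have := hgr (b' - a').toNat (by omega) ⟨a', h1, by omega, by
    have e : a' + ((b' - a').toNat : ℤ) = b' := by omega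
    rw [e]; exact hT'⟩
  omega

lemma case1 (h : Ctx G s k) {f0 : ℤ → V} {n : ℤ} (hC0 : Cyc G f0 n) :
    Small G k (Set.range f0) := by
  by_contra hk0
  obtain ⟨f, m, a, b, hC, hk, hc⟩ := exists_conf h hC0 hk0
  have hks := h.k2s
  have hs := h.hs
  obtain ⟨B, hB⟩ := h.hH {f 0, f m, f a, f b} ((quad_ncard _ _ _ _).trans (by omega))
  have hne : ¬ Anti G B (Set.range f) := fun hh => hk ⟨_, (quad_ncard _ _ _ _).trans (by omega), B, hB, hh⟩
  have hmn := hc.tc.lt'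
  have hab := hc.ab
  have hbm := hc.bm
  have ha0 := hc.a0
  obtain ⟨x, hx, t, ht0, htn, hxt⟩ : ∃ x ∈ B, ∃ t, 0 ≤ t ∧ t < n ∧ (x = f t ∨ G.Adj (f t) x) := by
    by_contra hcon
    push Not at hcon
    apply hne
    rintro x hx _ ⟨t, rfl⟩
    obtain ⟨t', c1, c2, c3⟩ := hC.rep 0 t
    rw [← c3]
    exact hcon x hx t' c1 (by omega)
  have hD : ∀ r, f r ∈ ({f 0, f m, f a, f b} : Set V) → t ≠ r := by
    rintro r hr rfl
    rcases hxt with e | e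
    · exact (hB.avoid x hx _ hr).1 e
    · exact (hB.avoid x hx _ hr).2 e
  have e1 := hD 0 (by simp)
  have e2 := hD m (by simp)
  have e3 := hD a (by simp)
  have e4 := hD b (by simp)
  have hcutx : ∀ i j, TC G s f n i j → f i ∈ ({f 0, f m, f a, f b} : Set V) →
      f j ∈ ({f 0, f m, f a, f b} : Set V) → ∀ r, f r = f t → j < r → r < i + n → False := by
    intro i j hT hi hj r hr h1 h2
    obtain ⟨W, hW⟩ := hT.cut
    have haw := hW.away h hT.ns hB hi hj x hx
    have hrW := hW.out r h1 h2
    rw [hr] at hrW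
    rcases hxt with e | e
    · exact haw (e ▸ hrW)
    · rcases hW.cl _ hrW x e with g | g | g
      · exact haw g
      · exact (hB.avoid x hx _ hi).1 g
      · exact (hB.avoid x hx _ hj).1 g
  by_cases h1 : m < t
  · exact hcutx 0 m hc.tc (by simp) (by simp) t rfl h1 (by omega)
  by_cases h2 : t < a
  · exact half h hC hk hc hB (by simp) (by simp) hx (by omega) h2 hxt
  by_cases h3 : t < b
  · exact hcutx b (a + n) hc.tc' (by simp) (by rw [hC.per]; simp) (t + n) (hC.per t) (by omega)
      (by omega)
  · have hk' : ¬ Small G k (Set.range (fun t => f (m - t))) := by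
      intro hh; apply hk; refine hh.mono le_rfl ?_
      rintro _ ⟨r, rfl⟩; exact ⟨m - r, by simp⟩
    refine half h (hC.reflect m) hk' (hc.reflect hC) hB (by simp) (by simp) hx (t := m - t)
      (by omega) (by omega) ?_
    simpa using hxt

end

section
variable [Finite V] {G : SimpleGraph V} {s k : ℕ}

lemma lemmaP (h : Ctx G s k) (p : ℤ → V) (r : ℤ) (_hr : 1 ≤ r)
    (hadj : ∀ t, 0 ≤ t → t + 1 < r → G.Adj (p t) (p (t + 1)))
    (hnon : ∀ i j, 0 ≤ i → i + 1 < j → j < r → p i ≠ p j ∧ ¬ G.Adj (p i) (p j))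
    (B : Set V) (hB : IsBig G {x | ∃ t, 0 ≤ t ∧ t < r ∧ p t = x} B) :
    ∃ D : Set V, D.ncard ≤ s ∧ ∀ B1, IsBig G D B1 → B1 ⊆ B := by
  classical
  let NB : Set V := {y | y ∉ B ∧ ∃ x ∈ B, G.Adj x y}
  have hpB : ∀ t, 0 ≤ t → t < r → p t ∉ B := fun t h1 h2 hh =>
    (hB.avoid _ hh (p t) ⟨t, h1, h2, rfl⟩).1 rfl
  have hpaB : ∀ t, 0 ≤ t → t < r → ∀ x ∈ B, ¬ G.Adj (p t) x := fun t h1 h2 x hx =>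
    (hB.avoid x hx (p t) ⟨t, h1, h2, rfl⟩).2
  have hNBp : ∀ y ∈ NB, ∀ t, 0 ≤ t → t < r → p t ≠ y := by
    rintro y ⟨_, x, hx, hxy⟩ t h1 h2 rfl
    exact hpaB t h1 h2 x hx hxy.symm
  have hNBa : ∀ y ∈ NB, ∃ t, 0 ≤ t ∧ t < r ∧ G.Adj (p t) y := by
    intro y hy
    obtain ⟨hyB, x, hx, hxy⟩ := hy
    rcases hB.closed x hx y hxy with g | ⟨_, ⟨t, h1, h2, rfl⟩, g | g⟩
    · exact absurd g hyB
    · exact absurd g.symm (hNBp y ⟨hyB, x, hx, hxy⟩ t h1 h2)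
    · exact ⟨t, h1, h2, g⟩
  -- it suffices to keep the big set away from `NB`
  have hsuff : ∀ B1 D, IsBig G D B1 → (∀ y ∈ NB, y ∉ B1) → B1 ⊆ B := by
    intro B1 D hB1 hav
    obtain ⟨x, hx, hx1⟩ := big_meet hB.big hB1.big
    refine hB1.conn.sub hx1 hx ?_
    intro u _ hu y hy huy
    by_contra hyB
    exact hav y ⟨hyB, u, hu, huy⟩ hy
  by_cases hemp : NB = ∅
  · refine ⟨∅, by simp, fun B1 hB1 => hsuff B1 _ hB1 ?_⟩
    intro y hy; rw [hemp] at hy; exact hy.elim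
  have hne : NB.Nonempty := Set.nonempty_iff_ne_empty.2 hemp
  have hlo : ∀ y, ∃ lo : ℤ, y ∈ NB → 0 ≤ lo ∧ lo < r ∧ G.Adj (p lo) y ∧
      ∀ t, 0 ≤ t → t < lo → ¬ G.Adj (p t) y := by
    intro y
    by_cases hy : y ∈ NB
    · obtain ⟨t, h1, h2, h3⟩ := hNBa y hy
      obtain ⟨j, g1, g2, g3, g4⟩ := exists_next (fun t => G.Adj (p t) y) (-1) t (by omega) h3
      exact ⟨j, fun _ => ⟨by omega, by omega, g3, fun t a b => g4 t (by omega) b⟩⟩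
    · exact ⟨0, fun hh => absurd hh hy⟩
  have hhi : ∀ y, ∃ hi : ℤ, y ∈ NB → 0 ≤ hi ∧ hi < r ∧ G.Adj (p hi) y ∧
      ∀ t, hi < t → t < r → ¬ G.Adj (p t) y := by
    intro y
    by_cases hy : y ∈ NB
    · obtain ⟨t, h1, h2, h3⟩ := hNBa y hy
      obtain ⟨j, g1, g2, g3, g4⟩ := exists_prev (fun t => G.Adj (p t) y) t r (by omega) h3
      exact ⟨j, fun _ => ⟨by omega, by omega, g3, g4⟩⟩
    · exact ⟨0, fun hh => absurd hh hy⟩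
  choose lo hlo using hlo
  choose hi hhi using hhi
  obtain ⟨a, ha, hamin⟩ := Set.exists_min_image NB hi (Set.toFinite _) hne
  obtain ⟨b, hb, hbmax⟩ := Set.exists_max_image NB lo (Set.toFinite _) hne
  obtain ⟨a1, a2, a3, a4⟩ := hhi a ha
  obtain ⟨b1, b2, b3, b4⟩ := hlo b hb
  obtain ⟨t0, ht0⟩ : ∃ t0, t0 = max (hi a) (lo b) := ⟨_, rfl⟩
  have ht1 : hi a ≤ t0 := by omega
  have ht2 : lo b ≤ t0 := by omega
  have ht3 : t0 < r := by omega
  let J : Set V := {y | y ∈ NB ∧ ∀ t, hi a ≤ t → t ≤ t0 → ¬ G.Adj (p t) y}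
  by_cases hJ : J = ∅
  · -- no jumpers
    have hcov : ∀ y ∈ NB, ∃ t, hi a ≤ t ∧ t ≤ t0 ∧ G.Adj (p t) y := by
      intro y hy
      by_contra hcon
      push Not at hcon
      have : y ∈ J := ⟨hy, hcon⟩
      rw [hJ] at this; exact this
    have hfin : ∀ D : Set V, D.ncard ≤ s → (∃ B', IsBig G D B' ∧
        ∀ t, hi a ≤ t → t ≤ t0 → ∀ x ∈ B', ¬ G.Adj (p t) x) →
        ∃ D : Set V, D.ncard ≤ s ∧ ∀ B1, IsBig G D B1 → B1 ⊆ B := by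
      rintro D hD ⟨B', hB', hav⟩
      refine ⟨D, hD, fun B1 hB1 => hsuff B1 D hB1 ?_⟩
      intro y hy hyB1
      obtain ⟨t, g1, g2, g3⟩ := hcov y hy
      exact hav t g1 g2 y (hB'.mono hB1 subset_rfl hyB1) g3
    by_cases heq : t0 = hi a
    · have hks := h.k2s
      have hs := h.hs
      obtain ⟨B', hB'⟩ := h.hH {p t0} (by simp; omega)
      refine hfin {p t0} (by simp; omega) ⟨B', hB', ?_⟩
      intro t g1 g2 x hx
      have : t = t0 := by omega
      subst this
      exact (hB'.avoid x hx _ rfl).2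
    · have hlb : lo b = t0 := by omega
      have hZ : ConnSet G (insert a (insert b B)) := by
        obtain ⟨_, xb, hxb, hxb'⟩ := hb
        obtain ⟨_, xa, hxa, hxa'⟩ := ha
        exact (hB.conn.insert ⟨xb, hxb, hxb'.symm⟩).insert ⟨xa, Or.inr hxa, hxa'.symm⟩
      obtain ⟨f, n, hC, hn, hf1, hf2⟩ := exists_cycle (G := G) (fun t => p (t + hi a)) (t0 - hi a)
        (by omega)
        (fun t g1 g2 => by
          have := hadj (t + hi a) (by omega) (by omega)
          have e : t + 1 + hi a = t + hi a + 1 := by ring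
          show G.Adj (p (t + hi a)) (p (t + 1 + hi a))
          rw [e]; exact this)
        (fun i j g1 g2 g3 => hnon _ _ (by omega) (by omega) (by omega))
        (insert a (insert b B)) hZ
        (by
          rintro t g1 g2 (g | g | g)
          · exact hNBp a ha _ (by omega) (by omega) g
          · exact hNBp b hb _ (by omega) (by omega) g
          · exact hpB _ (by omega) (by omega) g)
        ⟨a, Or.inl rfl, by simpa using a3.symm⟩
        ⟨b, Or.inr (Or.inl rfl), by rw [hlb] at b3; simpa using b3.symm⟩
        (by
          rintro t g1 g2 ⟨y, (rfl | rfl | hy), hyt⟩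
          · exact a4 _ (by omega) (by omega) hyt.symm
          · exact b4 _ (by omega) (by omega) hyt.symm
          · exact hpaB _ (by omega) (by omega) y hy hyt.symm)
      obtain ⟨D, hD, B', hB', hav⟩ := dichotomy h hC (case1 h hC)
      refine hfin D hD ⟨B', hB', ?_⟩
      intro t g1 g2 x hx
      have e := hf1 (t - hi a) (by omega) (by omega)
      simp only [sub_add_cancel] at e
      exact (hav x hx (p t) ⟨t - hi a, e⟩).2
  · -- jumpers
    have hJne : J.Nonempty := Set.nonempty_iff_ne_empty.2 hJ
    have hu : ∀ y, ∃ u : ℤ, y ∈ J → 0 ≤ u ∧ u < hi a ∧ G.Adj (p u) y ∧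
        ∀ t, u < t → t < hi a → ¬ G.Adj (p t) y := by
      intro y
      by_cases hy : y ∈ J
      · obtain ⟨c1, c2, c3, c4⟩ := hlo y hy.1
        have c5 := hbmax y hy.1
        have c6 : lo y < hi a := by
          by_contra hcc
          exact hy.2 (lo y) (by omega) (by omega) c3
        obtain ⟨i, g1, g2, g3, g4⟩ := exists_prev (fun t => G.Adj (p t) y) (lo y) (hi a) c6 c3
        exact ⟨i, fun _ => ⟨by omega, by omega, g3, g4⟩⟩
      · exact ⟨0, fun hh => absurd hh hy⟩
    choose u hu using hu
    obtain ⟨c, hc, hcmin⟩ := Set.exists_min_image J u (Set.toFinite _) hJne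
    obtain ⟨u1, u2, u3, u4⟩ := hu c hc
    obtain ⟨v, v1, v2, v3, v4⟩ : ∃ v, t0 < v ∧ v < r ∧ G.Adj (p v) c ∧
        ∀ t, t0 < t → t < v → ¬ G.Adj (p t) c := by
      obtain ⟨c1, c2, c3, c4⟩ := hhi c hc.1
      have c5 := hamin c hc.1
      have c6 : t0 < hi c := by
        by_contra hcc
        exact hc.2 (hi c) (by omega) (by omega) c3
      obtain ⟨i, g1, g2, g3, g4⟩ := exists_next (fun t => G.Adj (p t) c) t0 (hi c) c6 c3
      exact ⟨i, g1, by omega, g3, g4⟩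
    obtain ⟨f, n, hC, hn, hf1, hf2⟩ := exists_cycle (G := G) (fun t => p (t + u c)) (v - u c)
        (by omega)
        (fun t g1 g2 => by
          have := hadj (t + u c) (by omega) (by omega)
          have e : t + 1 + u c = t + u c + 1 := by ring
          show G.Adj (p (t + u c)) (p (t + 1 + u c))
          rw [e]; exact this)
        (fun i j g1 g2 g3 => hnon _ _ (by omega) (by omega) (by omega))
        {c} (connSet_singleton G c)
        (fun t g1 g2 g => hNBp c hc.1 _ (by omega) (by omega) g)
        ⟨c, rfl, by simpa using u3.symm⟩
        ⟨c, rfl, by simpa using v3.symm⟩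
        (by
          rintro t g1 g2 ⟨y, rfl, hyt⟩
          have hyt' := hyt.symm
          by_cases e1 : t + u y < hi a
          · exact u4 _ (by omega) e1 hyt'
          by_cases e2 : t + u y ≤ t0
          · exact hc.2 _ (by omega) e2 hyt'
          · exact v4 _ (by omega) (by omega) hyt')
    have hBd : ∀ z ∈ B, z ∉ Set.range f := by
      rintro _ hz ⟨t, rfl⟩
      obtain ⟨t', c1, c2, c3⟩ := hC.rep 0 t
      rw [← c3] at hz
      by_cases e : t' ≤ v - u c
      · rw [hf1 t' c1 e] at hz
        exact hpB _ (by omega) (by omega) hz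
      · have : f t' = c := hf2 t' (by omega) (by omega)
        rw [this] at hz
        exact hc.1.1 hz
    obtain ⟨Y, hBY, hY, hYS, hYc⟩ := exists_comp G (Set.range f) B hB.conn hBd
    have hd : ∀ t, f t ∉ Y := fun t ht => hYS _ ht ⟨t, rfl⟩
    obtain ⟨B', hB', hor⟩ := lemmaA h hC hY hd hYc
    have hanti : Anti G B' (Set.range f) := by
      rcases hor with g | g
      · exact g.2
      · obtain ⟨x, hx, hx'⟩ := big_meet hB.big hB'.big
        exact absurd rfl (g x hx' x (Or.inl (hBY hx))).1
    refine ⟨_, att_ncard h.wf hC hY hd, fun B1 hB1 => hsuff B1 _ hB1 ?_⟩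
    intro y hy hyB1
    have hyB' := hB'.mono hB1 subset_rfl hyB1
    obtain ⟨t, g1, g2, g3⟩ : ∃ t, u c ≤ t ∧ t ≤ v ∧ G.Adj (p t) y := by
      by_cases hyJ : y ∈ J
      · have := hcmin y hyJ
        obtain ⟨c1, c2, c3, c4⟩ := hu y hyJ
        exact ⟨u y, by omega, by omega, c3⟩
      · by_contra hcon
        push Not at hcon
        exact hyJ ⟨hy, fun t e1 e2 => hcon t (by omega) (by omega)⟩
    have e := hf1 (t - u c) (by omega) (by omega)
    simp only [sub_add_cancel] at e
    exact (hanti y hyB' (p t) ⟨t - u c, e⟩).2 g3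

lemma gyarfas (h : Ctx G s k) (N : ℕ) : ∀ (p : ℤ → V) (r : ℤ) (B : Set V), B.ncard = N → 0 ≤ r →
    (∀ t, 0 ≤ t → t < r → G.Adj (p t) (p (t + 1))) →
    (∀ i j, 0 ≤ i → i + 1 < j → j ≤ r → p i ≠ p j ∧ ¬ G.Adj (p i) (p j)) →
    IsBig G {x | ∃ t, 0 ≤ t ∧ t < r ∧ p t = x} B →
    (p r ∈ B ∨ ∃ x ∈ B, G.Adj x (p r)) → False := by
  classical
  induction N using Nat.strong_induction_on with
  | _ N IH =>
  intro p r B hN hr hadj hnon hB hpr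
  have hks := h.k2s
  have hs := h.hs
  obtain ⟨D, hD, hDB⟩ : ∃ D : Set V, D.ncard ≤ s ∧ ∀ B1, IsBig G D B1 → B1 ⊆ B := by
    by_cases hr0 : r = 0
    · refine ⟨∅, by simp, fun B1 hB1 => hB.mono hB1 ?_⟩
      rintro x ⟨t, g1, g2, _⟩
      omega
    · exact lemmaP h p r (by omega) (fun t g1 g2 => hadj t g1 (by omega))
        (fun i j g1 g2 g3 => hnon i j g1 g2 (by omega)) B hB
  obtain ⟨B1, hB1⟩ := h.hH D (by omega)
  obtain ⟨B2, hB2⟩ := h.hH (insert (p r) D) ((Set.ncard_insert_le _ _).trans (by omega))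
  have hB2B : B2 ⊆ B := (hB1.mono hB2 (Set.subset_insert _ _)).trans (hDB B1 hB1)
  let S : Set V := {y | ∃ t, 0 ≤ t ∧ t ≤ r ∧ (y = p t ∨ G.Adj (p t) y)}
  obtain ⟨B', hBB', hconn, hav, hcl⟩ := exists_comp G S B2 hB2.conn (by
    rintro z hz ⟨t, g1, g2, g3⟩
    have hanti : z ≠ p t ∧ ¬ G.Adj (p t) z := by
      by_cases e : t = r
      · subst e; exact hB2.avoid z hz _ (Or.inl rfl)
      · exact hB.avoid z (hB2B hz) _ ⟨t, g1, by omega, rfl⟩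
    rcases g3 with g | g
    · exact hanti.1 g
    · exact hanti.2 g)
  have hbig : Nat.card V < 2 * B'.ncard := by
    have := Set.ncard_le_ncard hBB' (Set.toFinite _)
    have := hB2.big
    omega
  have hB'av : ∀ t, 0 ≤ t → t ≤ r → ∀ x ∈ B', x ≠ p t ∧ ¬ G.Adj (p t) x := fun t g1 g2 x hx =>
    ⟨fun e => hav x hx ⟨t, g1, g2, Or.inl e⟩, fun e => hav x hx ⟨t, g1, g2, Or.inr e⟩⟩
  have hB'B : B' ⊆ B := by
    obtain ⟨x, hx⟩ := hB2.conn.1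
    refine hB.sub_of_meet hconn ?_ (hBB' hx) (hB2B hx)
    rintro y hy _ ⟨t, g1, g2, rfl⟩
    exact hB'av t g1 g2.le y hy
  obtain ⟨z, hzB, hzB'⟩ : ∃ z ∈ B, z ∉ B' := by
    rcases hpr with g | ⟨x, hx, hxp⟩
    · exact ⟨p r, g, fun hh => (hB'av r hr le_rfl _ hh).1 rfl⟩
    · exact ⟨x, hx, fun hh => (hB'av r hr le_rfl _ hh).2 hxp.symm⟩
  obtain ⟨w, hwB, hwB', b', hb', hbw⟩ : ∃ w ∈ B, w ∉ B' ∧ ∃ b' ∈ B', G.Adj b' w := by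
    by_contra hcon
    push Not at hcon
    obtain ⟨x, hx⟩ := hconn.1
    apply hzB'
    refine hB.conn.sub (hB'B hx) hx ?_ hzB
    intro u _ hu y hy huy
    by_contra hyB'
    exact hcon y hy hyB' u hu huy
  have hwp : G.Adj (p r) w := by
    rcases hcl b' hb' w hbw with g | ⟨t, g1, g2, g3⟩
    · exact absurd g hwB'
    · by_cases e : t = r
      · subst e
        rcases g3 with g | g
        · subst g; exact absurd hbw.symm (hB'av t g1 le_rfl b' hb').2
        · exact g
      · have := hB.avoid w hwB _ ⟨t, g1, by omega, rfl⟩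
        rcases g3 with g | g
        · exact absurd g this.1
        · exact absurd g this.2
  have hlt : B'.ncard < N := by
    rw [← hN]
    exact Set.ncard_lt_ncard ⟨hB'B, fun hh => hzB' (hh hzB)⟩ (Set.toFinite _)
  let p' : ℤ → V := fun t => if t ≤ r then p t else w
  have hp1 : ∀ t, t ≤ r → p' t = p t := fun t ht => if_pos ht
  have hp2 : p' (r + 1) = w := if_neg (by omega)
  refine IH _ hlt p' (r + 1) B' rfl (by omega) ?_ ?_ ⟨hconn, hbig, ?_, ?_⟩ ?_
  · intro t g1 g2
    by_cases e : t = r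
    · subst e; rw [hp1 t le_rfl, hp2]; exact hwp
    · rw [hp1 t (by omega), hp1 (t + 1) (by omega)]; exact hadj t g1 (by omega)
  · intro i j g1 g2 g3
    rw [hp1 i (by omega)]
    by_cases e : j = r + 1
    · subst e; rw [hp2]
      have := hB.avoid w hwB _ ⟨i, g1, by omega, rfl⟩
      exact ⟨this.1.symm, this.2⟩
    · rw [hp1 j (by omega)]; exact hnon i j g1 g2 (by omega)
  · rintro x hx _ ⟨t, g1, g2, rfl⟩
    rw [hp1 t (by omega)]
    exact hB'av t g1 (by omega) x hx
  · intro x hx y hxy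
    rcases hcl x hx y hxy with g | ⟨t, g1, g2, g3⟩
    · exact Or.inl g
    · exact Or.inr ⟨p t, ⟨t, g1, by omega, hp1 t g2⟩, g3⟩
  · right; rw [hp2]; exact ⟨b', hb', hbw⟩

lemma Ctx.false (h : Ctx G s k) : False := by
  obtain ⟨B, hB⟩ := h.hH ∅ (by simp)
  obtain ⟨x, hx⟩ := hB.conn.1
  refine gyarfas h _ (fun _ => x) 0 B rfl le_rfl (by intro t a b; omega)
    (by intro i j a b c; omega) ?_ (Or.inl hx)
  have : {y : V | ∃ t : ℤ, 0 ≤ t ∧ t < 0 ∧ x = y} = ∅ := by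
    ext y; constructor
    · rintro ⟨t, a, b, _⟩; omega
    · intro hh; exact hh.elim
  rw [this]; exact hB

end

end WheelSep

/-- unweighted main theorem, with `k = (ℓ-1)²`. -/
theorem main_unweighted :
    ∀ ℓ : ℕ, 3 ≤ ℓ → ∃ k : ℕ, k = (ℓ - 1) ^ 2 ∧
      ∀ (V : Type) [Finite V] (G : SimpleGraph V),
        ¬ IsInducedMinor (wheel ℓ) G →
        ∃ S D : Set V, D.ncard ≤ k ∧ S ⊆ closedNbhd G D ∧
          ∀ v, v ∉ S →
            (({u | ReachOutside G S u v}).ncard : ℝ) ≤ (Nat.card V : ℝ) / 2 := by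
  intro ℓ hℓ
  refine ⟨(ℓ - 1) ^ 2, rfl, ?_⟩
  intro V _ G hno
  by_contra hcon
  push Not at hcon
  refine WheelSep.Ctx.false (G := G) (s := ℓ - 1) (k := (ℓ - 1) ^ 2)
    ⟨?_, WheelSep.wf_of_no_wheel ℓ hℓ hno, by omega, by rw [pow_two]⟩
  intro D hD
  obtain ⟨v, hv, hlt⟩ := hcon (closedNbhd G D) D hD subset_rfl
  refine ⟨_, WheelSep.reach_conn G (closedNbhd G D) hv, ?_, ?_, ?_⟩
  · have h2 : (Nat.card V : ℝ) < 2 * (({u | ReachOutside G (closedNbhd G D) u v}).ncard : ℝ) := by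
      linarith
    exact_mod_cast h2
  · intro x hx d hd
    have := WheelSep.reach_avoid G _ hx
    exact ⟨fun e => this (Or.inl (e ▸ hd)), fun e => this (Or.inr ⟨d, hd, e⟩)⟩
  · intro x hx y hxy
    rcases WheelSep.reach_closed G _ hx hxy with g | g | ⟨d, hd, g⟩
    · exact Or.inl g
    · exact Or.inr ⟨y, g, Or.inl rfl⟩
    · exact Or.inr ⟨d, hd, Or.inr g⟩
end
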